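/- arXiv:1804.06009 — 4 statements merged into one kernel-verified Lean document; each statement's English description precedes it below -/
import Mathlib

section
/- Let G be a connected graph with m edges containing an odd cycle C_{2k+1} = v_1v_2⋯v_{2k+1}v_1 such that G − E(C_{2k+1}) has exactly 2k+1 connected components, with G_i the component containing v_i and m_i = |E(G_i)|. Then for each cycle edge v_iv_{i+1} (indices mod 2k+1), (m_{v_i}(v_iv_{i+1}|G) − m_{v_{i+1}}(v_iv_{i+1}|G))² ≤ (m − 2k − 1 − m_{i+k+1})². -/
open scoped Classical
open Finset

noncomputable def eDist {V : Type*} (G : SimpleGraph V) (f : Sym2 V) (w : V) : ℕ :=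
  Sym2.lift ⟨fun a b => min (G.dist a w) (G.dist b w), fun _ _ => min_comm _ _⟩ f

noncomputable def mCloser {V : Type*} (G : SimpleGraph V) [Fintype V] (u v : V) : ℕ :=
  (G.edgeFinset.filter fun f => eDist G f u < eDist G f v).card

noncomputable def mEqui {V : Type*} (G : SimpleGraph V) [Fintype V] (u v : V) : ℕ :=
  (G.edgeFinset.filter fun f => eDist G f u = eDist G f v).card

/-- The edge revised Szeged index (each edge `uv` is counted once; the double sum over
ordered adjacent pairs counts it twice, whence the division by 2). -/
noncomputable def szRevE {V : Type*} (G : SimpleGraph V) [Fintype V] : ℚ :=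
  (∑ u : V, ∑ v : V, if G.Adj u v then
      ((mCloser G u v : ℚ) + (mEqui G u v : ℚ) / 2) *
        ((mCloser G v u : ℚ) + (mEqui G u v : ℚ) / 2)
    else 0) / 2

/-- The edges of `G` lying in the connected component `c`. -/
noncomputable def compEdges {V : Type*} (G : SimpleGraph V) [Fintype V]
    (c : G.ConnectedComponent) : Finset (Sym2 V) :=
  G.edgeFinset.filter fun f => ∀ x ∈ f, G.connectedComponentMk x = c



/-- cyclic distance -/
noncomputable def cD {n : ℕ} (a b : ZMod n) : ℕ := (a - b).valMinAbs.natAbs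

lemma cD_comm {n : ℕ} (a b : ZMod n) : cD a b = cD b a := by
  unfold cD
  rw [← neg_sub b a, ZMod.natAbs_valMinAbs_neg]

lemma cD_refl {n : ℕ} (c a b : ZMod n) : cD (c - a) (c - b) = cD a b := by
  rw [cD_comm a b]
  unfold cD
  congr 2
  ring

lemma cD_self {n : ℕ} (a : ZMod n) : cD a a = 0 := by
  simp [cD]

lemma cD_one {n : ℕ} [NeZero n] (a : ZMod n) : cD (a + 1) a ≤ 1 ∧ cD a (a + 1) ≤ 1 := by
  have h : cD (a + 1) a ≤ 1 := by
    unfold cD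
    rw [ZMod.valMinAbs_natAbs_eq_min]
    refine (min_le_left _ _).trans ?_
    rw [add_sub_cancel_left]
    rcases n with _ | _ | n
    · simp_all
    · have := ZMod.val_lt (1 : ZMod (0 + 1))
      omega
    · have : Fact (1 < n + 1 + 1) := ⟨by omega⟩
      exact (ZMod.val_one (n + 1 + 1)).le
  exact ⟨h, by rw [cD_comm]; exact h⟩

lemma cD_tri {n : ℕ} [NeZero n] (a b c : ZMod n) : cD a c ≤ cD a b + cD b c := by
  unfold cD
  have := ZMod.natAbs_valMinAbs_add_le (a - b) (b - c)
  rw [sub_add_sub_cancel] at this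
  exact this.trans (Int.natAbs_add_le _ _)

lemma dist_le_cD {V : Type*} (G : SimpleGraph V) (hG : G.Connected) {n : ℕ} [NeZero n]
    (u : ZMod n → V) (hadj : ∀ i, G.Adj (u i) (u (i + 1))) (a b : ZMod n) :
    G.dist (u a) (u b) ≤ cD a b := by
  have h1 : ∀ (m : ℕ) (a : ZMod n), G.dist (u a) (u (a + m)) ≤ m := by
    intro m
    induction m with
    | zero => intro a; simp
    | succ m ih =>
      intro a
      have h2 := hG.dist_triangle (u := u a) (v := u (a + m)) (w := u (a + m + 1))
      have h3 := SimpleGraph.dist_eq_one_iff_adj.2 (hadj (a + m))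
      have h4 := ih a
      push_cast
      rw [← add_assoc]
      omega
  unfold cD
  have hc := ZMod.coe_valMinAbs (a - b)
  generalize (a - b).valMinAbs = z at hc
  rcases Int.natAbs_eq z with h | h
  · rw [h, Int.cast_natCast] at hc
    have := h1 z.natAbs b
    rwa [hc, add_sub_cancel, SimpleGraph.dist_comm] at this
  · rw [h, Int.cast_neg, Int.cast_natCast] at hc
    have := h1 z.natAbs a
    have e : ((z.natAbs : ℕ) : ZMod n) = b - a := by
      rw [← neg_sub a b, ← hc, neg_neg]
    rwa [e, add_sub_cancel] at this

lemma exists_comp {V : Type*} (G : SimpleGraph V) {n : ℕ}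
    (u : ZMod n → V) (S : Set (Sym2 V)) (hS : S = {f | ∃ i, f = s(u i, u (i + 1))})
    {x y : V} (p : G.Walk x y) (hy : ∃ j, (G.deleteEdges S).Reachable y (u j)) :
    ∃ j, (G.deleteEdges S).Reachable x (u j) := by
  induction p with
  | nil => exact hy
  | @cons a b c h p ih =>
    obtain ⟨j, hj⟩ := ih hy
    by_cases hs : s(a, b) ∈ S
    · rw [hS] at hs
      obtain ⟨l, hl⟩ := hs
      rcases Sym2.eq_iff.1 hl with ⟨h1, h2⟩ | ⟨h1, h2⟩
      · exact ⟨l, by rw [h1]⟩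
      · exact ⟨l + 1, by rw [h1]⟩
    · have : (G.deleteEdges S).Adj a b := by
        rw [SimpleGraph.deleteEdges_adj]
        exact ⟨h, hs⟩
      exact ⟨j, this.reachable.trans hj⟩

lemma dist_formula {V : Type*} (G : SimpleGraph V) (hG : G.Connected) {n : ℕ} [NeZero n]
    (u : ZMod n → V) (hadj : ∀ i, G.Adj (u i) (u (i + 1)))
    (S : Set (Sym2 V)) (hS : S = {f | ∃ i, f = s(u i, u (i + 1))})
    (c : V → ZMod n) (hc : ∀ x, (G.deleteEdges S).Reachable x (u (c x)))
    (hcu : ∀ x j, (G.deleteEdges S).Reachable x (u j) → c x = j) (x : V) (b : ZMod n) :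
    G.dist x (u b) = (G.deleteEdges S).dist x (u (c x)) + cD (c x) b := by
  have hcc : ∀ j, c (u j) = j := fun j => hcu _ _ (SimpleGraph.Reachable.refl _)
  apply le_antisymm
  · obtain ⟨p, hp⟩ := (hc x).exists_walk_length_eq_dist
    have h1 : G.dist x (u (c x)) ≤ (G.deleteEdges S).dist x (u (c x)) := by
      rw [← hp, ← SimpleGraph.Walk.length_mapLe (G.deleteEdges_le S) p]
      exact SimpleGraph.dist_le _
    have h2 := dist_le_cD G hG u hadj (c x) b
    have h3 := hG.dist_triangle (u := x) (v := u (c x)) (w := u b)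
    omega
  · have key : ∀ {x y : V} (p : G.Walk x y), y = u b →
        (G.deleteEdges S).dist x (u (c x)) + cD (c x) b ≤ p.length := by
      intro x y p hy
      induction p with
      | nil => subst hy; simp [hcc, cD_self]
      | @cons a d e h p ih =>
        have ih := ih hy
        rw [SimpleGraph.Walk.length_cons]
        by_cases hs : s(a, d) ∈ S
        · rw [hS] at hs
          obtain ⟨l, hl⟩ := hs
          have ht1 := cD_tri l (l + 1) b
          have ht2 := cD_tri (l + 1) l b
          have ho := cD_one l
          rcases Sym2.eq_iff.1 hl with ⟨h1, h2⟩ | ⟨h1, h2⟩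
          · subst h1 h2
            simp only [hcc, SimpleGraph.dist_self] at ih ⊢
            omega
          · subst h1 h2
            simp only [hcc, SimpleGraph.dist_self] at ih ⊢
            omega
        · have ha : (G.deleteEdges S).Adj a d := by
            rw [SimpleGraph.deleteEdges_adj]
            exact ⟨h, hs⟩
          have hcad : c a = c d := hcu _ _ (ha.reachable.trans (hc d))
          rw [hcad]
          obtain ⟨q, hq⟩ := (hc d).exists_walk_length_eq_dist
          have := SimpleGraph.dist_le (SimpleGraph.Walk.cons ha q)
          rw [SimpleGraph.Walk.length_cons] at this
          omega
    obtain ⟨p, hp⟩ := (hG x (u b)).exists_walk_length_eq_dist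
    rw [← hp]
    exact key p rfl

/-- odd-cycle edge bound: for each cycle edge `v_i v_{i+1}` of an odd cycle
`C_{2k+1}` whose edge deletion yields exactly `2k+1` components,
`(m_{v_i} − m_{v_{i+1}})² ≤ (m − 2k − 1 − m_{i+k+1})²`, where `m_{i+k+1}` is the number of
edges of the component of `G − E(C_{2k+1})` containing `v_{i+k+1}`. -/
theorem stmt7 {V : Type*} [Fintype V] (G : SimpleGraph V) (hG : G.Connected)
    (k : ℕ) (hk : 1 ≤ k) (u : ZMod (2 * k + 1) → V) (hinj : Function.Injective u)
    (hadj : ∀ i, G.Adj (u i) (u (i + 1)))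
    (S : Set (Sym2 V)) (hS : S = {f | ∃ i, f = s(u i, u (i + 1))})
    (hcomp : Nat.card (G.deleteEdges S).ConnectedComponent = 2 * k + 1)
    (i : ZMod (2 * k + 1)) :
    ((mCloser G (u i) (u (i + 1)) : ℤ) - (mCloser G (u (i + 1)) (u i) : ℤ)) ^ 2 ≤
      ((G.edgeFinset.card : ℤ) - (2 * k + 1) -
        (compEdges (G.deleteEdges S)
          ((G.deleteEdges S).connectedComponentMk (u (i + (k : ZMod (2 * k + 1)) + 1))) : Finset (Sym2 V)).card) ^ 2 := by
  have hsurj : Function.Surjective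
      (fun j => (G.deleteEdges S).connectedComponentMk (u j)) := by
    intro C
    induction C using SimpleGraph.ConnectedComponent.ind with
    | h x =>
      obtain ⟨p⟩ := hG x (u 0)
      obtain ⟨j, hj⟩ := exists_comp G u S hS p ⟨0, SimpleGraph.Reachable.refl _⟩
      exact ⟨j, (SimpleGraph.ConnectedComponent.eq.2 hj).symm⟩
  have hinjc := (hsurj.bijective_of_nat_card_le (by rw [hcomp, Nat.card_zmod])).1
  choose c hc using fun x => hsurj ((G.deleteEdges S).connectedComponentMk x)
  have hc' : ∀ x, (G.deleteEdges S).Reachable x (u (c x)) := fun x =>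
    SimpleGraph.ConnectedComponent.eq.1 (hc x).symm
  have hcu : ∀ x j, (G.deleteEdges S).Reachable x (u j) → c x = j := fun x j h =>
    hinjc ((hc x).trans (SimpleGraph.ConnectedComponent.eq.2 h))
  have hd := dist_formula G hG u hadj S hS c hc' hcu
  have hcc : ∀ j, c (u j) = j := fun j => hcu _ _ (SimpleGraph.Reachable.refl _)
  have hdu : ∀ a b, G.dist (u a) (u b) = cD a b := by
    intro a b
    rw [hd, hcc]
    simp
  have hkk : (k : ZMod (2 * k + 1)) + k + 1 = 0 := by
    have := ZMod.natCast_self (2 * k + 1)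
    push_cast at this
    rw [← this]
    ring
  have h2 : (2 : ZMod (2 * k + 1)) ≠ 0 := by
    intro h
    have h' : ((2 : ℕ) : ZMod (2 * k + 1)) = 0 := by exact_mod_cast h
    rw [ZMod.natCast_eq_zero_iff] at h'
    have := Nat.le_of_dvd (by norm_num) h'
    omega
  have hEinj : Function.Injective (fun j => s(u j, u (j + 1))) := by
    intro a b hab
    rcases Sym2.eq_iff.1 hab with ⟨h1, _⟩ | ⟨h1, h3⟩
    · exact hinj h1
    · have e1 := hinj h1
      have e2 := hinj h3
      exfalso
      apply h2
      rw [e1] at e2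
      linear_combination e2
  set H := G.deleteEdges S with hH
  set ES : Finset (Sym2 V) := Finset.univ.image (fun j => s(u j, u (j + 1))) with hES
  have hEScard : ES.card = 2 * k + 1 := by
    rw [hES, Finset.card_image_of_injective _ hEinj, Finset.card_univ, ZMod.card]
  have hmemS : ∀ f, f ∈ S ↔ f ∈ ES := by
    intro f
    rw [hS, hES]
    simp [eq_comm]
  have hHE : ∀ f, f ∈ H.edgeFinset ↔ f ∈ G.edgeFinset ∧ f ∉ ES := by
    intro f
    rw [SimpleGraph.mem_edgeFinset, SimpleGraph.mem_edgeFinset, hH,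
      SimpleGraph.edgeSet_deleteEdges, Set.mem_sdiff, hmemS]
  have hESG : ES ⊆ G.edgeFinset := by
    intro f hf
    rw [hES] at hf
    obtain ⟨j, -, rfl⟩ := Finset.mem_image.1 hf
    rw [SimpleGraph.mem_edgeFinset]
    exact hadj j
  have hGE : G.edgeFinset = ES ∪ H.edgeFinset := by
    ext f
    rw [Finset.mem_union, hHE]
    constructor
    · intro h; tauto
    · rintro (h | h)
      · exact hESG h
      · exact h.1
  have hdisj : Disjoint ES H.edgeFinset := by
    rw [Finset.disjoint_left]
    intro f hf h
    exact ((hHE f).1 h).2 hf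
  have hcardG : G.edgeFinset.card = 2 * k + 1 + H.edgeFinset.card := by
    rw [hGE, Finset.card_union_of_disjoint hdisj, hEScard]
  have hsplit : ∀ a b, mCloser G a b = (ES.filter fun f => eDist G f a < eDist G f b).card +
      (H.edgeFinset.filter fun f => eDist G f a < eDist G f b).card := by
    intro a b
    unfold mCloser
    rw [hGE, Finset.filter_union, Finset.card_union_of_disjoint]
    exact Finset.disjoint_filter_filter hdisj
  have hESsymm : (ES.filter fun f => eDist G f (u i) < eDist G f (u (i + 1))).card =
      (ES.filter fun f => eDist G f (u (i + 1)) < eDist G f (u i)).card := by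
    rw [hES, Finset.filter_image, Finset.filter_image,
      Finset.card_image_of_injective _ hEinj, Finset.card_image_of_injective _ hEinj]
    apply Finset.card_equiv (Equiv.subLeft (2 * i))
    intro j
    simp only [Finset.mem_filter, Finset.mem_univ, true_and, Equiv.subLeft_apply, eDist,
      Sym2.lift_mk, hdu]
    have e1 : cD (2 * i - j) (i + 1) = cD (j + 1) i := by
      rw [← cD_refl (2 * i + 1) (j + 1) i]; congr 1 <;> ring
    have e2 : cD (2 * i - j + 1) (i + 1) = cD j i := by
      rw [← cD_refl (2 * i + 1) j i]; congr 1 <;> ring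
    have e3 : cD (2 * i - j) i = cD (j + 1) (i + 1) := by
      rw [← cD_refl (2 * i + 1) (j + 1) (i + 1)]; congr 1 <;> ring
    have e4 : cD (2 * i - j + 1) i = cD j (i + 1) := by
      rw [← cD_refl (2 * i + 1) j (i + 1)]; congr 1 <;> ring
    rw [e1, e2, e3, e4, min_comm (cD (j + 1) i), min_comm (cD (j + 1) (i + 1))]
  have hfix : cD (i + (k : ZMod (2 * k + 1)) + 1) i
      = cD (i + (k : ZMod (2 * k + 1)) + 1) (i + 1) := by
    rw [← cD_refl (2 * i + 1) _ i]
    congr 1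
    · linear_combination -hkk
    · ring
  have hcompeq : ∀ f ∈ compEdges H (H.connectedComponentMk (u (i + (k : ZMod (2 * k + 1)) + 1))),
      eDist G f (u i) = eDist G f (u (i + 1)) := by
    intro f hf
    unfold compEdges at hf
    rw [Finset.mem_filter] at hf
    obtain ⟨-, hf⟩ := hf
    induction f using Sym2.ind with
    | _ x y =>
      have hx := hcu x _ (SimpleGraph.ConnectedComponent.eq.1 (hf x (by simp)))
      have hy := hcu y _ (SimpleGraph.ConnectedComponent.eq.1 (hf y (by simp)))
      simp only [eDist, Sym2.lift_mk, hd, hx, hy, hfix]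
  set A := H.edgeFinset.filter fun f => eDist G f (u i) < eDist G f (u (i + 1)) with hA
  set B := H.edgeFinset.filter fun f => eDist G f (u (i + 1)) < eDist G f (u i) with hB
  set K := compEdges H (H.connectedComponentMk (u (i + (k : ZMod (2 * k + 1)) + 1))) with hK
  have hsum : A.card + B.card + K.card ≤ H.edgeFinset.card := by
    have d1 : Disjoint A B := by
      rw [Finset.disjoint_left]
      intro f h1 h3
      have h1 := (Finset.mem_filter.1 h1).2
      have h3 := (Finset.mem_filter.1 h3).2
      omega
    have d2 : Disjoint (A ∪ B) K := by
      rw [Finset.disjoint_left]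
      intro f h1 h3
      have h3 := hcompeq f h3
      rcases Finset.mem_union.1 h1 with h1 | h1
      · have h1 := (Finset.mem_filter.1 h1).2
        omega
      · have h1 := (Finset.mem_filter.1 h1).2
        omega
    rw [← Finset.card_union_of_disjoint d1, ← Finset.card_union_of_disjoint d2]
    apply Finset.card_le_card
    apply Finset.union_subset (Finset.union_subset _ _)
    · intro f hf
      rw [hK] at hf
      unfold compEdges at hf
      convert (Finset.mem_filter.1 hf).1
    · exact Finset.filter_subset _ _
    · exact Finset.filter_subset _ _
  rw [hsplit, hsplit, hESsymm, hcardG, ← hA, ← hB]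
  apply sq_le_sq'
  · push_cast
    omega
  · push_cast
    omega
end

section
/- Let G be a connected graph with m edges containing an odd cycle C_{2k+1} such that G − E(C_{2k+1}) has exactly 2k+1 connected components. Then Σ_{e=uv ∈ C_{2k+1}} (m_u(e|G) − m_v(e|G))² ≤ 2k(m − 2k − 1)², with equality if and only if C_{2k+1} is an end-block. -/
open scoped Classical
open Finset

theorem abs_end (k : ℕ) (m : ZMod (2*k+1) → ℤ) (hm : ∀ i, 0 ≤ m i)
    (g : ZMod (2*k+1) → ℤ) (hg : ∀ x, g x ^ 2 = if x = (k+1 : ZMod (2*k+1)) then 0 else 1) :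
    (∑ j, (∑ i, m i * g (i - j))^2 ≤ 2 * k * (∑ i, m i)^2) ∧
    (∑ j, (∑ i, m i * g (i - j))^2 = 2 * k * (∑ i, m i)^2 ↔ ∀ i i', m i ≠ 0 → m i' ≠ 0 → i = i') := by
  set M := ∑ i, m i with hM
  have hMn : 0 ≤ M := Finset.sum_nonneg fun i _ => hm i
  have habs : ∀ x, |g x| = if x = (k+1 : ZMod (2*k+1)) then 0 else 1 := by
    intro x
    have := hg x
    split_ifs at this ⊢ with h
    · simpa using this
    · rcases (by simpa using this : g x = 1 ∨ g x = -1) with h | h <;> simp [h]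
  have hle : ∀ i, m i ≤ M := fun i => Finset.single_le_sum (fun i _ => hm i) (Finset.mem_univ i)
  have h1 : ∀ j, |∑ i, m i * g (i - j)| ≤ M - m (j + (k+1)) := by
    intro j
    refine (Finset.abs_sum_le_sum_abs _ _).trans ?_
    rw [hM, ← Finset.sum_erase_eq_sub (Finset.mem_univ _),
      ← Finset.add_sum_erase _ _ (Finset.mem_univ (j + (k+1) : ZMod (2*k+1)))]
    have : ∀ i ∈ Finset.univ.erase (j + (k+1) : ZMod (2*k+1)), |m i * g (i - j)| ≤ m i := by
      intro i _
      rw [abs_mul, habs, abs_of_nonneg (hm i)]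
      split_ifs <;> simp [hm i]
    have h0 : |m (j + (k+1)) * g (j + (k+1) - j)| = 0 := by
      rw [abs_mul, habs]; simp
    rw [h0, zero_add]
    exact Finset.sum_le_sum this
  have h2 : ∀ j, (∑ i, m i * g (i - j))^2 ≤ (M - m (j + (k+1)))^2 := fun j =>
    sq_le_sq.mpr ((h1 j).trans (le_abs_self _))
  have h3 : ∀ j, (M - m (j + (k+1)))^2 ≤ M * (M - m (j + (k+1))) := by
    intro j
    nlinarith [hle (j + (k+1)), hm (j + (k+1))]
  have h4 : ∑ j, M * (M - m (j + (k+1))) = 2 * k * M^2 := by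
    rw [← Finset.mul_sum, Finset.sum_sub_distrib,
      show ∑ j, m (j + (k+1)) = M from Equiv.sum_comp (Equiv.addRight (k+1 : ZMod (2*k+1))) m]
    simp [ZMod.card]
    ring
  refine ⟨?_, ?_, ?_⟩
  · rw [← h4]
    exact Finset.sum_le_sum fun j _ => (h2 j).trans (h3 j)
  · intro h i i' hi hi'
    by_contra hne
    rw [← h4, Finset.sum_eq_sum_iff_of_le (fun j _ => (h2 j).trans (h3 j))] at h
    have h5 := h (i - (k+1)) (Finset.mem_univ _)
    have h6 := h2 (i - (k+1))
    rw [h5] at h6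
    simp only [sub_add_cancel] at h6
    have h7 : m i + m i' ≤ M := by
      rw [← Finset.sum_pair hne]
      exact Finset.sum_le_sum_of_subset_of_nonneg (Finset.subset_univ _) (fun i _ _ => hm i)
    have := hm i
    have := hm i'
    have p1 : 0 < m i := by omega
    have p2 : 0 < m i' := by omega
    nlinarith [mul_pos p1 p2]
  · intro h
    by_cases hz : ∀ i, m i = 0
    · simp [hM, hz]
    push Not at hz
    obtain ⟨i0, hi0⟩ := hz
    have hz : ∀ i, i ≠ i0 → m i = 0 := by
      intro i hi
      by_contra hc
      exact hi (h i i0 hc hi0)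
    have hs : M = m i0 := Finset.sum_eq_single i0 (fun i _ hi => hz i hi) (by simp)
    have hd : ∀ j, ∑ i, m i * g (i - j) = m i0 * g (i0 - j) := fun j =>
      Finset.sum_eq_single i0 (fun i _ hi => by simp [hz i hi]) (by simp)
    simp only [hd, hs, mul_pow, ← Finset.mul_sum]
    rw [show ∑ j, g (i0 - j) ^ 2 = ∑ x, g x ^ 2 from Equiv.sum_comp (Equiv.subLeft i0) (fun x => g x ^ 2)]
    simp only [hg]
    rw [Finset.sum_ite]
    simp [Finset.filter_ne', ZMod.card]
    ring
theorem two_ne (k : ℕ) (hk : 1 ≤ k) : (2 : ZMod (2*k+1)) ≠ 0 := by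
  intro h
  have : ((2:ℕ) : ZMod (2*k+1)) = 0 := by exact_mod_cast h
  rw [ZMod.natCast_eq_zero_iff] at this
  have := Nat.le_of_dvd (by norm_num) this
  omega
theorem one_ne (k : ℕ) (hk : 1 ≤ k) : (1 : ZMod (2*k+1)) ≠ 0 := by
  intro h
  exact two_ne k hk (by linear_combination 2 * h)
noncomputable def cy {n : ℕ} (x : ZMod n) : ℕ := x.valMinAbs.natAbs
noncomputable def gg {n : ℕ} (x : ZMod n) : ℤ := (if cy x < cy (x-1) then 1 else 0) - (if cy (x-1) < cy x then 1 else 0)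
theorem cy_neg {n : ℕ} (x : ZMod n) : cy (-x) = cy x := ZMod.natAbs_valMinAbs_neg x
theorem cy_one (k : ℕ) : cy (1 : ZMod (2*k+1)) ≤ 1 := by
  have := ZMod.natAbs_valMinAbs_le (n := 2*k+1) 1
  rcases Nat.eq_zero_or_pos k with h | h
  · subst h; unfold cy; omega
  · unfold cy
    have h := ZMod.valMinAbs_natCast_of_le_half (n := 2*k+1) (a := 1) (by omega)
    simp at h; simp [h]
theorem cy_step (k : ℕ) (x : ZMod (2*k+1)) : cy (x+1) ≤ cy x + 1 := by
  have := ZMod.natAbs_valMinAbs_add_le x 1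
  have h1 := cy_one k
  have h2 := Int.natAbs_add_le x.valMinAbs (1 : ZMod (2*k+1)).valMinAbs
  unfold cy at *; omega
theorem cy_step' (k : ℕ) (x : ZMod (2*k+1)) : cy x ≤ cy (x+1) + 1 := by
  rw [← cy_neg x, ← cy_neg (x+1)]
  have := cy_step k (-(x+1))
  simpa using this
theorem gg_sq (k : ℕ) (hk : 1 ≤ k) (x : ZMod (2*k+1)) : gg x ^ 2 = if x = (k+1 : ZMod (2*k+1)) then 0 else 1 := by
  have hc : (2*k+1 : ZMod (2*k+1)) = 0 := by exact_mod_cast ZMod.natCast_self (2*k+1)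
  have key : cy x = cy (x-1) ↔ x = (k+1 : ZMod (2*k+1)) := by
    unfold cy
    rw [ZMod.natAbs_valMinAbs_eq_natAbs_valMinAbs]
    constructor
    · rintro (h | h)
      · exact absurd (by linear_combination h) (one_ne k hk)
      · linear_combination (k+1) * h - x * hc
    · intro h
      right
      rw [h]
      linear_combination hc
  unfold gg
  by_cases hx : x = (k+1 : ZMod (2*k+1))
  · rw [if_pos hx, key.mpr hx]; simp
  · rw [if_neg hx]
    rcases lt_or_gt_of_ne (mt key.mp hx) with h | h
    · rw [if_pos h, if_neg h.le.not_gt]; norm_num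
    · rw [if_pos h, if_neg h.le.not_gt]; norm_num

section
variable {V : Type*} {G : SimpleGraph V} {k : ℕ} {u : ZMod (2 * k + 1) → V} {S : Set (Sym2 V)}

theorem exists_proj [Fintype V] (hG : G.Connected)
    (hS : S = {f | ∃ i, f = s(u i, u (i + 1))})
    (hcomp : Nat.card (G.deleteEdges S).ConnectedComponent = 2 * k + 1) :
    ∃ p : V → ZMod (2*k+1), (∀ v, (G.deleteEdges S).Reachable v (u (p v))) ∧ (∀ i, p (u i) = i) ∧
      (∀ v w, (G.deleteEdges S).Reachable v w → p v = p w) := by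
  have hQ : ∀ v, ∃ i, (G.deleteEdges S).Reachable v (u i) := by
    intro v
    obtain ⟨w⟩ := hG v (u 0)
    have hw : ∀ a b (w : G.Walk a b), (∃ i, (G.deleteEdges S).Reachable b (u i)) →
        ∃ i, (G.deleteEdges S).Reachable a (u i) := by
      intro a b w hb
      induction w with
      | nil => exact hb
      | @cons a c b hac w ih =>
        obtain ⟨i, hi⟩ := ih hb
        by_cases h : s(a, c) ∈ S
        · rw [hS] at h
          obtain ⟨l, hl⟩ := h
          rw [Sym2.eq_iff] at hl
          rcases hl with ⟨h, -⟩ | ⟨h, -⟩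
          · exact ⟨l, h ▸ SimpleGraph.Reachable.refl _⟩
          · exact ⟨l + 1, h ▸ SimpleGraph.Reachable.refl _⟩
        · have hH : (G.deleteEdges S).Adj a c := by
            rw [SimpleGraph.deleteEdges_adj]; exact ⟨hac, h⟩
          exact ⟨i, hH.reachable.trans hi⟩
    exact hw _ _ w ⟨0, SimpleGraph.Reachable.refl _⟩
  have hsurj : Function.Surjective (fun i => (G.deleteEdges S).connectedComponentMk (u i)) := by
    intro c
    induction c using SimpleGraph.ConnectedComponent.ind with
    | _ v =>
      obtain ⟨i, hi⟩ := hQ v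
      exact ⟨i, SimpleGraph.ConnectedComponent.sound hi.symm⟩
  have hbij := hsurj.bijective_of_nat_card_le (by rw [hcomp, Nat.card_zmod])
  choose p hp using hQ
  have hinj : ∀ i j, (G.deleteEdges S).Reachable (u i) (u j) → i = j := fun i j h =>
    hbij.1 (SimpleGraph.ConnectedComponent.sound h)
  refine ⟨p, hp, fun i => (hinj _ _ (hp (u i))).symm, fun v w h => hinj _ _ ?_⟩
  exact ((hp v).symm.trans h).trans (hp w)

theorem dist_cyc (hG : G.Connected) (hadj : ∀ i, G.Adj (u i) (u (i + 1))) (a b : ZMod (2*k+1)) :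
    G.dist (u a) (u b) ≤ cy (a - b) := by
  have h1 : ∀ (t : ℕ) (a : ZMod (2*k+1)), G.dist (u a) (u (a + t)) ≤ t := by
    intro t
    induction t with
    | zero => intro a; simp
    | succ t ih =>
      intro a
      have h2 := hG.dist_triangle (u := u a) (v := u (a + t)) (w := u (a + t + 1))
      have h3 := SimpleGraph.dist_eq_one_iff_adj.mpr (hadj (a + t))
      have h4 := ih a
      push_cast
      rw [← add_assoc]
      omega
  have h2 := ZMod.coe_valMinAbs (a - b)
  unfold cy
  rcases Int.natAbs_eq (a - b).valMinAbs with h | h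
  · rw [h] at h2
    have := h1 (a-b).valMinAbs.natAbs b
    rw [SimpleGraph.dist_comm]
    convert this using 3
    rw [Int.cast_natCast] at h2
    linear_combination -h2
  · rw [h] at h2
    have := h1 (a-b).valMinAbs.natAbs a
    convert this using 3
    rw [Int.cast_neg, Int.cast_natCast] at h2
    linear_combination h2

theorem dist_form (hG : G.Connected) (hadj : ∀ i, G.Adj (u i) (u (i + 1)))
    (hS : S = {f | ∃ i, f = s(u i, u (i + 1))})
    (p : V → ZMod (2*k+1)) (hp : ∀ v, (G.deleteEdges S).Reachable v (u (p v)))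
    (hpu : ∀ i, p (u i) = i)
    (hpr : ∀ v w, (G.deleteEdges S).Reachable v w → p v = p w) (v : V) (j : ZMod (2*k+1)) :
    G.dist v (u j) = (G.deleteEdges S).dist v (u (p v)) + cy (p v - j) := by
  apply le_antisymm
  · obtain ⟨w, hw⟩ := (hp v).exists_walk_length_eq_dist
    have h1 : G.dist v (u (p v)) ≤ (G.deleteEdges S).dist v (u (p v)) := by
      rw [← hw, ← SimpleGraph.Walk.length_map (SimpleGraph.Hom.ofLE (SimpleGraph.deleteEdges_le S))]
      exact SimpleGraph.dist_le _
    have h2 := dist_cyc hG hadj (p v) j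
    have h3 := hG.dist_triangle (u := v) (v := u (p v)) (w := u j)
    omega
  · have step : ∀ a b, G.Adj a b →
        (G.deleteEdges S).dist a (u (p a)) + cy (p a - j) ≤
          (G.deleteEdges S).dist b (u (p b)) + cy (p b - j) + 1 := by
      intro a b hab
      by_cases h : s(a, b) ∈ S
      · rw [hS] at h
        obtain ⟨i, hi⟩ := h
        rw [Sym2.eq_iff] at hi
        have e : (i + 1 - j) = i - j + 1 := by ring
        have h1 := cy_step k (i - j)
        have h2 := cy_step' k (i - j)
        rcases hi with ⟨rfl, rfl⟩ | ⟨rfl, rfl⟩ <;>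
        · simp only [hpu, SimpleGraph.dist_self, e]
          omega
      · have hH : (G.deleteEdges S).Adj a b := by simp [SimpleGraph.deleteEdges_adj, hab, h]
        have e := hpr a b hH.reachable
        obtain ⟨w, hw⟩ := (hp b).exists_walk_length_eq_dist
        rw [e, ← hw]
        have := SimpleGraph.dist_le (SimpleGraph.Walk.cons hH w)
        simp only [SimpleGraph.Walk.length_cons] at this
        omega
    have hwalk : ∀ a b (w : G.Walk a b), (G.deleteEdges S).dist a (u (p a)) + cy (p a - j) ≤
          (G.deleteEdges S).dist b (u (p b)) + cy (p b - j) + w.length := by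
      intro a b w
      induction w with
      | nil => simp
      | cons h w ih =>
        have := step _ _ h
        simp only [SimpleGraph.Walk.length_cons]
        omega
    obtain ⟨w, hw⟩ := hG.exists_walk_length_eq_dist v (u j)
    have := hwalk _ _ w
    rw [hw] at this
    simpa [hpu, cy] using this

theorem count [Fintype V] (hk : 1 ≤ k) (hinj : Function.Injective u) (hadj : ∀ i, G.Adj (u i) (u (i + 1)))
    (hS : S = {f | ∃ i, f = s(u i, u (i + 1))})
    (p : V → ZMod (2*k+1)) (hp : ∀ v, (G.deleteEdges S).Reachable v (u (p v)))
    (hpu : ∀ i, p (u i) = i)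
    (hpr : ∀ v w, (G.deleteEdges S).Reachable v w → p v = p w) (P : Sym2 V → Prop) [DecidablePred P] :
    (G.edgeFinset.filter P).card =
      ∑ i, ((compEdges (G.deleteEdges S) ((G.deleteEdges S).connectedComponentMk (u i))).filter P).card
      + (Finset.univ.filter (fun i => P s(u i, u (i+1)))).card := by
  set E : ZMod (2*k+1) → Finset (Sym2 V) := fun i =>
    compEdges (G.deleteEdges S) ((G.deleteEdges S).connectedComponentMk (u i)) with hE
  have hmem : ∀ i f, f ∈ E i ↔ (f ∈ G.edgeSet ∧ f ∉ S) ∧ ∀ x ∈ f, p x = i := by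
    intro i f
    simp only [hE, compEdges, Finset.mem_filter, SimpleGraph.mem_edgeFinset,
      SimpleGraph.edgeSet_deleteEdges, Set.mem_sdiff]
    refine and_congr_right fun _ => forall₂_congr fun x _ => ?_
    rw [SimpleGraph.ConnectedComponent.eq]
    constructor
    · intro h; rw [hpr _ _ h, hpu]
    · rintro rfl; exact hp x
  have hcinj : Function.Injective (fun i => s(u i, u (i+1))) := by
    intro i i' h
    simp only [Sym2.eq_iff] at h
    rcases h with ⟨h, -⟩ | ⟨h, h'⟩
    · exact hinj h
    · exact absurd (by linear_combination hinj h' - hinj h) (two_ne k hk)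
  have hdecomp : G.edgeFinset.filter P = (Finset.univ.biUnion fun i => (E i).filter P) ∪
      (Finset.univ.filter (fun i => P s(u i, u (i+1)))).image (fun i => s(u i, u (i+1))) := by
    ext f
    simp only [Finset.mem_filter, Finset.mem_union, Finset.mem_biUnion, Finset.mem_univ, true_and,
      Finset.mem_image, SimpleGraph.mem_edgeFinset]
    constructor
    · rintro ⟨h1, h2⟩
      by_cases h : f ∈ S
      · right
        rw [hS] at h
        obtain ⟨i, rfl⟩ := h
        exact ⟨i, h2, rfl⟩
      · left
        induction f using Sym2.ind with
        | _ a b =>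
          refine ⟨p a, (hmem _ _).mpr ⟨⟨h1, h⟩, ?_⟩, h2⟩
          have hH : (G.deleteEdges S).Adj a b := by
            rw [SimpleGraph.deleteEdges_adj]; exact ⟨h1, h⟩
          have e := hpr a b hH.reachable
          intro x hx
          rcases Sym2.mem_iff.mp hx with rfl | rfl
          · rfl
          · exact e.symm
    · rintro (⟨i, h, h2⟩ | ⟨i, h, rfl⟩)
      · exact ⟨((hmem _ _).mp h).1.1, h2⟩
      · exact ⟨hadj i, h⟩
  rw [hdecomp, Finset.card_union_of_disjoint, Finset.card_biUnion, Finset.card_image_of_injective _ hcinj]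
  · intro i _ i' _ hne
    rw [Function.onFun_apply, Finset.disjoint_left]
    intro f h h'
    have h1 := ((hmem _ _).mp (Finset.mem_filter.mp h).1).2
    have h2 := ((hmem _ _).mp (Finset.mem_filter.mp h').1).2
    induction f using Sym2.ind with
    | _ a b => exact hne ((h1 a (by simp)).symm.trans (h2 a (by simp)))
  · rw [Finset.disjoint_right]
    intro f hf hf'
    simp only [Finset.mem_image, Finset.mem_biUnion, Finset.mem_filter] at hf hf'
    obtain ⟨i, -, rfl⟩ := hf
    obtain ⟨i', -, h, -⟩ := hf'
    refine ((hmem _ _).mp h).1.2 ?_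
    rw [hS]; exact ⟨i, rfl⟩

theorem diff_form [Fintype V] (hG : G.Connected) (hk : 1 ≤ k) (hinj : Function.Injective u)
    (hadj : ∀ i, G.Adj (u i) (u (i + 1)))
    (hS : S = {f | ∃ i, f = s(u i, u (i + 1))})
    (p : V → ZMod (2*k+1)) (hp : ∀ v, (G.deleteEdges S).Reachable v (u (p v)))
    (hpu : ∀ i, p (u i) = i)
    (hpr : ∀ v w, (G.deleteEdges S).Reachable v w → p v = p w) (j : ZMod (2*k+1)) :
    (mCloser G (u j) (u (j + 1)) : ℤ) - (mCloser G (u (j + 1)) (u j) : ℤ) =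
      ∑ i, ((compEdges (G.deleteEdges S)
        ((G.deleteEdges S).connectedComponentMk (u i))).card : ℤ) * gg (i - j) := by
  have hd := dist_form hG hadj hS p hp hpu hpr
  have hcyc : ∀ i a, eDist G s(u i, u (i+1)) (u a) = min (cy (i - a)) (cy (i + 1 - a)) := by
    intro i a
    simp [eDist, hd, hpu]
  have hsym : (Finset.univ.filter (fun i : ZMod (2*k+1) =>
        eDist G s(u i, u (i+1)) (u j) < eDist G s(u i, u (i+1)) (u (j+1)))).card =
      (Finset.univ.filter (fun i : ZMod (2*k+1) =>
        eDist G s(u i, u (i+1)) (u (j+1)) < eDist G s(u i, u (i+1)) (u j))).card := by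
    refine Finset.card_equiv (Equiv.subLeft (2 * j)) ?_
    intro i
    simp only [Finset.mem_filter, Finset.mem_univ, true_and, hcyc, Equiv.subLeft_apply]
    rw [← cy_neg (2 * j - i - (j + 1)), ← cy_neg (2 * j - i + 1 - (j+1)), ← cy_neg (2 * j - i - j),
      ← cy_neg (2 * j - i + 1 - j)]
    rw [show -(2 * j - i - (j + 1)) = i + 1 - j by ring,
      show -(2 * j - i + 1 - (j+1)) = i - j by ring,
      show -(2 * j - i - j) = i - j by ring,
      show -(2 * j - i + 1 - j) = i - (j + 1) by ring,
      show i + 1 - (j + 1) = i - j by ring]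
    rw [min_comm (cy (i + 1 - j)), min_comm (cy (i - (j+1)))]
  have hE : ∀ i a b, (((compEdges (G.deleteEdges S)
        ((G.deleteEdges S).connectedComponentMk (u i))).filter
          (fun f => eDist G f (u a) < eDist G f (u b))).card : ℤ) =
        (compEdges (G.deleteEdges S) ((G.deleteEdges S).connectedComponentMk (u i))).card *
          (if cy (i - a) < cy (i - b) then 1 else 0) := by
    intro i a b
    have : ∀ f ∈ compEdges (G.deleteEdges S) ((G.deleteEdges S).connectedComponentMk (u i)),
        (eDist G f (u a) < eDist G f (u b) ↔ cy (i - a) < cy (i - b)) := by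
      intro f hf
      have hf := (Finset.mem_filter.mp hf).2
      induction f using Sym2.ind with
      | _ x y =>
        have hx : p x = i := by
          rw [hpr _ _ (SimpleGraph.ConnectedComponent.exact (hf x (by simp))), hpu]
        have hy : p y = i := by
          rw [hpr _ _ (SimpleGraph.ConnectedComponent.exact (hf y (by simp))), hpu]
        simp only [eDist, Sym2.lift_mk, hd, hx, hy]
        omega
    rw [Finset.filter_congr this]
    split_ifs with h <;> simp [h]
  unfold mCloser
  rw [count hk hinj hadj hS p hp hpu hpr, count hk hinj hadj hS p hp hpu hpr, hsym]
  push_cast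
  rw [add_sub_add_right_eq_sub, ← Finset.sum_sub_distrib]
  refine Finset.sum_congr rfl fun i _ => ?_
  rw [hE, hE, ← mul_sub, gg, sub_add_eq_sub_sub]
end

/-- odd-cycle bound
`Σ_{e=uv ∈ C_{2k+1}} (m_u(e|G) − m_v(e|G))² ≤ 2k(m − 2k − 1)²`, with equality iff
`C_{2k+1}` is an end-block, i.e. at most one component of `G − E(C_{2k+1})` contains an
edge. -/
theorem stmt8 {V : Type*} [Fintype V] (G : SimpleGraph V) (hG : G.Connected)
    (k : ℕ) (hk : 1 ≤ k) (u : ZMod (2 * k + 1) → V) (hinj : Function.Injective u)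
    (hadj : ∀ i, G.Adj (u i) (u (i + 1)))
    (S : Set (Sym2 V)) (hS : S = {f | ∃ i, f = s(u i, u (i + 1))})
    (hcomp : Nat.card (G.deleteEdges S).ConnectedComponent = 2 * k + 1) :
    (∑ j ∈ Finset.range (2 * k + 1),
        ((mCloser G (u j) (u (j + 1)) : ℤ) - (mCloser G (u (j + 1)) (u j) : ℤ)) ^ 2) ≤
      2 * k * ((G.edgeFinset.card : ℤ) - 2 * k - 1) ^ 2 ∧
    ((∑ j ∈ Finset.range (2 * k + 1),
        ((mCloser G (u j) (u (j + 1)) : ℤ) - (mCloser G (u (j + 1)) (u j) : ℤ)) ^ 2) =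
      2 * k * ((G.edgeFinset.card : ℤ) - 2 * k - 1) ^ 2 ↔
      {c : (G.deleteEdges S).ConnectedComponent |
        (compEdges (G.deleteEdges S) c).Nonempty}.Subsingleton) := by
  obtain ⟨p, hp, hpu, hpr⟩ := exists_proj hG hS hcomp
  have hm : (G.edgeFinset.card : ℤ) - 2 * k - 1 = ∑ i, ((compEdges (G.deleteEdges S)
        ((G.deleteEdges S).connectedComponentMk (u i))).card : ℤ) := by
    have := count hk hinj hadj hS p hp hpu hpr (fun _ => True)
    simp only [Finset.filter_true, Finset.card_univ, ZMod.card] at this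
    rw [this]
    push_cast
    ring
  have hsum : (∑ j ∈ Finset.range (2 * k + 1),
        ((mCloser G (u j) (u (j + 1)) : ℤ) - (mCloser G (u (j + 1)) (u j) : ℤ)) ^ 2) =
      ∑ j : ZMod (2 * k + 1), (∑ i, ((compEdges (G.deleteEdges S)
        ((G.deleteEdges S).connectedComponentMk (u i))).card : ℤ) * gg (i - j)) ^ 2 := by
    refine Finset.sum_bij (fun (j : ℕ) _ => (j : ZMod (2 * k + 1))) (fun _ _ => Finset.mem_univ _) ?_ ?_ ?_
    · intro a ha b hb h
      rw [ZMod.natCast_eq_natCast_iff] at h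
      exact Nat.ModEq.eq_of_lt_of_lt h (Finset.mem_range.mp ha) (Finset.mem_range.mp hb)
    · intro b _
      exact ⟨b.val, Finset.mem_range.mpr (ZMod.val_lt b), ZMod.natCast_zmod_val b⟩
    · intro j _
      rw [diff_form hG hk hinj hadj hS p hp hpu hpr]
  have main := abs_end k (fun i => ((compEdges (G.deleteEdges S)
        ((G.deleteEdges S).connectedComponentMk (u i))).card : ℤ)) (fun i => by positivity)
        gg (gg_sq k hk)
  rw [hsum, hm]
  refine ⟨main.1, main.2.trans ?_⟩
  have hrep : ∀ c : (G.deleteEdges S).ConnectedComponent, ∃ i,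
      (G.deleteEdges S).connectedComponentMk (u i) = c := by
    intro c
    induction c using SimpleGraph.ConnectedComponent.ind with
    | _ v => exact ⟨p v, SimpleGraph.ConnectedComponent.sound (hp v).symm⟩
  constructor
  · intro h c hc d hd
    obtain ⟨i, rfl⟩ := hrep c
    obtain ⟨i', rfl⟩ := hrep d
    have := h i i' (by simpa using Finset.nonempty_iff_ne_empty.mp hc)
      (by simpa using Finset.nonempty_iff_ne_empty.mp hd)
    rw [this]
  · intro h i i' hi hi'
    have := h (x := (G.deleteEdges S).connectedComponentMk (u i))
      (by simpa [Finset.nonempty_iff_ne_empty] using hi)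
      (y := (G.deleteEdges S).connectedComponentMk (u i'))
      (by simpa [Finset.nonempty_iff_ne_empty] using hi')
    have := hpr _ _ (SimpleGraph.ConnectedComponent.exact this)
    rwa [hpu, hpu] at this
end

section
/- Let G be a cactus with n vertices, k cycles, and m edges, whose cycles C_1, …, C_k have lengths m_1, …, m_k with m_1, …, m_t odd and m_{t+1}, …, m_k even. Then Sz*_e(G) ≥ (2m² − m)/4 + ((m−1)²·Σ_{i=1}^k m_i)/4 − (Σ_{i=1}^t (m_i − 1)(m − m_i)²)/4 − (Σ_{i=t+1}^k m_i(m − m_i)²)/4, with equality if and only if G is the bundle G(m_1, …, m_k), i.e., all cycles share one common vertex and all cut edges are pendant edges attached at that vertex. -/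
open scoped Classical
open Finset

/-- A cactus: a connected graph in which any two (edge-)distinct cycles share
at most one vertex. -/
def IsCactus {V : Type*} (G : SimpleGraph V) : Prop :=
  G.Connected ∧ ∀ ⦃a b : V⦄ (p : G.Walk a a) (q : G.Walk b b),
    p.IsCycle → q.IsCycle → p.edges.toFinset ≠ q.edges.toFinset →
    (p.support.toFinset ∩ q.support.toFinset).card ≤ 1

/-- The bundle `G(len 0, …, len (k-1))`: `k` cycles of the given lengths all sharing a single
common hub vertex, together with `p` pendant edges attached at the hub. -/
def bundleGraph (k : ℕ) (len : Fin k → ℕ) (p : ℕ) :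
    SimpleGraph (Unit ⊕ ((Σ i : Fin k, Fin (len i - 1)) ⊕ Fin p)) :=
  SimpleGraph.fromRel fun x y =>
    match x, y with
    | Sum.inl _, Sum.inr (Sum.inr _) => True
    | Sum.inl _, Sum.inr (Sum.inl ⟨i, a⟩) => a.val = 0 ∨ a.val = len i - 2
    | Sum.inr (Sum.inl ⟨i, a⟩), Sum.inr (Sum.inl ⟨j, b⟩) => i = j ∧ a.val + 1 = b.val
    | _, _ => False


namespace Bnd

/-- signed total of distance differences across `uv` -/
noncomputable def S {V : Type*} (G : SimpleGraph V) [Fintype V] (u v : V) : ℚ :=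
  ∑ f ∈ G.edgeFinset, ((eDist G f u : ℚ) - eDist G f v)

theorem S_symm {V : Type*} (G : SimpleGraph V) [Fintype V] (u v : V) : S G u v ^ 2 = S G v u ^ 2 := by
  have : S G u v = - S G v u := by
    unfold S; rw [← Finset.sum_neg_distrib]; apply Finset.sum_congr rfl; intros; ring
  rw [this]; ring

noncomputable def Sq {V : Type*} (G : SimpleGraph V) [Fintype V] (e : Sym2 V) : ℚ :=
  Sym2.lift ⟨fun a b => S G a b ^ 2, fun a b => S_symm G a b⟩ e

theorem Sq_mk {V : Type*} (G : SimpleGraph V) [Fintype V] (a b : V) : Sq G s(a, b) = S G a b ^ 2 := rfl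

theorem eDist_lip {V : Type*} {G : SimpleGraph V} (hG : G.Connected) {u v : V} (h : G.Adj u v)
    (f : Sym2 V) : eDist G f u ≤ eDist G f v + 1 := by
  induction f with | _ a b =>
  have h1 : G.dist v u = 1 := by rw [SimpleGraph.dist_eq_one_iff_adj]; exact h.symm
  have ha := hG.dist_triangle (u := a) (v := v) (w := u)
  have hb := hG.dist_triangle (u := b) (v := v) (w := u)
  simp only [eDist, Sym2.lift_mk]
  omega

theorem prod_eq {V : Type*} {G : SimpleGraph V} [Fintype V] (hG : G.Connected) {u v : V}
    (h : G.Adj u v) :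
    ((mCloser G u v : ℚ) + (mEqui G u v : ℚ) / 2) * ((mCloser G v u : ℚ) + (mEqui G u v : ℚ) / 2)
      = ((G.edgeFinset.card : ℚ) ^ 2 - Sq G s(u, v)) / 4 := by
  have h1 : (mCloser G u v : ℚ) = ∑ f ∈ G.edgeFinset, if eDist G f u < eDist G f v then (1:ℚ) else 0 := by
    unfold mCloser; rw [Finset.card_filter]; push_cast; rfl
  have h2 : (mCloser G v u : ℚ) = ∑ f ∈ G.edgeFinset, if eDist G f v < eDist G f u then (1:ℚ) else 0 := by
    unfold mCloser; rw [Finset.card_filter]; push_cast; rfl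
  have h3 : (mEqui G u v : ℚ) = ∑ f ∈ G.edgeFinset, if eDist G f u = eDist G f v then (1:ℚ) else 0 := by
    unfold mEqui; rw [Finset.card_filter]; push_cast; rfl
  have h4 : (mCloser G u v : ℚ) + mCloser G v u + mEqui G u v = G.edgeFinset.card := by
    rw [h1, h2, h3, ← Finset.sum_add_distrib, ← Finset.sum_add_distrib, Finset.card_eq_sum_ones]
    push_cast
    apply Finset.sum_congr rfl
    intro f _
    rcases lt_trichotomy (eDist G f u) (eDist G f v) with h | h | h
    · simp [h, h.not_gt, h.ne]
    · simp [h]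
    · simp [h, h.not_gt, h.ne']
  have h5 : (mCloser G v u : ℚ) - mCloser G u v = S G u v := by
    rw [h1, h2, ← Finset.sum_sub_distrib]
    apply Finset.sum_congr rfl
    intro f _
    have a1 := eDist_lip hG h f
    have a2 := eDist_lip hG h.symm f
    rcases lt_trichotomy (eDist G f u) (eDist G f v) with h | h | h
    · have : eDist G f v = eDist G f u + 1 := by omega
      simp [this]
    · simp [h]
    · have : eDist G f u = eDist G f v + 1 := by omega
      simp [this]
  rw [Sq_mk, ← h5, ← h4]
  ring

theorem sum_adj {V : Type*} (G : SimpleGraph V) [Fintype V] (F : Sym2 V → ℚ) :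
    (∑ u : V, ∑ v : V, if G.Adj u v then F s(u, v) else 0) = 2 * ∑ e ∈ G.edgeFinset, F e := by
  rw [← Finset.sum_product', ← Finset.sum_filter, Finset.mul_sum]
  rw [← Finset.sum_fiberwise_of_maps_to (g := fun p : V × V => s(p.1, p.2)) (t := G.edgeFinset)]
  · apply Finset.sum_congr rfl
    intro e he
    induction e with | _ a b =>
    rw [SimpleGraph.mem_edgeFinset, SimpleGraph.mem_edgeSet] at he
    have : (((univ ×ˢ univ : Finset (V × V)).filter (fun p => G.Adj p.1 p.2)).filter
        (fun p => s(p.1, p.2) = s(a, b))) = {(a, b), (b, a)} := by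
      ext ⟨x, y⟩
      simp only [Finset.mem_filter, Finset.mem_product, Finset.mem_univ, true_and,
        Finset.mem_insert, Finset.mem_singleton, Prod.mk.injEq, Sym2.eq_iff]
      constructor
      · exact fun h => h.2
      · rintro (⟨rfl, rfl⟩ | ⟨rfl, rfl⟩)
        · exact ⟨he, Or.inl ⟨rfl, rfl⟩⟩
        · exact ⟨he.symm, Or.inr ⟨rfl, rfl⟩⟩
    rw [this, Finset.sum_pair]
    · rw [Sym2.eq_swap (a := b)]; ring
    · intro h; simp only [Prod.mk.injEq] at h; exact he.ne h.1
  · intro p hp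
    simpa using hp

theorem szRevE_eq {V : Type*} {G : SimpleGraph V} [Fintype V] (hG : G.Connected) :
    szRevE G = ∑ e ∈ G.edgeFinset, ((G.edgeFinset.card : ℚ) ^ 2 - Sq G e) / 4 := by
  have := sum_adj G (fun e => ((G.edgeFinset.card : ℚ) ^ 2 - Sq G e) / 4)
  unfold szRevE
  have h2 : (∑ e ∈ G.edgeFinset, ((G.edgeFinset.card : ℚ) ^ 2 - Sq G e) / 4) =
    (2 * ∑ e ∈ G.edgeFinset, ((G.edgeFinset.card : ℚ) ^ 2 - Sq G e) / 4) / 2 := by ring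
  rw [h2, ← this]
  congr 1
  apply Finset.sum_congr rfl; intro u _
  apply Finset.sum_congr rfl; intro v _
  split_ifs with h
  · exact prod_eq hG h
  · rfl

/-- bound for an arbitrary edge -/
theorem S_le {V : Type*} {G : SimpleGraph V} [Fintype V] (hG : G.Connected) {u v : V}
    (h : G.Adj u v) : S G u v ≤ (G.edgeFinset.card : ℚ) - 1 ∧
      (S G u v = (G.edgeFinset.card : ℚ) - 1 ↔
        ∀ f ∈ G.edgeFinset, f ≠ s(u, v) → eDist G f u = eDist G f v + 1) := by
  have hm : s(u, v) ∈ G.edgeFinset := by simpa using h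
  have h0 : S G u v = ∑ f ∈ G.edgeFinset.erase s(u, v), ((eDist G f u : ℚ) - eDist G f v) := by
    unfold S
    rw [← Finset.add_sum_erase _ _ hm]
    simp [eDist]
  have h1 : (G.edgeFinset.card : ℚ) - 1 = ∑ f ∈ G.edgeFinset.erase s(u, v), 1 := by
    rw [Finset.sum_const, Finset.card_erase_of_mem hm, nsmul_eq_mul, mul_one,
      Nat.cast_sub (Finset.card_pos.2 ⟨_, hm⟩)]; simp
  have hle : ∀ f ∈ G.edgeFinset.erase s(u, v), ((eDist G f u : ℚ) - eDist G f v) ≤ 1 := by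
    intro f _
    have := eDist_lip hG h f
    have : (eDist G f u : ℚ) ≤ eDist G f v + 1 := by exact_mod_cast this
    linarith
  rw [h0, h1]
  refine ⟨Finset.sum_le_sum hle, ?_⟩
  rw [Finset.sum_eq_sum_iff_of_le hle]
  constructor
  · intro H f hf hne
    have := H f (Finset.mem_erase.2 ⟨hne, hf⟩)
    have : (eDist G f u : ℚ) = eDist G f v + 1 := by linarith
    exact_mod_cast this
  · intro H f hf
    rw [Finset.mem_erase] at hf
    rw [H f hf.2 hf.1]; push_cast; ring

theorem Sq_le {V : Type*} {G : SimpleGraph V} [Fintype V] (hG : G.Connected) {u v : V}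
    (h : G.Adj u v) : Sq G s(u, v) ≤ ((G.edgeFinset.card : ℚ) - 1) ^ 2 ∧
      (Sq G s(u, v) = ((G.edgeFinset.card : ℚ) - 1) ^ 2 ↔
        (∀ f ∈ G.edgeFinset, f ≠ s(u, v) → eDist G f u = eDist G f v + 1) ∨
        (∀ f ∈ G.edgeFinset, f ≠ s(u, v) → eDist G f v = eDist G f u + 1)) := by
  have hm : s(u, v) ∈ G.edgeFinset := by simpa using h
  have hpos : (0:ℚ) ≤ (G.edgeFinset.card : ℚ) - 1 := by
    have : 1 ≤ G.edgeFinset.card := Finset.card_pos.2 ⟨_, hm⟩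
    have : (1:ℚ) ≤ G.edgeFinset.card := by exact_mod_cast this
    linarith
  obtain ⟨h1, h2⟩ := S_le hG h
  obtain ⟨h3, h4⟩ := S_le hG h.symm
  have hs : S G u v = - S G v u := by
    unfold S; rw [← Finset.sum_neg_distrib]; apply Finset.sum_congr rfl; intros; ring
  rw [Sq_mk]
  refine ⟨by nlinarith, ?_⟩
  rw [sq_eq_sq_iff_eq_or_eq_neg, h2, hs, neg_inj, h4, Sym2.eq_swap (a := v)]

end Bnd

namespace Bnd

/-- edges of a parametrized cycle -/
def cE {V : Type*} {L : ℕ} (c : ZMod L → V) (z : ZMod L) : Sym2 V := s(c z, c (z + 1))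

noncomputable def ES {V : Type*} {L : ℕ} [NeZero L] (c : ZMod L → V) : Finset (Sym2 V) :=
  Finset.univ.image (cE c)

structure IsCyc {V : Type*} (G : SimpleGraph V) {L : ℕ} [NeZero L] (c : ZMod L → V) : Prop where
  inj : Function.Injective c
  adj : ∀ z, G.Adj (c z) (c (z + 1))
  sep : ∀ x y, (G.deleteEdges (ES c : Set (Sym2 V))).Reachable (c x) (c y) → x = y

def cyc {L : ℕ} (z : ZMod L) : ℕ := z.valMinAbs.natAbs

theorem mem_ES {V : Type*} {L : ℕ} [NeZero L] {c : ZMod L → V} {e : Sym2 V} :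
    e ∈ ES c ↔ ∃ z, cE c z = e := by simp [ES]

theorem mem_of_mem_ES {V : Type*} {L : ℕ} [NeZero L] {c : ZMod L → V} {u v : V}
    (h : s(u, v) ∈ ES c) : ∃ z, c z = u ∧ (c (z + 1) = v ∨ c (z - 1) = v) := by
  obtain ⟨z, hz⟩ := mem_ES.1 h
  rw [cE, Sym2.eq_iff] at hz
  rcases hz with ⟨h1, h2⟩ | ⟨h1, h2⟩
  · exact ⟨z, h1, Or.inl h2⟩
  · exact ⟨z + 1, h2, Or.inr (by simpa using h1)⟩

theorem exists_proj {V : Type*} {G : SimpleGraph V} (hG : G.Connected) {L : ℕ} [NeZero L]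
    {c : ZMod L → V} (hc : IsCyc G c) :
    ∃ p : V → ZMod L, (∀ z, p (c z) = z) ∧
      (∀ u v, G.Adj u v → s(u, v) ∉ ES c → p u = p v) := by
  have hex : ∀ x, ∃ z, (G.deleteEdges (ES c : Set (Sym2 V))).Reachable x (c z) := by
    intro x
    obtain ⟨w⟩ := hG.preconnected x (c 0)
    generalize hy : c 0 = y at w
    induction w with
    | nil => exact ⟨0, by rw [hy]⟩
    | @cons u v w h q ih =>
      obtain ⟨z, hz⟩ := ih hy
      by_cases hm : s(u, v) ∈ ES c
      · obtain ⟨z', hz', _⟩ := mem_of_mem_ES hm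
        exact ⟨z', by rw [hz']⟩
      · refine ⟨z, SimpleGraph.Reachable.trans (SimpleGraph.Adj.reachable ?_) hz⟩
        rw [SimpleGraph.deleteEdges_adj]
        exact ⟨h, by simpa using hm⟩
  choose p hp using hex
  refine ⟨p, fun z => (hc.sep _ _ (hp (c z))).symm, fun u v h hm => ?_⟩
  have : (G.deleteEdges (ES c : Set (Sym2 V))).Adj u v := by
    rw [SimpleGraph.deleteEdges_adj]
    exact ⟨h, by simpa using hm⟩
  exact hc.sep _ _ ((hp u).symm.trans (this.reachable.trans (hp v)))

theorem lip_dist {V : Type*} {G : SimpleGraph V} (hG : G.Connected) (F : V → ℕ)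
    (hF : ∀ u v, G.Adj u v → F u ≤ F v + 1) (x y : V) : F x ≤ F y + G.dist x y := by
  obtain ⟨w, hw⟩ := hG.exists_walk_length_eq_dist x y
  rw [← hw]
  clear hw
  induction w with
  | nil => simp
  | cons h q ih =>
    have := hF _ _ h
    rw [SimpleGraph.Walk.length_cons]; omega

theorem cyc_neg {L : ℕ} (z : ZMod L) : cyc (-z) = cyc z := ZMod.natAbs_valMinAbs_neg z

theorem cyc_one {L : ℕ} [NeZero L] : cyc (1 : ZMod L) ≤ 1 := by
  rw [cyc, ZMod.valMinAbs_natAbs_eq_min]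
  have : (1 : ZMod L).val ≤ 1 := by
    rw [ZMod.val_one_eq_one_mod]; exact Nat.mod_le _ _
  omega

theorem cyc_add {L : ℕ} (a b : ZMod L) : cyc (a + b) ≤ cyc a + cyc b :=
  (ZMod.natAbs_valMinAbs_add_le a b).trans (Int.natAbs_add_le _ _)

theorem cyc_zero {L : ℕ} : cyc (0 : ZMod L) = 0 := by simp [cyc]

theorem cyc_eq_zero {L : ℕ} {z : ZMod L} : cyc z = 0 ↔ z = 0 := by
  simp [cyc, ZMod.valMinAbs_eq_zero]

theorem dist_walk_le {V : Type*} {G : SimpleGraph V} (hG : G.Connected) {L : ℕ} [NeZero L]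
    {c : ZMod L → V} (hc : IsCyc G c) (i : ZMod L) (n : ℕ) : G.dist (c i) (c (i + n)) ≤ n := by
  induction n with
  | zero => simp
  | succ n ih =>
    have h1 := hG.dist_triangle (u := c i) (v := c (i + n)) (w := c (i + (n + 1 : ℕ)))
    have h2 : G.dist (c (i + n)) (c (i + (n + 1 : ℕ))) = 1 := by
      rw [SimpleGraph.dist_eq_one_iff_adj]
      have := hc.adj (i + n)
      rwa [add_assoc, show ((n : ZMod L) + 1) = ((n + 1 : ℕ) : ZMod L) by push_cast; rfl] at this
    omega

theorem dist_cyc {V : Type*} {G : SimpleGraph V} (hG : G.Connected) {L : ℕ} [NeZero L]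
    {c : ZMod L → V} (hc : IsCyc G c) (i j : ZMod L) : G.dist (c i) (c j) = cyc (i - j) := by
  apply le_antisymm
  · rw [cyc, ZMod.valMinAbs_natAbs_eq_min]
    apply le_min
    · have := dist_walk_le hG hc j (i - j).val
      rw [ZMod.natCast_zmod_val, add_sub_cancel, SimpleGraph.dist_comm] at this
      exact this
    · have := dist_walk_le hG hc i (L - (i - j).val)
      rw [Nat.cast_sub (ZMod.val_lt _).le, ZMod.natCast_zmod_val, ZMod.natCast_self] at this
      convert this using 2
      congr 1; ring
  · obtain ⟨p, hp1, hp2⟩ := exists_proj hG hc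
    have := lip_dist hG (fun y => cyc (p y - j)) ?_ (c i) (c j)
    · simpa [hp1, cyc_zero] using this
    · intro u v h
      by_cases hm : s(u, v) ∈ ES c
      · obtain ⟨z, rfl, rfl | rfl⟩ := mem_of_mem_ES hm
        · simp only [hp1]
          have := cyc_add (z + 1 - j) (-1)
          rw [cyc_neg] at this
          have h1 := cyc_one (L := L)
          rw [show z + 1 - j + -1 = z - j by ring] at this
          omega
        · simp only [hp1]
          have := cyc_add (z - 1 - j) (1)
          have h1 := cyc_one (L := L)
          rw [show z - 1 - j + 1 = z - j by ring] at this
          omega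
      · simp only [hp2 u v h hm]; omega

theorem gate {V : Type*} {G : SimpleGraph V} (hG : G.Connected) {L : ℕ} [NeZero L]
    {c : ZMod L → V} {p : V → ZMod L} (hp1 : ∀ z, p (c z) = z)
    (hp2 : ∀ u v, G.Adj u v → s(u, v) ∉ ES c → p u = p v) (x : V) (z : ZMod L) :
    G.dist x (c z) = G.dist x (c (p x)) + G.dist (c (p x)) (c z) := by
  apply le_antisymm hG.dist_triangle
  obtain ⟨w, hw⟩ := hG.exists_walk_length_eq_dist x (c z)
  have key : ∀ (x y : V) (w : G.Walk x y), y = c z → c (p x) ∈ w.support := by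
    intro x y w
    induction w with
    | nil => rintro rfl; simp [hp1]
    | @cons u v y h q ih =>
      intro hy
      rw [SimpleGraph.Walk.support_cons, List.mem_cons]
      by_cases hm : s(u, v) ∈ ES c
      · obtain ⟨z', rfl, _⟩ := mem_of_mem_ES hm
        left; rw [hp1]
      · right; rw [hp2 u v h hm]; exact ih hy
  have hs := key x _ w rfl
  rw [← hw, ← congrArg SimpleGraph.Walk.length (w.take_spec hs), SimpleGraph.Walk.length_append]
  exact add_le_add (SimpleGraph.dist_le _) (SimpleGraph.dist_le _)

theorem exists_gate {V : Type*} {G : SimpleGraph V} [Fintype V] (hG : G.Connected) {L : ℕ} [NeZero L]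
    {c : ZMod L → V} (hc : IsCyc G c) :
    ∃ q : Sym2 V → ZMod L, ∀ f ∈ G.edgeFinset \ ES c,
      (∃ K, ∀ z, eDist G f (c z) = K + cyc (z - q f)) ∧ ∀ z, c z ∈ f → z = q f := by
  obtain ⟨p, hp1, hp2⟩ := exists_proj hG hc
  have : ∀ f, ∃ q : ZMod L, f ∈ G.edgeFinset \ ES c → 
      (∃ K, ∀ z, eDist G f (c z) = K + cyc (z - q)) ∧ ∀ z, c z ∈ f → z = q := by
    intro f
    induction f with | _ a b =>
    refine ⟨p a, fun hf => ?_⟩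
    rw [Finset.mem_sdiff, SimpleGraph.mem_edgeFinset, SimpleGraph.mem_edgeSet] at hf
    have hab := hp2 a b hf.1 hf.2
    refine ⟨⟨eDist G s(a, b) (c (p a)), fun z => ?_⟩, fun z hz => ?_⟩
    · simp only [eDist, Sym2.lift_mk]
      rw [gate hG hp1 hp2 a z, gate hG hp1 hp2 b z, ← hab, dist_cyc hG hc, ← cyc_neg, neg_sub]
      omega
    · rw [Sym2.mem_iff] at hz
      rcases hz with h | h
      · rw [← h, hp1]
      · rw [hab, ← h, hp1]
  choose q hq using this
  exact ⟨q, hq⟩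

theorem two_ne {L : ℕ} (hL : 3 ≤ L) : (2 : ZMod L) ≠ 0 := by
  intro h
  have : ((2 : ℕ) : ZMod L) = 0 := by exact_mod_cast h
  rw [ZMod.natCast_eq_zero_iff] at this
  exact absurd (Nat.le_of_dvd (by norm_num) this) (by omega)

theorem cE_inj {V : Type*} {L : ℕ} (hL : 3 ≤ L) {c : ZMod L → V} (hc : Function.Injective c) :
    Function.Injective (cE c) := by
  intro a b h
  rw [cE, cE, Sym2.eq_iff] at h
  rcases h with ⟨h1, _⟩ | ⟨h1, h2⟩
  · exact hc h1
  · have h1 := hc h1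
    have h2 := hc h2
    exfalso
    apply two_ne hL
    have : a = a + 1 + 1 := by rw [h2]; exact h1
    have h3 : a + 2 = a + 0 := by rw [add_zero]; nth_rewrite 2 [this]; ring
    exact add_left_cancel h3

theorem card_ES {V : Type*} {L : ℕ} [NeZero L] (hL : 3 ≤ L) {c : ZMod L → V}
    (hc : Function.Injective c) : (ES c).card = L := by
  rw [ES, Finset.card_image_of_injective _ (cE_inj hL hc), Finset.card_univ, ZMod.card]

theorem ES_sub {V : Type*} {G : SimpleGraph V} [Fintype V] {L : ℕ} [NeZero L]
    {c : ZMod L → V} (hadj : ∀ z, G.Adj (c z) (c (z + 1))) : ES c ⊆ G.edgeFinset := by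
  intro e he
  obtain ⟨z, rfl⟩ := mem_ES.1 he
  simpa [cE] using hadj z

theorem sum_in {V : Type*} {G : SimpleGraph V} (hG : G.Connected) {L : ℕ} [NeZero L]
    (hL : 3 ≤ L) {c : ZMod L → V} (hc : IsCyc G c) (z z' : ZMod L) :
    ∑ f ∈ ES c, ((eDist G f (c z) : ℚ) - eDist G f (c z')) = 0 := by
  have key : ∀ z, ∑ f ∈ ES c, (eDist G f (c z) : ℚ) =
      ∑ w : ZMod L, ((min (cyc w) (cyc (w + 1)) : ℕ) : ℚ) := by
    intro z
    rw [ES, Finset.sum_image (fun a _ b _ h => cE_inj hL hc.inj h)]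
    apply Fintype.sum_equiv (Equiv.subRight z)
    intro w
    simp only [cE, eDist, Sym2.lift_mk, Equiv.subRight_apply]
    rw [dist_cyc hG hc, dist_cyc hG hc, show w + 1 - z = w - z + 1 by ring]
  rw [Finset.sum_sub_distrib, key, key, sub_self]

theorem sum_sq {L : ℕ} [NeZero L] (hL : 3 ≤ L) :
    ∑ z : ZMod L, ((cyc z : ℚ) - cyc (z + 1)) ^ 2 = L - if Odd L then 1 else 0 := by
  have key : ∀ z : ZMod L, ((cyc z : ℚ) - cyc (z + 1)) ^ 2 = 1 - if 2 * z.val + 1 = L then 1 else 0 := by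
    intro z
    have hlt := ZMod.val_lt z
    have h1 : (z + 1).val = if z.val + 1 = L then 0 else z.val + 1 := by
      rw [ZMod.val_add, ZMod.val_one_eq_one_mod, Nat.mod_eq_of_lt (show 1 < L by omega)]
      split_ifs with h
      · rw [h, Nat.mod_self]
      · exact Nat.mod_eq_of_lt (by omega)
    have h2 : cyc z = min z.val (L - z.val) := ZMod.valMinAbs_natAbs_eq_min z
    have h3 : cyc (z + 1) = min (z + 1).val (L - (z + 1).val) := ZMod.valMinAbs_natAbs_eq_min _
    rw [h1] at h3
    rcases lt_trichotomy (2 * z.val + 1) L with h | h | h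
    · have : cyc (z + 1) = cyc z + 1 := by
        rw [h2, h3]; split_ifs <;> omega
      rw [this, if_neg h.ne]; push_cast; ring
    · have : cyc (z + 1) = cyc z := by
        rw [h2, h3]; split_ifs <;> omega
      rw [this, if_pos h]; simp
    · have : cyc z = cyc (z + 1) + 1 := by
        rw [h2, h3]; split_ifs <;> omega
      rw [this, if_neg h.ne']; push_cast; ring
  rw [Finset.sum_congr rfl (fun z _ => key z), Finset.sum_sub_distrib]
  congr 1
  · simp [ZMod.card]
  · split_ifs with hodd
    · obtain ⟨r, hr⟩ := hodd
      rw [Finset.sum_eq_single ((r : ℕ) : ZMod L)]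
      · rw [ZMod.val_natCast, Nat.mod_eq_of_lt (by omega), if_pos hr.symm]
      · intro b _ hb
        rw [if_neg]
        intro h
        apply hb
        rw [← ZMod.natCast_zmod_val b]
        congr 1; omega
      · simp
    · apply Finset.sum_eq_zero
      intro z _
      rw [if_neg]
      intro h
      exact hodd ⟨z.val, h.symm⟩

theorem cs_id {α : Type*} (O : Finset α) (s : α → ℚ) :
    (∑ f ∈ O, s f) ^ 2 = (O.card : ℚ) * ∑ f ∈ O, s f ^ 2 -
      (∑ f ∈ O, ∑ f' ∈ O, (s f - s f') ^ 2) / 2 := by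
  have : ∑ f ∈ O, ∑ f' ∈ O, (s f - s f') ^ 2 =
      2 * ((O.card : ℚ) * ∑ f ∈ O, s f ^ 2) - 2 * (∑ f ∈ O, s f) ^ 2 := by
    have h : ∀ f f', (s f - s f') ^ 2 = s f ^ 2 + s f' ^ 2 - 2 * (s f * s f') := by intros; ring
    simp only [h, Finset.sum_sub_distrib, Finset.sum_add_distrib, Finset.sum_const, nsmul_eq_mul,
      ← Finset.mul_sum, ← Finset.sum_mul]
    ring
  rw [this]; ring

theorem cycle_sum {V : Type*} {G : SimpleGraph V} [Fintype V] (hG : G.Connected) {L : ℕ} [NeZero L]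
    (hL : 3 ≤ L) {c : ZMod L → V} (hc : IsCyc G c) :
    ∑ e ∈ ES c, Sq G e = ((L : ℚ) - if Odd L then 1 else 0) * ((G.edgeFinset.card : ℚ) - L) ^ 2 -
      (∑ z : ZMod L, ∑ f ∈ G.edgeFinset \ ES c, ∑ f' ∈ G.edgeFinset \ ES c,
        (((eDist G f (c z) : ℚ) - eDist G f (c (z + 1))) -
          ((eDist G f' (c z) : ℚ) - eDist G f' (c (z + 1)))) ^ 2) / 2 := by
  have hsub := ES_sub hc.adj
  have hcard : ((G.edgeFinset \ ES c).card : ℚ) = (G.edgeFinset.card : ℚ) - L := by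
    rw [Finset.card_sdiff_of_subset hsub, Nat.cast_sub (Finset.card_le_card hsub), card_ES hL hc.inj]
  obtain ⟨q, hq⟩ := exists_gate hG hc
  rw [show ES c = Finset.univ.image (cE c) from rfl,
    Finset.sum_image (fun a _ b _ h => cE_inj hL hc.inj h), 
    show Finset.univ.image (cE c) = ES c from rfl]
  have h1 : ∀ z, Sq G (cE c z) = (∑ f ∈ G.edgeFinset \ ES c,
      ((eDist G f (c z) : ℚ) - eDist G f (c (z + 1)))) ^ 2 := by
    intro z
    rw [cE, Sq_mk, S, ← Finset.sum_sdiff hsub, sum_in hG hL hc, add_zero]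
  rw [Finset.sum_congr rfl (fun z _ => (h1 z).trans (cs_id _ _)), Finset.sum_sub_distrib,
    ← Finset.sum_div, ← Finset.mul_sum, hcard]
  congr 1
  rw [Finset.sum_comm]
  have h2 : ∀ f ∈ G.edgeFinset \ ES c, 
      ∑ z, ((eDist G f (c z) : ℚ) - eDist G f (c (z + 1))) ^ 2 = L - if Odd L then 1 else 0 := by
    intro f hf
    obtain ⟨⟨K, hK⟩, _⟩ := hq f hf
    rw [← sum_sq hL]
    apply Fintype.sum_equiv (Equiv.subRight (q f))
    intro z
    rw [hK, hK, Equiv.subRight_apply, show z + 1 - q f = z - q f + 1 by ring]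
    push_cast; ring
  rw [Finset.sum_congr rfl h2, Finset.sum_const, nsmul_eq_mul, hcard]
  ring

end Bnd

namespace Bnd

/-- the deficit of a cycle -/
noncomputable def Df {V : Type*} (G : SimpleGraph V) [Fintype V] {L : ℕ} [NeZero L]
    (c : ZMod L → V) : ℚ :=
  ∑ z : ZMod L, ∑ f ∈ G.edgeFinset \ ES c, ∑ f' ∈ G.edgeFinset \ ES c,
        (((eDist G f (c z) : ℚ) - eDist G f (c (z + 1))) -
          ((eDist G f' (c z) : ℚ) - eDist G f' (c (z + 1)))) ^ 2

theorem Df_nonneg {V : Type*} (G : SimpleGraph V) [Fintype V] {L : ℕ} [NeZero L]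
    (c : ZMod L → V) : 0 ≤ Df G c := by
  unfold Df; positivity

theorem Df_eq_zero {V : Type*} (G : SimpleGraph V) [Fintype V] {L : ℕ} [NeZero L]
    (c : ZMod L → V) : Df G c = 0 ↔ ∀ z, ∀ f ∈ G.edgeFinset \ ES c, ∀ f' ∈ G.edgeFinset \ ES c,
        ((eDist G f (c z) : ℚ) - eDist G f (c (z + 1))) =
          ((eDist G f' (c z) : ℚ) - eDist G f' (c (z + 1))) := by
  unfold Df
  rw [Finset.sum_eq_zero_iff_of_nonneg (fun _ _ => by positivity)]
  constructor
  · intro h z f hf f' hf'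
    have h1 := h z (Finset.mem_univ _)
    rw [Finset.sum_eq_zero_iff_of_nonneg (fun _ _ => by positivity)] at h1
    have h2 := h1 f hf
    rw [Finset.sum_eq_zero_iff_of_nonneg (fun _ _ => by positivity)] at h2
    have h3 := h2 f' hf'
    exact sub_eq_zero.1 (pow_eq_zero_iff (two_ne_zero)|>.1 h3)
  · intro h z _
    apply Finset.sum_eq_zero; intro f hf
    apply Finset.sum_eq_zero; intro f' hf'
    rw [h z f hf f' hf', sub_self]; norm_num

theorem frame {V : Type*} {G : SimpleGraph V} [Fintype V] (hG : G.Connected) {k : ℕ}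
    {mvec : Fin k → ℕ} [∀ i, NeZero (mvec i)] (hge : ∀ i, 3 ≤ mvec i)
    {c : ∀ i, ZMod (mvec i) → V} (hc : ∀ i, IsCyc G (c i))
    (hd : ∀ i j, i ≠ j → Disjoint (ES (c i)) (ES (c j))) (m : ℕ) (hm : G.edgeFinset.card = m)
    (R : ℚ) (hR : R = (2 * (m : ℚ) ^ 2 - m) / 4 + ((m : ℚ) - 1) ^ 2 * (∑ i, (mvec i : ℚ)) / 4 -
      (∑ i, ((mvec i : ℚ) - if Odd (mvec i) then 1 else 0) * ((m : ℚ) - mvec i) ^ 2) / 4) :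
    R ≤ szRevE G ∧ (szRevE G = R ↔ (∀ i, Df G (c i) = 0) ∧
      ∀ e ∈ G.edgeFinset, (∀ i, e ∉ ES (c i)) → Sq G e = ((m : ℚ) - 1) ^ 2) := by
  set U := (Finset.univ : Finset (Fin k)).biUnion (fun i => ES (c i)) with hU
  have hUsub : U ⊆ G.edgeFinset := by
    intro e he
    rw [hU, Finset.mem_biUnion] at he
    obtain ⟨i, _, hi⟩ := he
    exact ES_sub (hc i).adj hi
  have hpd : Set.PairwiseDisjoint ((Finset.univ : Finset (Fin k)) : Set (Fin k))
      (fun i => ES (c i)) := fun i _ j _ hij => hd i j hij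
  have hUc : (U.card : ℚ) = ∑ i, (mvec i : ℚ) := by
    rw [hU, Finset.card_biUnion hpd]
    push_cast
    exact Finset.sum_congr rfl (fun i _ => by rw [card_ES (hge i) (hc i).inj])
  have hOc : ((G.edgeFinset \ U).card : ℚ) = m - ∑ i, (mvec i : ℚ) := by
    rw [Finset.card_sdiff_of_subset hUsub, Nat.cast_sub (Finset.card_le_card hUsub), hUc, hm]
  have hUs : ∑ e ∈ U, Sq G e = ∑ i, (((mvec i : ℚ) - if Odd (mvec i) then 1 else 0) *
      ((m : ℚ) - mvec i) ^ 2 - Df G (c i) / 2) := by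
    rw [hU, Finset.sum_biUnion hpd]
    refine Finset.sum_congr rfl (fun i _ => ?_)
    rw [cycle_sum hG (hge i) (hc i), hm]; rfl
  have hsz : szRevE G = R + ((∑ e ∈ G.edgeFinset \ U, (((m : ℚ) - 1) ^ 2 - Sq G e)) / 4 +
      (∑ i, Df G (c i)) / 8) := by
    rw [szRevE_eq hG, ← Finset.sum_div, Finset.sum_sub_distrib, ← Finset.sum_sdiff hUsub (f := Sq G),
      hUs, Finset.sum_const, nsmul_eq_mul, hm, hR, Finset.sum_sub_distrib, Finset.sum_sub_distrib,
      Finset.sum_const, nsmul_eq_mul, hOc, ← Finset.sum_div]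
    ring
  have hle : ∀ e ∈ G.edgeFinset \ U, 0 ≤ ((m : ℚ) - 1) ^ 2 - Sq G e := by
    intro e he
    rw [Finset.mem_sdiff] at he
    have := he.1
    induction e with | _ a b =>
    rw [SimpleGraph.mem_edgeFinset, SimpleGraph.mem_edgeSet] at this
    have := (Sq_le hG this).1
    rw [hm] at this
    linarith
  have h1 := Finset.sum_nonneg hle
  have h2 : 0 ≤ ∑ i, Df G (c i) := Finset.sum_nonneg (fun i _ => Df_nonneg G (c i))
  refine ⟨by rw [hsz]; linarith, ?_⟩
  have h3 : szRevE G = R ↔ (∑ i, Df G (c i)) = 0 ∧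
      (∑ e ∈ G.edgeFinset \ U, (((m : ℚ) - 1) ^ 2 - Sq G e)) = 0 := by
    rw [hsz]
    constructor
    · intro h; constructor <;> linarith
    · rintro ⟨h, h'⟩; rw [h, h']; ring
  rw [h3, Finset.sum_eq_zero_iff_of_nonneg (fun i _ => Df_nonneg G (c i)),
    Finset.sum_eq_zero_iff_of_nonneg hle]
  simp only [Finset.mem_univ, true_implies, Finset.mem_sdiff, hU, Finset.mem_biUnion, true_and,
    not_exists, and_imp, sub_eq_zero]
  refine and_congr Iff.rfl ⟨fun h e he hi => (h e he hi).symm, fun h e he hi => (h e he hi).symm⟩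

theorem eDist_zero {V : Type*} {G : SimpleGraph V} (hG : G.Connected) {f : Sym2 V} {x : V} :
    eDist G f x = 0 ↔ x ∈ f := by
  induction f with | _ a b =>
  simp only [eDist, Sym2.lift_mk, Sym2.mem_iff]
  have h1 := hG.dist_eq_zero_iff (u := a) (v := x)
  have h2 := hG.dist_eq_zero_iff (u := b) (v := x)
  rw [eq_comm (a := x), eq_comm (a := x), ← h1, ← h2]
  omega

theorem desc {V : Type*} {G : SimpleGraph V} (hG : G.Connected) {f : Sym2 V} {x : V}
    (h : 0 < eDist G f x) : ∃ y, G.Adj x y ∧ eDist G f y < eDist G f x := by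
  have key : ∀ a, 0 < G.dist a x → ∃ y, G.Adj x y ∧ G.dist a y < G.dist a x := by
    intro a ha
    obtain ⟨w, hw⟩ := hG.exists_walk_length_eq_dist x a
    rw [SimpleGraph.dist_comm] at ha
    cases w with
    | nil => simp at ha
    | @cons _ y _ hxy q =>
      refine ⟨y, hxy, ?_⟩
      have := SimpleGraph.dist_le q
      rw [SimpleGraph.dist_comm (u := a), SimpleGraph.dist_comm (u := a), ← hw,
        SimpleGraph.Walk.length_cons]
      omega
  induction f with | _ a b =>
  simp only [eDist, Sym2.lift_mk] at h ⊢
  rcases le_total (G.dist a x) (G.dist b x) with hle | hle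
  · obtain ⟨y, h1, h2⟩ := key a (by omega)
    exact ⟨y, h1, by omega⟩
  · obtain ⟨y, h1, h2⟩ := key b (by omega)
    exact ⟨y, h1, by omega⟩

theorem Df_zero_imp {V : Type*} {G : SimpleGraph V} [Fintype V] (hG : G.Connected) {L : ℕ} [NeZero L]
    {c : ZMod L → V} (hc : IsCyc G c) (h : Df G c = 0) :
    ∃ z0, ∀ z, z ≠ z0 → ∀ y, G.Adj (c z) y → s(c z, y) ∈ ES c := by
  rw [Df_eq_zero] at h
  obtain ⟨q, hq⟩ := exists_gate hG hc
  have key : ∀ f ∈ G.edgeFinset \ ES c, ∀ f' ∈ G.edgeFinset \ ES c, q f = q f' := by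
    intro f hf f' hf'
    have h1 : ∀ n : ℕ, ((eDist G f (c 0) : ℚ) - eDist G f (c n)) =
          ((eDist G f' (c 0) : ℚ) - eDist G f' (c n)) := by
      intro n
      induction n with
      | zero => simp
      | succ n ih =>
        have := h n f hf f' hf'
        push_cast
        linarith
    have h2 : ∀ z, ((eDist G f (c 0) : ℚ) - eDist G f (c z)) =
          ((eDist G f' (c 0) : ℚ) - eDist G f' (c z)) := by
      intro z
      have := h1 z.val
      rwa [ZMod.natCast_zmod_val] at this
    obtain ⟨⟨K, hK⟩, _⟩ := hq f hf
    obtain ⟨⟨K', hK'⟩, _⟩ := hq f' hf'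
    have h3 := h2 (q f)
    have h4 := h2 (q f')
    simp only [hK, hK', sub_self, cyc_zero] at h3 h4
    have h5 : (cyc (q f' - q f) : ℚ) + cyc (q f - q f') = 0 := by
      push_cast at h3 h4; linarith
    have h6 : cyc (q f' - q f) + cyc (q f - q f') = 0 := by exact_mod_cast h5
    have h7 : cyc (q f - q f') = 0 := by omega
    rw [cyc_eq_zero] at h7
    exact sub_eq_zero.1 h7
  by_cases hO : (G.edgeFinset \ ES c).Nonempty
  · obtain ⟨f0, hf0⟩ := hO
    refine ⟨q f0, fun z hz y hy => ?_⟩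
    by_contra hn
    have hf : s(c z, y) ∈ G.edgeFinset \ ES c := by
      rw [Finset.mem_sdiff]; exact ⟨by simpa using hy, hn⟩
    apply hz
    rw [key f0 hf0 _ hf]
    exact (hq _ hf).2 z (by simp)
  · refine ⟨0, fun z _ y hy => ?_⟩
    by_contra hn
    exact hO ⟨s(c z, y), by rw [Finset.mem_sdiff]; exact ⟨by simpa using hy, hn⟩⟩

theorem sep_of_closed {V : Type*} {G : SimpleGraph V} {L : ℕ} [NeZero L]
    {c : ZMod L → V} (hinj : Function.Injective c) (hadj : ∀ z, G.Adj (c z) (c (z + 1)))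
    (z0 : ZMod L) (h : ∀ z, z ≠ z0 → ∀ y, G.Adj (c z) y → s(c z, y) ∈ ES c) : IsCyc G c := by
  refine ⟨hinj, hadj, ?_⟩
  have key : ∀ x y, x ≠ z0 → (G.deleteEdges (ES c : Set (Sym2 V))).Reachable (c x) (c y) → x = y := by
    rintro x y hx ⟨w⟩
    generalize hu : c x = u at w
    generalize hv : c y = v at w
    cases w with
    | nil => exact hinj (hu.trans hv.symm)
    | cons hw _ =>
      rw [SimpleGraph.deleteEdges_adj] at hw
      subst hu
      exact absurd (h x hx _ hw.1) (by simpa using hw.2)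
  intro x y hr
  by_cases hx : x = z0
  · by_cases hy : y = z0
    · rw [hx, hy]
    · exact (key y x hy hr.symm).symm
  · exact key x y hx hr

theorem Df_zero_of {V : Type*} {G : SimpleGraph V} [Fintype V] (hG : G.Connected) {L : ℕ} [NeZero L]
    {c : ZMod L → V} (hc : IsCyc G c)
    (z0 : ZMod L) (h : ∀ z, z ≠ z0 → ∀ y, G.Adj (c z) y → s(c z, y) ∈ ES c) : Df G c = 0 := by
  obtain ⟨q, hq⟩ := exists_gate hG hc
  have key : ∀ f ∈ G.edgeFinset \ ES c, q f = z0 := by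
    intro f hf
    by_contra hne
    obtain ⟨⟨K, hK⟩, _⟩ := hq f hf
    have hK0 := hK (q f)
    rw [sub_self, cyc_zero, add_zero] at hK0
    rcases Nat.eq_zero_or_pos K with h0 | h0
    · rw [h0, eDist_zero hG] at hK0
      rw [Finset.mem_sdiff] at hf
      obtain ⟨y, hy⟩ := hK0
      apply hf.2
      rw [hy]
      apply h _ hne
      have := hf.1
      rw [hy] at this
      simpa using this
    · obtain ⟨y, hy1, hy2⟩ := desc hG (hK0 ▸ h0)
      obtain ⟨z, hz1, hz2⟩ := mem_of_mem_ES (h _ hne y hy1)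
      have : eDist G f y ≥ K := by
        rcases hz2 with rfl | rfl <;> rw [hK] <;> omega
      omega
  rw [Df_eq_zero]
  intro z f hf f' hf'
  obtain ⟨⟨K, hK⟩, _⟩ := hq f hf
  obtain ⟨⟨K', hK'⟩, _⟩ := hq f' hf'
  rw [hK, hK, hK', hK', key f hf, key f' hf']
  push_cast; ring

theorem leaf_iff {V : Type*} {G : SimpleGraph V} [Fintype V] (hG : G.Connected) {u v : V}
    (h : G.Adj u v) : (∀ f ∈ G.edgeFinset, f ≠ s(u, v) → eDist G f u = eDist G f v + 1) ↔
      ∀ y, G.Adj u y → y = v := by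
  constructor
  · intro H y hy
    by_contra hne
    have := H s(u, y) (by simpa using hy) (by
      intro he
      rw [Sym2.eq_iff] at he
      rcases he with ⟨_, h1⟩ | ⟨h1, h2⟩
      · exact hne h1
      · exact h.ne h1)
    have h0 := (eDist_zero hG (f := s(u, y)) (x := u)).2 (by simp)
    omega
  · intro H f hf hne
    have h1 := eDist_lip hG h f
    have h0 : 0 < eDist G f u := by
      rw [Nat.pos_iff_ne_zero, Ne, eDist_zero hG]
      rintro ⟨y, rfl⟩
      apply hne
      rw [H y (by simpa using hf)]
    obtain ⟨y, hy1, hy2⟩ := desc hG h0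
    rw [H y hy1] at hy2
    omega

theorem Sq_leaf {V : Type*} {G : SimpleGraph V} [Fintype V] (hG : G.Connected) {u v : V}
    (h : G.Adj u v) : Sq G s(u, v) = ((G.edgeFinset.card : ℚ) - 1) ^ 2 ↔
      (∀ y, G.Adj u y → y = v) ∨ (∀ y, G.Adj v y → y = u) := by
  rw [(Sq_le hG h).2, leaf_iff hG h, ← leaf_iff hG h.symm, Sym2.eq_swap (a := v)]

def HubOf {V : Type*} (G : SimpleGraph V) (B : Finset (Sym2 V)) (h : V) : Prop :=
  (∃ e ∈ B, h ∈ e) ∧ ∀ e ∈ B, ∀ x ∈ e, x ≠ h → ∀ y, G.Adj x y → s(x, y) ∈ B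

theorem hub_unique {V : Type*} {G : SimpleGraph V} [Fintype V] (hG : G.Connected)
    (Bl : Set (Finset (Sym2 V))) (hsub : ∀ B ∈ Bl, B ⊆ G.edgeFinset)
    (hdj : ∀ B ∈ Bl, ∀ B' ∈ Bl, ∀ e ∈ B, e ∈ B' → B = B')
    (hcov : ∀ e ∈ G.edgeFinset, ∃ B ∈ Bl, e ∈ B)
    (hub : ∀ B ∈ Bl, ∃ h, HubOf G B h) : ∃ h, ∀ B ∈ Bl, HubOf G B h := by
  have := hG.nonempty
  choose! H hH using hub
  rcases Set.eq_empty_or_nonempty Bl with rfl | ⟨B0, hB0⟩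
  · obtain ⟨x⟩ := hG.nonempty
    exact ⟨x, by simp⟩
  have step : ∀ x B, (x = H B0 ∨ ∃ B1 ∈ Bl, H B1 = H B0 ∧ ∃ e ∈ B1, x ∈ e) → B ∈ Bl →
      ∀ e ∈ B, x ∈ e → H B = H B0 := by
    intro x B hx hB e he hxe
    by_cases hxh : x = H B0
    · by_contra hne
      obtain ⟨e0, he0, h0⟩ := (hH B0 hB0).1
      obtain ⟨y, hy⟩ := h0
      have hadj : G.Adj (H B0) y := by
        have := hsub B0 hB0 he0
        rw [hy] at this
        simpa using this
      have := (hH B hB).2 e he x hxe (by rw [hxh]; exact fun h => hne h.symm) y (hxh ▸ hadj)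
      rw [hxh, ← hy] at this
      exact hne (by rw [hdj B hB B0 hB0 e0 this he0])
    · obtain ⟨B1, hB1, h1, e1, he1, hx1⟩ := hx.resolve_left hxh
      obtain ⟨y, hy⟩ := hxe
      have hadj : G.Adj x y := by
        have := hsub B hB he
        rw [hy] at this
        simpa using this
      have := (hH B1 hB1).2 e1 he1 x hx1 (by rw [h1]; exact hxh) y hadj
      rw [← hy] at this
      rw [hdj B hB B1 hB1 e he this, h1]
  have all : ∀ x, (x = H B0 ∨ ∃ B1 ∈ Bl, H B1 = H B0 ∧ ∃ e ∈ B1, x ∈ e) := by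
    intro x
    obtain ⟨w⟩ := hG.preconnected x (H B0)
    generalize hh : H B0 = t at w
    induction w with
    | nil => left; rfl
    | @cons a b _ hab q ih =>
      subst hh
      obtain ⟨B, hB, hm⟩ := hcov s(a, b) (by simpa using hab)
      exact Or.inr ⟨B, hB, step b B (ih rfl) hB _ hm (by simp), _, hm, by simp⟩
  refine ⟨H B0, fun B hB => ?_⟩
  obtain ⟨e, he, hx⟩ := (hH B hB).1
  rw [← step _ B (all _) hB e he hx]
  exact hH B hB

structure BL {V : Type*} (G : SimpleGraph V) {k : ℕ} {mvec : Fin k → ℕ} [∀ i, NeZero (mvec i)]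
    (c : ∀ i, ZMod (mvec i) → V) (h : V) : Prop where
  petal : ∀ i, ∃ z, c i z = h
  closed : ∀ i z, c i z ≠ h → ∀ y, G.Adj (c i z) y → s(c i z, y) ∈ ES (c i)
  pend : ∀ u v, G.Adj u v → (∀ i, s(u, v) ∉ ES (c i)) →
    (u = h ∧ ∀ y, G.Adj v y → y = u) ∨ (v = h ∧ ∀ y, G.Adj u y → y = v)

theorem exists_BL {V : Type*} {G : SimpleGraph V} [Fintype V] (hG : G.Connected) {k : ℕ}
    {mvec : Fin k → ℕ} [∀ i, NeZero (mvec i)]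
    {c : ∀ i, ZMod (mvec i) → V} (hc : ∀ i, IsCyc G (c i))
    (hd : ∀ i j, i ≠ j → Disjoint (ES (c i)) (ES (c j)))
    (h1 : ∀ i, Df G (c i) = 0)
    (h2 : ∀ e ∈ G.edgeFinset, (∀ i, e ∉ ES (c i)) → Sq G e = ((G.edgeFinset.card : ℚ) - 1) ^ 2) :
    ∃ h, BL G c h := by
  have hex : ∃ h, ∀ B ∈ ({B | (∃ i, B = ES (c i)) ∨ ∃ e ∈ G.edgeFinset, (∀ i, e ∉ ES (c i)) ∧
      B = {e}} : Set (Finset (Sym2 V))), HubOf G B h := by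
    refine hub_unique hG _ ?_ ?_ ?_ ?_
    · rintro B (⟨i, rfl⟩ | ⟨e, he, _, rfl⟩)
      · exact ES_sub (hc i).adj
      · simpa using he
    · rintro B (⟨i, rfl⟩ | ⟨e, he, hn, rfl⟩) B' (⟨j, rfl⟩ | ⟨e', he', hn', rfl⟩) f hf hf'
      · by_cases hij : i = j
        · rw [hij]
        · exact absurd hf' (Finset.disjoint_left.1 (hd i j hij) hf)
      · rw [Finset.mem_singleton] at hf'
        subst hf'
        exact absurd hf (hn' i)
      · rw [Finset.mem_singleton] at hf
        subst hf
        exact absurd hf' (hn j)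
      · rw [Finset.mem_singleton] at hf hf'
        rw [← hf, ← hf']
    · intro e he
      by_cases hn : ∃ i, e ∈ ES (c i)
      · obtain ⟨i, hi⟩ := hn
        exact ⟨_, Or.inl ⟨i, rfl⟩, hi⟩
      · exact ⟨{e}, Or.inr ⟨e, he, not_exists.1 hn, rfl⟩, by simp⟩
    · rintro B (⟨i, rfl⟩ | ⟨e, he, hn, rfl⟩)
      · obtain ⟨z0, hz0⟩ := Df_zero_imp hG (hc i) (h1 i)
        refine ⟨c i z0, ⟨cE (c i) z0, mem_ES.2 ⟨_, rfl⟩, by simp [cE]⟩, ?_⟩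
        intro e he x hx hne y hy
        obtain ⟨z, rfl⟩ : ∃ z, c i z = x := by
          obtain ⟨z, rfl⟩ := mem_ES.1 he
          rw [cE, Sym2.mem_iff] at hx
          rcases hx with hx | hx
          · exact ⟨_, hx.symm⟩
          · exact ⟨_, hx.symm⟩
        exact hz0 z (fun h => hne (by rw [h])) y hy
      · have hS := h2 e he hn
        induction e with | _ a b =>
        have hab : G.Adj a b := by simpa using he
        rw [Sq_leaf hG hab] at hS
        rcases hS with hS | hS
        · refine ⟨b, ⟨_, Finset.mem_singleton_self _, by simp⟩, ?_⟩
          intro e he x hx hne y hy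
          rw [Finset.mem_singleton] at he ⊢
          subst he
          have : x = a := (Sym2.mem_iff.1 hx).resolve_right hne
          subst this
          rw [hS y hy]
        · refine ⟨a, ⟨_, Finset.mem_singleton_self _, by simp⟩, ?_⟩
          intro e he x hx hne y hy
          rw [Finset.mem_singleton] at he ⊢
          subst he
          have : x = b := (Sym2.mem_iff.1 hx).resolve_left hne
          subst this
          rw [hS y hy, Sym2.eq_swap]
  obtain ⟨h, hh⟩ := hex
  · refine ⟨h, ?_, ?_, ?_⟩
    · intro i
      obtain ⟨⟨e, he, hx⟩, _⟩ := hh (ES (c i)) (Or.inl ⟨i, rfl⟩)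
      obtain ⟨z, rfl⟩ := mem_ES.1 he
      rw [cE, Sym2.mem_iff] at hx
      rcases hx with hx | hx
      · exact ⟨_, hx.symm⟩
      · exact ⟨_, hx.symm⟩
    · intro i z hz y hy
      exact (hh (ES (c i)) (Or.inl ⟨i, rfl⟩)).2 (cE (c i) z) (mem_ES.2 ⟨z, rfl⟩) _ (by simp [cE]) hz y hy
    · intro u v huv hn
      obtain ⟨⟨e, he, hx⟩, h4⟩ := hh {s(u, v)} (Or.inr ⟨_, by simpa using huv, hn, rfl⟩)
      rw [Finset.mem_singleton] at he
      subst he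
      rw [Sym2.mem_iff] at hx
      rcases hx with rfl | rfl
      · left
        refine ⟨rfl, fun y hy => ?_⟩
        have := h4 _ (Finset.mem_singleton_self _) v (by simp) huv.ne' y hy
        rw [Finset.mem_singleton, Sym2.eq_iff] at this
        rcases this with ⟨h5, _⟩ | ⟨_, h5⟩
        · exact absurd h5 huv.ne'
        · exact h5
      · right
        refine ⟨rfl, fun y hy => ?_⟩
        have := h4 _ (Finset.mem_singleton_self _) u (by simp) huv.ne y hy
        rw [Finset.mem_singleton, Sym2.eq_iff] at this
        rcases this with ⟨_, h5⟩ | ⟨h5, _⟩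
        · exact h5
        · exact absurd h5 huv.ne

theorem cond_of_BL {V : Type*} {G : SimpleGraph V} [Fintype V] (hG : G.Connected) {k : ℕ}
    {mvec : Fin k → ℕ} [∀ i, NeZero (mvec i)]
    {c : ∀ i, ZMod (mvec i) → V} (hinj : ∀ i, Function.Injective (c i))
    (hadj : ∀ i z, G.Adj (c i z) (c i (z + 1))) {h : V} (hB : BL G c h) :
    (∀ i, IsCyc G (c i)) ∧ (∀ i, Df G (c i) = 0) ∧
    (∀ e ∈ G.edgeFinset, (∀ i, e ∉ ES (c i)) → Sq G e = ((G.edgeFinset.card : ℚ) - 1) ^ 2) := by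
  have hcl : ∀ i, ∃ z0, ∀ z, z ≠ z0 → ∀ y, G.Adj (c i z) y → s(c i z, y) ∈ ES (c i) := by
    intro i
    obtain ⟨z0, hz0⟩ := hB.petal i
    exact ⟨z0, fun z hz => hB.closed i z (fun hh => hz (hinj i (hh.trans hz0.symm)))⟩
  have hcyc : ∀ i, IsCyc G (c i) := fun i => by
    obtain ⟨z0, hz0⟩ := hcl i
    exact sep_of_closed (hinj i) (hadj i) z0 hz0
  refine ⟨hcyc, fun i => ?_, ?_⟩
  · obtain ⟨z0, hz0⟩ := hcl i
    exact Df_zero_of hG (hcyc i) z0 hz0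
  · intro e he hn
    induction e with | _ a b =>
    have hab : G.Adj a b := by simpa using he
    rw [Sq_leaf hG hab]
    rcases hB.pend a b hab hn with h | h
    · exact Or.inr h.2
    · exact Or.inl h.2

end Bnd

namespace Bnd

def ofWalk {V : Type*} {G : SimpleGraph V} {a : V} (w : G.Walk a a) (L : ℕ) (z : ZMod L) : V :=
  w.getVert z.val

theorem ofWalk_succ {V : Type*} {G : SimpleGraph V} {a : V} (w : G.Walk a a) {L : ℕ} [NeZero L]
    (hL : 3 ≤ L) (hlen : w.length = L) (z : ZMod L) : ofWalk w L (z + 1) = w.getVert (z.val + 1) := by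
  have hlt := ZMod.val_lt z
  unfold ofWalk
  rw [ZMod.val_add, ZMod.val_one_eq_one_mod, Nat.mod_eq_of_lt (show 1 < L by omega)]
  by_cases h : z.val + 1 = L
  · rw [h, Nat.mod_self, SimpleGraph.Walk.getVert_zero, ← hlen, SimpleGraph.Walk.getVert_length]
  · rw [Nat.mod_eq_of_lt (by omega)]

theorem ofWalk_mem {V : Type*} {G : SimpleGraph V} {a : V} (w : G.Walk a a) {L : ℕ} [NeZero L]
    (hL : 3 ≤ L) (hlen : w.length = L) (e : Sym2 V) : e ∈ ES (ofWalk w L) ↔ e ∈ w.edges := by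
  induction e with | _ x y =>
  rw [SimpleGraph.Walk.mk_mem_edges_iff_exists, mem_ES]
  constructor
  · rintro ⟨z, hz⟩
    refine ⟨z.val, hlen ▸ ZMod.val_lt z, ?_⟩
    rw [← hz, cE, ofWalk_succ w hL hlen]; rfl
  · rintro ⟨i, hi, h⟩
    refine ⟨(i : ZMod L), ?_⟩
    have hv : (i : ZMod L).val = i := by
      rw [ZMod.val_natCast, Nat.mod_eq_of_lt (by omega)]
    rw [cE, ofWalk_succ w hL hlen, ofWalk, hv, h]

theorem sep_walk {V : Type*} {G : SimpleGraph V} (hG : IsCactus G) {a : V} (w : G.Walk a a)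
    (hw : w.IsCycle) (s : Set (Sym2 V)) (hs : ∀ e, e ∈ s ↔ e ∈ w.edges) :
    ∀ n u v, u ∈ w.support → v ∈ w.support → (G.deleteEdges s).Reachable u v →
      (G.deleteEdges s).dist u v = n → u = v := by
  intro n
  induction n using Nat.strong_induction_on with
  | _ n ih =>
  intro u v hu hv hr hn
  by_contra huv
  obtain ⟨P, hP, hPl⟩ := hr.exists_path_of_dist
  have hinter : ∀ z ∈ P.support, z ∈ w.support → z = u ∨ z = v := by
    intro z hz hzw
    by_contra hne
    push Not at hne
    have h1 := SimpleGraph.Walk.length_takeUntil_lt_length hz hne.2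
    have h2 := SimpleGraph.dist_le (P.takeUntil z hz)
    exact hne.1 (ih _ (by omega) u z hu hzw ⟨P.takeUntil z hz⟩ rfl).symm
  have hle : G.deleteEdges s ≤ G := SimpleGraph.deleteEdges_le s
  set w' := w.rotate u hu with hw'
  have hc' : w'.IsCycle := hw.rotate hu
  have hv' : v ∈ w'.support := by rw [hw', SimpleGraph.Walk.mem_support_rotate_iff]; exact hv
  set A := w'.takeUntil v hv' with hA
  have hAp : A.IsPath := hc'.isPath_takeUntil hv'
  have hAs : ∀ x ∈ A.support, x ∈ w.support := by
    intro x hx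
    have := SimpleGraph.Walk.support_takeUntil_subset_support w' hv' hx
    rwa [hw', SimpleGraph.Walk.mem_support_rotate_iff] at this
  have hAe : ∀ e ∈ A.edges, e ∈ w.edges := by
    intro e he
    have := SimpleGraph.Walk.edges_takeUntil_subset_edges w' hv' he
    exact (w.rotate_edges u hu).mem_iff.1 this
  set Q := P.mapLe hle with hQ
  have hQs : Q.support = P.support := by simp [hQ]
  have hQe : Q.edges = P.edges := by simp [hQ]
  have hQp : Q.IsPath := hP.mapLe hle
  have hPe : ∀ e ∈ P.edges, e ∉ w.edges := by
    intro e he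
    have := P.edges_subset_edgeSet he
    rw [SimpleGraph.edgeSet_deleteEdges] at this
    rw [← hs]; exact this.2
  have hPne : ∃ e, e ∈ P.edges := by
    cases hPc : P with
    | nil => exact absurd rfl huv
    | cons h q => exact ⟨_, by rw [SimpleGraph.Walk.edges_cons]; exact List.mem_cons_self⟩
  have hcyc : (A.append Q.reverse).IsCycle := by
    apply hAp.isCycle_append hQp.reverse
    · intro x hx hx'
      have hxu : x ≠ u := by
        rintro rfl
        have := hAp.support_nodup
        rw [← SimpleGraph.Walk.cons_tail_support] at this
        exact (List.nodup_cons.1 this).1 hx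
      have hxv : x ≠ v := by
        rintro rfl
        have := hQp.reverse.support_nodup
        rw [← SimpleGraph.Walk.cons_tail_support] at this
        exact (List.nodup_cons.1 this).1 hx'
      have h1 := hAs x (List.mem_of_mem_tail hx)
      have h2 := List.mem_of_mem_tail hx'
      rw [SimpleGraph.Walk.support_reverse, List.mem_reverse, hQs] at h2
      rcases hinter x h2 h1 with h | h
      · exact hxu h
      · exact hxv h
    · by_contra hlen
      push Not at hlen
      obtain ⟨h1, h2⟩ := hlen
      rw [SimpleGraph.Walk.length_reverse] at h2
      have e1 : s(u, v) ∈ A.edges := by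
        clear_value A
        cases A with
        | nil => exact absurd rfl huv
        | cons h q =>
          cases q with
          | nil => simp
          | cons h' q' => simp at h1
      have e2 : s(u, v) ∈ Q.edges := by
        clear_value Q
        cases Q with
        | nil => exact absurd rfl huv
        | cons h q =>
          cases q with
          | nil => simp
          | cons h' q' => simp at h2
      rw [hQe] at e2
      exact hPe _ e2 (hAe _ e1)
  have := hG.2 w (A.append Q.reverse) hw hcyc (by
    intro heq
    obtain ⟨e, he⟩ := hPne
    apply hPe e he
    rw [← List.mem_toFinset, heq, List.mem_toFinset, SimpleGraph.Walk.edges_append, List.mem_append]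
    right
    rw [SimpleGraph.Walk.edges_reverse, List.mem_reverse, hQe]; exact he)
  have h2 : ({u, v} : Finset V) ⊆ w.support.toFinset ∩ (A.append Q.reverse).support.toFinset := by
    intro x hx
    rw [Finset.mem_insert, Finset.mem_singleton] at hx
    rw [Finset.mem_inter, List.mem_toFinset, List.mem_toFinset,
      SimpleGraph.Walk.mem_support_append_iff]
    rcases hx with rfl | rfl
    · exact ⟨hu, Or.inl (SimpleGraph.Walk.start_mem_support _)⟩
    · exact ⟨hv, Or.inl (SimpleGraph.Walk.end_mem_support _)⟩
  have h3 := Finset.card_le_card h2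
  rw [Finset.card_pair huv] at h3
  omega

theorem ofWalk_isCyc {V : Type*} {G : SimpleGraph V} (hG : IsCactus G) {a : V} (w : G.Walk a a)
    (hw : w.IsCycle) {L : ℕ} [NeZero L] (hL : 3 ≤ L) (hlen : w.length = L) :
    IsCyc G (ofWalk w L) := by
  have hinj : Function.Injective (ofWalk w L) := by
    intro x y h
    have hx := ZMod.val_lt x
    have hy := ZMod.val_lt y
    exact ZMod.val_injective L (hw.getVert_injOn' (show x.val ≤ w.length - 1 by omega)
      (show y.val ≤ w.length - 1 by omega) h)
  refine ⟨hinj, ?_, ?_⟩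
  · intro z
    rw [ofWalk_succ w hL hlen]
    exact w.adj_getVert_succ (hlen ▸ ZMod.val_lt z)
  · intro x y hr
    exact hinj (sep_walk hG w hw _ (fun e => by rw [Finset.mem_coe, ofWalk_mem w hL hlen]) _ _ _
      (w.getVert_mem_support _) (w.getVert_mem_support _) hr rfl)

end Bnd

namespace Bnd

def bR (k : ℕ) (len : Fin k → ℕ) (p : ℕ) (x y : Unit ⊕ ((Σ i : Fin k, Fin (len i - 1)) ⊕ Fin p)) : Prop :=
    match x, y with
    | Sum.inl _, Sum.inr (Sum.inr _) => True
    | Sum.inl _, Sum.inr (Sum.inl ⟨i, a⟩) => a.val = 0 ∨ a.val = len i - 2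
    | Sum.inr (Sum.inl ⟨i, a⟩), Sum.inr (Sum.inl ⟨j, b⟩) => i = j ∧ a.val + 1 = b.val
    | _, _ => False

theorem bundle_adj (k : ℕ) (len : Fin k → ℕ) (p : ℕ)
    (x y : Unit ⊕ ((Σ i : Fin k, Fin (len i - 1)) ⊕ Fin p)) :
    (bundleGraph k len p).Adj x y ↔ x ≠ y ∧ (bR k len p x y ∨ bR k len p y x) := Iff.rfl

theorem ES_shift {V : Type*} {L : ℕ} [NeZero L] (c : ZMod L → V) (a : ZMod L) :
    ES (fun z => c (z + a)) = ES c := by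
  ext e
  rw [mem_ES, mem_ES]
  constructor
  · rintro ⟨z, rfl⟩
    refine ⟨z + a, ?_⟩
    simp only [cE]
    rw [show z + a + 1 = z + 1 + a by ring]
  · rintro ⟨z, rfl⟩
    refine ⟨z - a, ?_⟩
    simp only [cE]
    rw [show z - a + 1 + a = z + 1 by ring, sub_add_cancel]

theorem BL_shift {V : Type*} {G : SimpleGraph V} {k : ℕ} {mvec : Fin k → ℕ} [∀ i, NeZero (mvec i)]
    {c : ∀ i, ZMod (mvec i) → V} {h : V} (hB : BL G c h) (a : ∀ i, ZMod (mvec i)) :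
    BL G (fun i z => c i (z + a i)) h := by
  refine ⟨fun i => ?_, fun i z hz y hy => ?_, fun u v huv hn => ?_⟩
  · obtain ⟨z, hz⟩ := hB.petal i
    exact ⟨z - a i, by simpa using hz⟩
  · rw [ES_shift]; exact hB.closed i _ hz y hy
  · exact hB.pend u v huv (fun i => by rw [← ES_shift (c i) (a i)]; exact hn i)

/-- a hub structure with base points at the hub gives an isomorphism with the bundle -/
theorem iso_of_BL0 {V : Type*} {G : SimpleGraph V} [Fintype V] (hG : G.Connected) {k : ℕ}
    {mvec : Fin k → ℕ} [∀ i, NeZero (mvec i)] (hge : ∀ i, 3 ≤ mvec i)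
    {c : ∀ i, ZMod (mvec i) → V} (hinj : ∀ i, Function.Injective (c i))
    (hadj : ∀ i z, G.Adj (c i z) (c i (z + 1)))
    (hd : ∀ i j, i ≠ j → Disjoint (ES (c i)) (ES (c j))) {h : V} (hB : BL G c h)
    (h0 : ∀ i, c i 0 = h) (p : ℕ) (hp : (G.edgeFinset.filter (fun e => ∀ i, e ∉ ES (c i))).card = p) :
    Nonempty (G ≃g bundleGraph k mvec p) := by
  set O := G.edgeFinset.filter (fun e => ∀ i, e ∉ ES (c i)) with hO
  have ε : Fin p ≃ O := (Finset.equivFinOfCardEq hp).symm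
  have hleaf : ∀ e : O, ∃ v, e.1 = s(h, v) ∧ G.Adj h v ∧ ∀ y, G.Adj v y → y = h := by
    rintro ⟨e, he⟩
    induction e with | _ a b =>
    rw [hO, Finset.mem_filter] at he
    have hab : G.Adj a b := by simpa using he.1
    rcases hB.pend a b hab he.2 with ⟨rfl, h2⟩ | ⟨rfl, h2⟩
    · exact ⟨b, rfl, hab, h2⟩
    · exact ⟨a, Sym2.eq_swap, hab.symm, h2⟩
  choose ℓ hℓ1 hℓ2 hℓ3 using hleaf
  have hℓO : ∀ e : O, ∀ i, s(h, ℓ e) ∉ ES (c i) := by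
    intro e i
    rw [← hℓ1 e]
    exact (Finset.mem_filter.1 e.2).2 i
  have hcast : ∀ i (a : Fin (mvec i - 1)), ((a.val + 1 : ℕ) : ZMod (mvec i)).val = a.val + 1 := by
    intro i a
    rw [ZMod.val_natCast, Nat.mod_eq_of_lt (by have := a.2; omega)]
  have hcne : ∀ i (a : Fin (mvec i - 1)), c i ((a.val + 1 : ℕ) : ZMod (mvec i)) ≠ h := by
    intro i a he
    rw [← h0 i] at he
    have := hcast i a
    rw [hinj i he, ZMod.val_zero] at this
    omega
  let φ : Unit ⊕ ((Σ i : Fin k, Fin (mvec i - 1)) ⊕ Fin p) → V := fun x =>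
    match x with
    | Sum.inl _ => h
    | Sum.inr (Sum.inl ⟨i, a⟩) => c i ((a.val + 1 : ℕ) : ZMod (mvec i))
    | Sum.inr (Sum.inr j) => ℓ (ε j)
  have hφinj : Function.Injective φ := by
    have pl : ∀ i a j, c i ((a + 1 : ℕ) : ZMod (mvec i)) ≠ h →
        c i ((a + 1 : ℕ) : ZMod (mvec i)) ≠ ℓ j := by
      intro i a j hne he
      have := hB.closed i _ hne h (by rw [he]; exact (hℓ2 j).symm)
      rw [he, Sym2.eq_swap] at this
      exact hℓO j i this
    rintro (⟨⟩ | ⟨i, a⟩ | j) (⟨⟩ | ⟨i', a'⟩ | j') he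
    · rfl
    · exact absurd he.symm (hcne i' a')
    · exact absurd he (hℓ2 _).ne
    · exact absurd he (hcne i a)
    · replace he : c i ((a.val + 1 : ℕ) : ZMod (mvec i)) = c i' ((a'.val + 1 : ℕ) : ZMod (mvec i')) := he
      by_cases hii : i = i'
      · subst hii
        have h1 := congrArg ZMod.val (hinj i he)
        rw [hcast, hcast] at h1
        have : a = a' := Fin.ext (by omega)
        rw [this]
      · exfalso
        have h1 := hadj i ((a.val + 1 : ℕ) : ZMod (mvec i))
        have h2 : cE (c i) ((a.val + 1 : ℕ) : ZMod (mvec i)) ∈ ES (c i) := mem_ES.2 ⟨_, rfl⟩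
        have h3 := hB.closed i' _ (hcne i' a') (c i (((a.val + 1 : ℕ) : ZMod (mvec i)) + 1))
          (by rw [← he]; exact h1)
        rw [← he] at h3
        exact Finset.disjoint_left.1 (hd i i' hii) h2 h3
    · exact absurd he (pl i a _ (hcne i a))
    · exact absurd he.symm (hℓ2 _).ne
    · exact absurd he.symm (pl i' a' _ (hcne i' a'))
    · have he : ℓ (ε j) = ℓ (ε j') := he
      have : ε j = ε j' := Subtype.ext (by rw [hℓ1, hℓ1, he])
      rw [ε.injective this]
  have hlast : ∀ i, (((mvec i - 2) + 1 : ℕ) : ZMod (mvec i)) + 1 = 0 := by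
    intro i
    have := hge i
    rw [show (mvec i - 2) + 1 = mvec i - 1 by omega, Nat.cast_sub (by omega), ZMod.natCast_self]
    simp
  have hhom : ∀ x y, bR k mvec p x y → G.Adj (φ x) (φ y) := by
    rintro (⟨⟩ | ⟨i, a⟩ | j) (⟨⟩ | ⟨i', a'⟩ | j') hr
    · exact hr.elim
    · replace hr : a'.val = 0 ∨ a'.val = mvec i' - 2 := hr
      change G.Adj h (c i' _)
      rcases hr with hr | hr
      · have := hadj i' 0
        rw [h0] at this
        rw [hr]; simpa using this
      · have := hadj i' (((mvec i' - 2) + 1 : ℕ) : ZMod (mvec i'))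
        rw [hlast, h0] at this
        rw [hr]; exact this.symm
    · exact hℓ2 _
    · exact hr.elim
    · obtain ⟨rfl, hr⟩ : i = i' ∧ a.val + 1 = a'.val := hr
      have := hadj i ((a.val + 1 : ℕ) : ZMod (mvec i))
      change G.Adj (c i _) (c i _)
      rw [← hr]
      push_cast at this ⊢
      exact this
    · exact hr.elim
    · exact hr.elim
    · exact hr.elim
    · exact hr.elim
  have hsurj : ∀ u v, G.Adj u v → ∃ x y, bR k mvec p x y ∧ s(φ x, φ y) = s(u, v) := by
    intro u v huv
    by_cases hn : ∃ i, s(u, v) ∈ ES (c i)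
    · obtain ⟨i, hi⟩ := hn
      obtain ⟨z, hz⟩ := mem_ES.1 hi
      rw [← hz]
      have hL := hge i
      have hzl := ZMod.val_lt z
      have hzc : z = ((z.val : ℕ) : ZMod (mvec i)) := (ZMod.natCast_zmod_val z).symm
      rcases Nat.eq_zero_or_pos z.val with hv | hv
      · have hz0 : z = 0 := by rw [hzc, hv, Nat.cast_zero]
        refine ⟨Sum.inl (), Sum.inr (Sum.inl ⟨i, ⟨0, by omega⟩⟩), Or.inl rfl, ?_⟩
        simp only [φ, cE, hz0, h0]
        simp
      · by_cases hv2 : z.val = mvec i - 1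
        · have hz0 : z = (((mvec i - 2) + 1 : ℕ) : ZMod (mvec i)) := by
            rw [hzc, hv2]; congr 1; omega
          refine ⟨Sum.inl (), Sum.inr (Sum.inl ⟨i, ⟨mvec i - 2, by omega⟩⟩), Or.inr rfl, ?_⟩
          simp only [φ, cE]
          rw [hz0, hlast, h0, Sym2.eq_swap]
        · refine ⟨Sum.inr (Sum.inl ⟨i, ⟨z.val - 1, by omega⟩⟩),
            Sum.inr (Sum.inl ⟨i, ⟨z.val, by omega⟩⟩), ⟨rfl, by simp only; omega⟩, ?_⟩
          simp only [φ, cE]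
          rw [Nat.sub_add_cancel hv, Nat.cast_add, ZMod.natCast_zmod_val, Nat.cast_one]
    · have he : s(u, v) ∈ O := by
        rw [hO, Finset.mem_filter]; exact ⟨by simpa using huv, not_exists.1 hn⟩
      refine ⟨Sum.inl (), Sum.inr (Sum.inr (ε.symm ⟨_, he⟩)), trivial, ?_⟩
      simp only [φ, Equiv.apply_symm_apply]
      rw [← hℓ1]
  have hφs : Function.Surjective φ := by
    intro v
    by_cases hv : v = h
    · exact ⟨Sum.inl (), hv.symm⟩
    · obtain ⟨w⟩ := hG.preconnected v h
      cases w with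
      | nil => exact absurd rfl hv
      | cons hvy _ =>
        obtain ⟨x, y, _, he⟩ := hsurj _ _ hvy
        rw [Sym2.eq_iff] at he
        rcases he with ⟨h1, _⟩ | ⟨_, h1⟩
        · exact ⟨x, h1⟩
        · exact ⟨y, h1⟩
  have hbij : Function.Bijective φ := ⟨hφinj, hφs⟩
  refine ⟨(RelIso.symm ⟨Equiv.ofBijective φ hbij, ?_⟩)⟩
  intro x y
  change G.Adj (φ x) (φ y) ↔ _
  rw [bundle_adj]
  constructor
  · intro hxy
    refine ⟨fun h => hxy.ne (by rw [h]), ?_⟩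
    obtain ⟨x', y', hr, he⟩ := hsurj _ _ hxy
    rw [Sym2.eq_iff] at he
    rcases he with ⟨h1, h2⟩ | ⟨h1, h2⟩
    · rw [hφinj h1, hφinj h2] at hr; exact Or.inl hr
    · rw [hφinj h1, hφinj h2] at hr; exact Or.inr hr
  · rintro ⟨_, hr | hr⟩
    · exact hhom _ _ hr
    · exact (hhom _ _ hr).symm

theorem iso_of_BL {V : Type*} {G : SimpleGraph V} [Fintype V] (hG : G.Connected) {k : ℕ}
    {mvec : Fin k → ℕ} [∀ i, NeZero (mvec i)] (hge : ∀ i, 3 ≤ mvec i)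
    {c : ∀ i, ZMod (mvec i) → V} (hinj : ∀ i, Function.Injective (c i))
    (hadj : ∀ i z, G.Adj (c i z) (c i (z + 1)))
    (hd : ∀ i j, i ≠ j → Disjoint (ES (c i)) (ES (c j))) {h : V} (hB : BL G c h) (p : ℕ)
    (hp : p = G.edgeFinset.card - ∑ i, mvec i) :
    Nonempty (G ≃g bundleGraph k mvec p) := by
  choose a ha using hB.petal
  refine iso_of_BL0 hG hge (c := fun i z => c i (z + a i)) ?_ ?_ ?_ (BL_shift hB a) ?_ p ?_
  · intro i x y hxy
    exact add_right_cancel (hinj i hxy)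
  · intro i z
    have := hadj i (z + a i)
    rwa [show z + a i + 1 = z + 1 + a i by ring] at this
  · intro i j hij
    rw [ES_shift, ES_shift]; exact hd i j hij
  · intro i; simpa using ha i
  · simp only [ES_shift]
    have hU : G.edgeFinset.filter (fun e => ∀ i, e ∉ ES (c i)) =
        G.edgeFinset \ (Finset.univ : Finset (Fin k)).biUnion (fun i => ES (c i)) := by
      ext e; simp
    have hUsub : (Finset.univ : Finset (Fin k)).biUnion (fun i => ES (c i)) ⊆ G.edgeFinset := by
      intro e he
      rw [Finset.mem_biUnion] at he
      obtain ⟨i, _, hi⟩ := he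
      exact ES_sub (hadj i) hi
    rw [hU, Finset.card_sdiff_of_subset hUsub, Finset.card_biUnion (fun i _ j _ hij => hd i j hij), hp]
    congr 1
    exact Finset.sum_congr rfl (fun i _ => card_ES (hge i) (hinj i))

end Bnd

namespace Bnd

/-- the `n`-th vertex on the `i`-th cycle of the bundle -/
def bP (k : ℕ) (len : Fin k → ℕ) (p : ℕ) (i : Fin k) (n : ℕ) :
    Unit ⊕ ((Σ i : Fin k, Fin (len i - 1)) ⊕ Fin p) :=
  if h : n ≠ 0 ∧ n < len i then Sum.inr (Sum.inl ⟨i, ⟨n - 1, by omega⟩⟩) else Sum.inl ()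

theorem bP_hub {k : ℕ} {len : Fin k → ℕ} {p : ℕ} {i : Fin k} {n : ℕ} (h : ¬ (n ≠ 0 ∧ n < len i)) :
    bP k len p i n = Sum.inl () := by rw [bP, dif_neg h]

theorem bP_pet {k : ℕ} {len : Fin k → ℕ} {p : ℕ} {i : Fin k} {n : ℕ} (h : n + 1 < len i) :
    bP k len p i (n + 1) = Sum.inr (Sum.inl ⟨i, ⟨n, by omega⟩⟩) := by
  rw [bP, dif_pos ⟨by omega, h⟩]; rfl

theorem bP_eq_pet {k : ℕ} {len : Fin k → ℕ} {p : ℕ} {i j : Fin k} {n : ℕ} {a : Fin (len j - 1)}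
    (h : bP k len p i n = Sum.inr (Sum.inl ⟨j, a⟩)) : i = j ∧ n = a.val + 1 := by
  rw [bP] at h
  split_ifs at h with hn
  have h1 := Sum.inl.inj (Sum.inr.inj h)
  obtain ⟨rfl, h2⟩ := Sigma.mk.inj h1
  refine ⟨rfl, ?_⟩
  have := eq_of_heq h2
  rw [← this]
  change n = n - 1 + 1
  omega

theorem bP_ne_leaf {k : ℕ} {len : Fin k → ℕ} {p : ℕ} {i : Fin k} {n : ℕ} {j : Fin p} :
    bP k len p i n ≠ Sum.inr (Sum.inr j) := by
  rw [bP]; split_ifs <;> simp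

theorem bP_bR {k : ℕ} {len : Fin k → ℕ} {p : ℕ} (hge : ∀ i, 3 ≤ len i) (i : Fin k) (n : ℕ)
    (hn : n < len i) : (bundleGraph k len p).Adj (bP k len p i n) (bP k len p i (n + 1)) := by
  have := hge i
  rw [bundle_adj]
  by_cases h0 : n = 0
  · subst h0
    rw [bP_hub (by omega), bP_pet (by omega)]
    exact ⟨by simp, Or.inl (Or.inl rfl)⟩
  · obtain ⟨n', rfl⟩ : ∃ n', n = n' + 1 := ⟨n - 1, by omega⟩
    by_cases hl : n' + 1 + 1 < len i
    · rw [bP_pet (by omega), bP_pet hl]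
      refine ⟨?_, Or.inl ⟨rfl, rfl⟩⟩
      intro h
      rw [← bP_pet (p := p) hn] at h
      have := (bP_eq_pet h).2
      simp at this
    · rw [bP_pet hn, bP_hub (by omega)]
      refine ⟨by simp, Or.inr (Or.inr ?_)⟩
      change n' = len i - 2
      omega

theorem bR_cases {k : ℕ} {len : Fin k → ℕ} {p : ℕ} (hge : ∀ i, 3 ≤ len i)
    {x y : Unit ⊕ ((Σ i : Fin k, Fin (len i - 1)) ⊕ Fin p)} (h : bR k len p x y) :
    (x = Sum.inl () ∧ ∃ j, y = Sum.inr (Sum.inr j)) ∨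
      ∃ i n, n < len i ∧ s(x, y) = s(bP k len p i n, bP k len p i (n + 1)) := by
  rcases x with ⟨⟩ | ⟨i, a⟩ | j <;> rcases y with ⟨⟩ | ⟨i', a'⟩ | j'
  · exact h.elim
  · right
    have := hge i'
    replace h : a'.val = 0 ∨ a'.val = len i' - 2 := h
    have ha := a'.2
    have e1 : Sum.inr (Sum.inl ⟨i', a'⟩) = bP k len p i' (a'.val + 1) := (bP_pet (by omega)).symm
    rw [e1]
    rcases h with h | h
    · refine ⟨i', 0, by omega, ?_⟩
      rw [bP_hub (n := 0) (by omega), h]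
    · refine ⟨i', a'.val + 1, by omega, ?_⟩
      rw [bP_hub (n := a'.val + 1 + 1) (by omega), Sym2.eq_swap]
  · exact Or.inl ⟨rfl, _, rfl⟩
  · exact h.elim
  · right
    obtain ⟨rfl, h⟩ : i = i' ∧ a.val + 1 = a'.val := h
    have ha := a'.2
    refine ⟨i, a.val + 1, by omega, ?_⟩
    rw [bP_pet (by omega), bP_pet (by omega)]
    obtain ⟨a2, ha2⟩ := a'
    replace h : a.val + 1 = a2 := h
    subst h
    rfl
  all_goals exact h.elim

def bc (k : ℕ) (len : Fin k → ℕ) (p : ℕ) (i : Fin k) (z : ZMod (len i)) :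
    Unit ⊕ ((Σ i : Fin k, Fin (len i - 1)) ⊕ Fin p) := bP k len p i z.val

theorem bc_succ {k : ℕ} {len : Fin k → ℕ} [∀ i, NeZero (len i)] {p : ℕ} (hge : ∀ i, 3 ≤ len i)
    (i : Fin k) (z : ZMod (len i)) : bc k len p i (z + 1) = bP k len p i (z.val + 1) := by
  have := hge i
  have hlt := ZMod.val_lt z
  rw [bc, ZMod.val_add, ZMod.val_one_eq_one_mod, Nat.mod_eq_of_lt (show 1 < len i by omega)]
  by_cases h : z.val + 1 = len i
  · rw [h, Nat.mod_self, bP_hub (by omega), bP_hub (by omega)]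
  · rw [Nat.mod_eq_of_lt (by omega)]

theorem bc_inj {k : ℕ} {len : Fin k → ℕ} [∀ i, NeZero (len i)] {p : ℕ}
    (i : Fin k) : Function.Injective (bc k len p i) := by
  intro x y h
  apply ZMod.val_injective
  have hx := ZMod.val_lt x
  have hy := ZMod.val_lt y
  rw [bc, bc] at h
  by_cases h0 : x.val = 0
  · by_cases h1 : y.val = 0
    · rw [h0, h1]
    · obtain ⟨n, hn⟩ : ∃ n, y.val = n + 1 := ⟨y.val - 1, by omega⟩
      rw [hn, bP_pet (by omega)] at h
      rw [hn]; exact (bP_eq_pet h).2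
  · obtain ⟨n, hn⟩ : ∃ n, x.val = n + 1 := ⟨x.val - 1, by omega⟩
    rw [hn, bP_pet (by omega)] at h
    rw [hn]; exact (bP_eq_pet h.symm).2.symm

theorem mem_ES_bc {k : ℕ} {len : Fin k → ℕ} [∀ i, NeZero (len i)] {p : ℕ} (hge : ∀ i, 3 ≤ len i)
    (i : Fin k) {e : Sym2 (Unit ⊕ ((Σ i : Fin k, Fin (len i - 1)) ⊕ Fin p))} :
    e ∈ ES (bc k len p i) ↔ ∃ n, n < len i ∧ e = s(bP k len p i n, bP k len p i (n + 1)) := by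
  rw [mem_ES]
  constructor
  · rintro ⟨z, rfl⟩
    exact ⟨z.val, ZMod.val_lt z, by rw [cE, bc_succ hge]; rfl⟩
  · rintro ⟨n, hn, rfl⟩
    refine ⟨(n : ZMod (len i)), ?_⟩
    rw [cE, bc_succ hge, bc, ZMod.val_natCast, Nat.mod_eq_of_lt hn]

theorem bc_disj {k : ℕ} {len : Fin k → ℕ} [∀ i, NeZero (len i)] {p : ℕ} (hge : ∀ i, 3 ≤ len i)
    (i j : Fin k) (hij : i ≠ j) : Disjoint (ES (bc k len p i)) (ES (bc k len p j)) := by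
  rw [Finset.disjoint_left]
  intro e h1 h2
  obtain ⟨n, hn, rfl⟩ := (mem_ES_bc hge i).1 h1
  obtain ⟨n', hn', he⟩ := (mem_ES_bc hge j).1 h2
  have := hge i
  have key : ∀ q, q + 1 < len i → bP k len p i (q + 1) ∈ s(bP k len p i n, bP k len p i (n + 1)) → False := by
    intro q hq hm
    rw [he, Sym2.mem_iff, bP_pet hq] at hm
    rcases hm with hm | hm
    · exact hij (bP_eq_pet hm.symm).1.symm
    · exact hij (bP_eq_pet hm.symm).1.symm
  by_cases h0 : n = 0
  · exact key 0 (by omega) (by rw [h0]; simp)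
  · obtain ⟨q, rfl⟩ : ∃ q, n = q + 1 := ⟨n - 1, by omega⟩
    exact key q hn (by simp)

theorem bc_BL {k : ℕ} {len : Fin k → ℕ} [∀ i, NeZero (len i)] {p : ℕ} (hge : ∀ i, 3 ≤ len i) :
    BL (bundleGraph k len p) (bc k len p) (Sum.inl ()) := by
  have adjc : ∀ x y, (bundleGraph k len p).Adj x y →
      (x = Sum.inl () ∧ ∃ j, y = Sum.inr (Sum.inr j)) ∨ (y = Sum.inl () ∧ ∃ j, x = Sum.inr (Sum.inr j)) ∨
      ∃ i n, n < len i ∧ s(x, y) = s(bP k len p i n, bP k len p i (n + 1)) := by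
    intro x y h
    rw [bundle_adj] at h
    rcases h.2 with h | h
    · rcases bR_cases hge h with h | h
      · exact Or.inl h
      · exact Or.inr (Or.inr h)
    · rcases bR_cases hge h with h | h
      · exact Or.inr (Or.inl h)
      · rw [Sym2.eq_swap] at h; exact Or.inr (Or.inr h)
  have leaf : ∀ j y, (bundleGraph k len p).Adj (Sum.inr (Sum.inr j)) y → y = Sum.inl () := by
    intro j y h
    rcases adjc _ _ h with ⟨h, _⟩ | ⟨h, _⟩ | ⟨i, n, _, h⟩
    · cases h
    · exact h
    · rw [Sym2.eq_iff] at h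
      rcases h with ⟨h, _⟩ | ⟨h, _⟩ <;> exact absurd h.symm bP_ne_leaf
  refine ⟨fun i => ⟨0, ?_⟩, ?_, ?_⟩
  · rw [bc, ZMod.val_zero, bP_hub (by omega)]
  · intro i z hz y hy
    have hlt := ZMod.val_lt z
    rcases adjc _ _ hy with ⟨h, _⟩ | ⟨_, j, h⟩ | ⟨j, n, hn, h⟩
    · exact absurd h hz
    · exact absurd h bP_ne_leaf
    · have hz0 : z.val ≠ 0 := by
        intro h0; apply hz; rw [bc, h0, bP_hub (by omega)]
      obtain ⟨q, hq⟩ : ∃ q, z.val = q + 1 := ⟨z.val - 1, by omega⟩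
      have : bc k len p i z ∈ s(bP k len p j n, bP k len p j (n + 1)) := by rw [← h]; simp
      have hji : j = i := by
        rw [bc, hq, bP_pet (i := i) (n := q) (by omega), Sym2.mem_iff] at this
        rcases this with this | this <;> exact (bP_eq_pet this.symm).1
      subst hji
      exact (mem_ES_bc hge j).2 ⟨n, hn, h⟩
  · intro u v huv hno
    rcases adjc _ _ huv with ⟨rfl, j, rfl⟩ | ⟨rfl, j, rfl⟩ | ⟨i, n, hn, h⟩
    · exact Or.inl ⟨rfl, fun y hy => leaf j y hy⟩
    · exact Or.inr ⟨rfl, fun y hy => leaf j y hy⟩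
    · exact absurd ((mem_ES_bc hge i).2 ⟨n, hn, h⟩) (hno i)

theorem BL_of_iso {V : Type*} {G : SimpleGraph V} {k : ℕ}
    {mvec : Fin k → ℕ} [∀ i, NeZero (mvec i)] (hge : ∀ i, 3 ≤ mvec i) {p : ℕ}
    (ψ : G ≃g bundleGraph k mvec p) :
    ∃ c : ∀ i, ZMod (mvec i) → V, (∀ i, Function.Injective (c i)) ∧
      (∀ i z, G.Adj (c i z) (c i (z + 1))) ∧
      (∀ i j, i ≠ j → Disjoint (ES (c i)) (ES (c j))) ∧ ∃ h, BL G c h := by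
  have hE : ∀ i u v, s(u, v) ∈ ES (fun z => ψ.symm (bc k mvec p i z)) ↔
      s(ψ u, ψ v) ∈ ES (bc k mvec p i) := by
    intro i u v
    rw [mem_ES, mem_ES]
    apply exists_congr
    intro z
    rw [cE, cE, Sym2.eq_iff, Sym2.eq_iff]
    have e : ∀ x u, ψ.symm x = u ↔ x = ψ u := fun x u => by
      constructor
      · rintro rfl; simp
      · rintro rfl; simp
    simp only [e]
  have hB := bc_BL (p := p) hge
  refine ⟨fun i z => ψ.symm (bc k mvec p i z), ?_, ?_, ?_, ψ.symm (Sum.inl ()), ?_, ?_, ?_⟩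
  · intro i x y h
    exact bc_inj i (ψ.symm.injective h)
  · intro i z
    have := bP_bR (p := p) hge i z.val (ZMod.val_lt z)
    rw [← bc_succ hge] at this
    exact ψ.symm.map_rel_iff.2 this
  · intro i j hij
    rw [Finset.disjoint_left]
    intro e
    induction e using Sym2.ind with
    | _ u v =>
      rw [hE, hE]
      exact fun h1 h2 => Finset.disjoint_left.1 (bc_disj hge i j hij) h1 h2
  · intro i
    obtain ⟨z, hz⟩ := hB.petal i
    exact ⟨z, by simp only [hz]⟩
  · intro i z hz y hy
    rw [hE]
    simp only [RelIso.apply_symm_apply]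
    refine hB.closed i z (fun h => hz (by simp only [h])) _ ?_
    have := ψ.map_rel_iff.2 hy
    simpa using this
  · intro u v huv hno
    have := hB.pend (ψ u) (ψ v) (ψ.map_rel_iff.2 huv) (fun i h => hno i ((hE i u v).2 h))
    rcases this with ⟨h1, h2⟩ | ⟨h1, h2⟩
    · exact Or.inl ⟨by rw [← h1]; simp, fun y hy => ψ.injective (h2 _ (ψ.map_rel_iff.2 hy))⟩
    · exact Or.inr ⟨by rw [← h1]; simp, fun y hy => ψ.injective (h2 _ (ψ.map_rel_iff.2 hy))⟩

end Bnd

/-- lower bound for the edge revised Szeged index of a cactus with `n`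
vertices, `k` cycles of lengths `m_1, …, m_k` (the first `t` odd, the rest even) and `m`
edges, with equality iff `G` is the bundle `G(m_1, …, m_k)`. -/
theorem stmt10 {V : Type*} [Fintype V] (G : SimpleGraph V) (hG : IsCactus G)
    (n k t m : ℕ) (hn : Fintype.card V = n) (hm : G.edgeFinset.card = m)
    (hkm : m = n - 1 + k) (ht : t ≤ k)
    (mvec : Fin k → ℕ) (hge : ∀ i, 3 ≤ mvec i)
    (hodd : ∀ i : Fin k, (i : ℕ) < t → Odd (mvec i))
    (heven : ∀ i : Fin k, t ≤ (i : ℕ) → Even (mvec i))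
    (c : Fin k → V) (w : ∀ i, G.Walk (c i) (c i))
    (hcyc : ∀ i, (w i).IsCycle)
    (hlen : ∀ i, (w i).length = mvec i)
    (hdisj : ∀ i j, i ≠ j → ∀ e ∈ (w i).edges, e ∉ (w j).edges) :
    (2 * (m : ℚ) ^ 2 - m) / 4 + ((m : ℚ) - 1) ^ 2 * (∑ i, (mvec i : ℚ)) / 4 -
        (∑ i ∈ Finset.univ.filter (fun i : Fin k => (i : ℕ) < t),
          ((mvec i : ℚ) - 1) * ((m : ℚ) - mvec i) ^ 2) / 4 -
        (∑ i ∈ Finset.univ.filter (fun i : Fin k => t ≤ (i : ℕ)),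
          (mvec i : ℚ) * ((m : ℚ) - mvec i) ^ 2) / 4 ≤ szRevE G ∧
    (szRevE G =
        (2 * (m : ℚ) ^ 2 - m) / 4 + ((m : ℚ) - 1) ^ 2 * (∑ i, (mvec i : ℚ)) / 4 -
          (∑ i ∈ Finset.univ.filter (fun i : Fin k => (i : ℕ) < t),
            ((mvec i : ℚ) - 1) * ((m : ℚ) - mvec i) ^ 2) / 4 -
          (∑ i ∈ Finset.univ.filter (fun i : Fin k => t ≤ (i : ℕ)),
            (mvec i : ℚ) * ((m : ℚ) - mvec i) ^ 2) / 4 ↔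
      Nonempty (G ≃g bundleGraph k mvec (n + k - 1 - ∑ i, mvec i))) := by
  haveI : ∀ i, NeZero (mvec i) := fun i => ⟨by have := hge i; omega⟩
  have hcy : ∀ i, Bnd.IsCyc G (Bnd.ofWalk (w i) (mvec i)) := fun i =>
    Bnd.ofWalk_isCyc hG (w i) (hcyc i) (hge i) (hlen i)
  have hd : ∀ i j, i ≠ j → Disjoint (Bnd.ES (Bnd.ofWalk (w i) (mvec i)))
      (Bnd.ES (Bnd.ofWalk (w j) (mvec j))) := by
    intro i j hij
    rw [Finset.disjoint_left]
    intro e h1 h2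
    rw [Bnd.ofWalk_mem (w i) (hge i) (hlen i)] at h1
    rw [Bnd.ofWalk_mem (w j) (hge j) (hlen j)] at h2
    exact hdisj i j hij e h1 h2
  have hR : (2 * (m : ℚ) ^ 2 - m) / 4 + ((m : ℚ) - 1) ^ 2 * (∑ i, (mvec i : ℚ)) / 4 -
        (∑ i ∈ Finset.univ.filter (fun i : Fin k => (i : ℕ) < t),
          ((mvec i : ℚ) - 1) * ((m : ℚ) - mvec i) ^ 2) / 4 -
        (∑ i ∈ Finset.univ.filter (fun i : Fin k => t ≤ (i : ℕ)),
          (mvec i : ℚ) * ((m : ℚ) - mvec i) ^ 2) / 4 =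
      (2 * (m : ℚ) ^ 2 - m) / 4 + ((m : ℚ) - 1) ^ 2 * (∑ i, (mvec i : ℚ)) / 4 -
      (∑ i, ((mvec i : ℚ) - if Odd (mvec i) then 1 else 0) * ((m : ℚ) - mvec i) ^ 2) / 4 := by
    have h1 := Finset.sum_filter_add_sum_filter_not (Finset.univ : Finset (Fin k))
      (fun i : Fin k => (i : ℕ) < t)
      (fun i => ((mvec i : ℚ) - if Odd (mvec i) then 1 else 0) * ((m : ℚ) - mvec i) ^ 2)
    have h2 : ∑ i ∈ Finset.univ.filter (fun i : Fin k => (i : ℕ) < t),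
        ((mvec i : ℚ) - if Odd (mvec i) then 1 else 0) * ((m : ℚ) - mvec i) ^ 2 =
        ∑ i ∈ Finset.univ.filter (fun i : Fin k => (i : ℕ) < t),
          ((mvec i : ℚ) - 1) * ((m : ℚ) - mvec i) ^ 2 := by
      refine Finset.sum_congr rfl (fun i hi => ?_)
      rw [if_pos (hodd i (Finset.mem_filter.1 hi).2)]
    have h3 : ∑ i ∈ Finset.univ.filter (fun i : Fin k => ¬ (i : ℕ) < t),
        ((mvec i : ℚ) - if Odd (mvec i) then 1 else 0) * ((m : ℚ) - mvec i) ^ 2 =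
        ∑ i ∈ Finset.univ.filter (fun i : Fin k => t ≤ (i : ℕ)),
          (mvec i : ℚ) * ((m : ℚ) - mvec i) ^ 2 := by
      refine Finset.sum_congr (by ext i; simp) (fun i hi => ?_)
      rw [if_neg (Nat.not_odd_iff_even.2 (heven i (Finset.mem_filter.1 hi).2)), sub_zero]
    rw [← h1, h2, h3]
    ring
  obtain ⟨hle, hiff⟩ := Bnd.frame hG.1 hge hcy hd m hm _ hR
  refine ⟨hle, ?_⟩
  constructor
  · intro heq
    obtain ⟨hA, hB⟩ := hiff.1 heq
    obtain ⟨h, hBL⟩ := Bnd.exists_BL hG.1 hcy hd hA (by rw [hm]; exact hB)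
    refine Bnd.iso_of_BL hG.1 hge (fun i => (hcy i).inj) (fun i => (hcy i).adj) hd hBL _ ?_
    haveI := hG.1.nonempty
    have hpos : 0 < Fintype.card V := Fintype.card_pos
    rw [hm]
    congr 1
    omega
  · rintro ⟨ψ⟩
    obtain ⟨c', hinj, hadj, hd', h, hBL⟩ := Bnd.BL_of_iso hge ψ
    obtain ⟨h1, h2, h3⟩ := Bnd.cond_of_BL hG.1 hinj hadj hBL
    rw [hm] at h3
    exact (Bnd.frame hG.1 hge h1 hd' m hm _ hR).2.2 ⟨h2, h3⟩
end

section
/- Let G be a cactus with k cycles and m < 15 edges. Then Sz*_e(G) ≥ (2m² − m + k((m−9)² − 36))/4 + k(6m − 15), with equality if and only if G ≅ C_0(n,k), the bundle of k triangles with n − 2k − 1 pendant edges at the common vertex. -/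
open scoped Classical
open Finset

namespace CactusAux
open SimpleGraph

variable {V : Type*}

theorem eDist_mk (G : SimpleGraph V) (a b w : V) :
    eDist G s(a, b) w = min (G.dist a w) (G.dist b w) := rfl

/-- Total edge distance of a vertex. -/
noncomputable def tr (G : SimpleGraph V) [Fintype V] (w : V) : ℤ :=
  ∑ f ∈ G.edgeFinset, (eDist G f w : ℤ)

/-- Squared imbalance of an edge. -/
noncomputable def dsq (G : SimpleGraph V) [Fintype V] (e : Sym2 V) : ℤ :=
  Sym2.lift ⟨fun a b => (tr G a - tr G b) ^ 2, fun _ _ => by ring⟩ e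

theorem dsq_mk (G : SimpleGraph V) [Fintype V] (a b : V) :
    dsq G s(a, b) = (tr G a - tr G b) ^ 2 := rfl

theorem dist_adj_le {G : SimpleGraph V} (hc : G.Connected) {u v : V} (h : G.Adj u v) (x : V) :
    G.dist x v ≤ G.dist x u + 1 := by
  have := hc.dist_triangle (u := x) (v := u) (w := v)
  rwa [dist_eq_one_iff_adj.mpr h] at this

theorem eDist_adj_le {G : SimpleGraph V} (hc : G.Connected) {u v : V} (h : G.Adj u v)
    (f : Sym2 V) : eDist G f v ≤ eDist G f u + 1 := by
  induction f using Sym2.ind with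
  | _ a b =>
    rw [eDist_mk, eDist_mk]
    have := dist_adj_le hc h a
    have := dist_adj_le hc h b
    omega

theorem eDist_eq_zero {G : SimpleGraph V} {f : Sym2 V} {w : V} (h : w ∈ f) : eDist G f w = 0 := by
  induction f using Sym2.ind with
  | _ a b =>
    rw [eDist_mk]
    rcases Sym2.mem_iff.mp h with rfl | rfl <;> simp

theorem eDist_pos {G : SimpleGraph V} (hc : G.Connected) {f : Sym2 V} {w : V} (h : w ∉ f) :
    0 < eDist G f w := by
  induction f using Sym2.ind with
  | _ a b =>
    rw [eDist_mk]
    have h1 : a ≠ w := fun h' => h (by simp [h'])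
    have h2 : b ≠ w := fun h' => h (by simp [h'])
    have := hc.pos_dist_of_ne h1
    have := hc.pos_dist_of_ne h2
    omega

theorem term_eq {G : SimpleGraph V} [Fintype V] (hc : G.Connected) {u v : V} (h : G.Adj u v) :
    ((mCloser G u v : ℚ) + (mEqui G u v : ℚ) / 2) *
        ((mCloser G v u : ℚ) + (mEqui G u v : ℚ) / 2) =
      (((G.edgeFinset.card : ℚ)) ^ 2 - (dsq G s(u, v) : ℤ)) / 4 := by
  have h1 : (mCloser G u v : ℤ) + mCloser G v u + mEqui G u v = G.edgeFinset.card := by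
    unfold mCloser mEqui
    rw [Finset.card_filter, Finset.card_filter, Finset.card_filter, Finset.card_eq_sum_ones]
    push_cast
    rw [← Finset.sum_add_distrib, ← Finset.sum_add_distrib]
    refine Finset.sum_congr rfl fun f _ => ?_
    split_ifs <;> omega
  have h2 : (mCloser G u v : ℤ) - mCloser G v u = tr G v - tr G u := by
    unfold mCloser tr
    rw [Finset.card_filter, Finset.card_filter]
    push_cast
    rw [← Finset.sum_sub_distrib, ← Finset.sum_sub_distrib]
    refine Finset.sum_congr rfl fun f _ => ?_
    have := eDist_adj_le hc h f
    have := eDist_adj_le hc h.symm f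
    split_ifs <;> omega
  rw [dsq_mk]
  have h1' : (mCloser G u v : ℚ) + mCloser G v u + mEqui G u v = G.edgeFinset.card := by
    exact_mod_cast h1
  have h2' : (mCloser G u v : ℚ) - mCloser G v u = (tr G v : ℚ) - tr G u := by exact_mod_cast h2
  rw [← h1']
  push_cast
  have : ((tr G u : ℚ) - tr G v) ^ 2 = ((mCloser G u v : ℚ) - mCloser G v u) ^ 2 := by
    rw [h2']; ring
  rw [this]; ring

theorem sum_adj {G : SimpleGraph V} [Fintype V] (F : Sym2 V → ℚ) :
    (∑ u : V, ∑ v : V, if G.Adj u v then F s(u, v) else 0) = 2 * ∑ e ∈ G.edgeFinset, F e := by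
  have h1 : (∑ u : V, ∑ v : V, if G.Adj u v then F s(u, v) else 0) = ∑ d : G.Dart, F d.edge := by
    rw [← Finset.sum_product', ← Finset.sum_filter]
    refine Finset.sum_bij' (fun x hx => (⟨x, (Finset.mem_filter.mp hx).2⟩ : G.Dart))
      (fun d _ => d.toProd) ?_ ?_ ?_ ?_ ?_
    · intros; simp
    · intro d _; simp [d.adj]
    · intros; rfl
    · intros; rfl
    · intros; rfl
  rw [h1, Finset.mul_sum, ← Finset.sum_fiberwise_of_maps_to (t := G.edgeFinset)
    (g := fun d : G.Dart => d.edge)]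
  · refine Finset.sum_congr rfl fun e he => ?_
    have h2 := G.dart_edge_fiber_card e (mem_edgeFinset.mp he)
    rw [Finset.sum_congr rfl (g := fun _ => F e)]
    · rw [Finset.sum_const, nsmul_eq_mul]
      congr 1
      exact_mod_cast h2
    · intro d hd
      rw [(Finset.mem_filter.mp hd).2]
  · intro d _
    simpa using d.edge_mem

theorem sz_eq {G : SimpleGraph V} [Fintype V] (hc : G.Connected) :
    4 * szRevE G = ((∑ e ∈ G.edgeFinset, ((G.edgeFinset.card : ℤ) ^ 2 - dsq G e) : ℤ) : ℚ) := by
  unfold szRevE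
  have : ∀ u v : V, (if G.Adj u v then
      ((mCloser G u v : ℚ) + (mEqui G u v : ℚ) / 2) *
        ((mCloser G v u : ℚ) + (mEqui G u v : ℚ) / 2)
    else 0) = if G.Adj u v then (fun e : Sym2 V =>
      (((G.edgeFinset.card : ℚ)) ^ 2 - (dsq G e : ℤ)) / 4) s(u, v) else 0 := by
    intro u v
    split_ifs with h
    · exact term_eq hc h
    · rfl
  simp_rw [this]
  rw [sum_adj (G := G) (fun e : Sym2 V =>
      (((G.edgeFinset.card : ℚ)) ^ 2 - (dsq G e : ℤ)) / 4), ← Finset.sum_div]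
  push_cast
  ring

/-- Key bound: a balanced set `S` of edges reduces the imbalance. -/
theorem bal_le {G : SimpleGraph V} [Fintype V] (hc : G.Connected) {u v : V} (h : G.Adj u v)
    {S : Finset (Sym2 V)} (hS : S ⊆ G.edgeFinset)
    (h0 : ∑ f ∈ S, ((eDist G f v : ℤ) - eDist G f u) = 0) :
    tr G v - tr G u ≤ G.edgeFinset.card - S.card ∧
    (tr G v - tr G u = G.edgeFinset.card - S.card →
      ∀ f ∈ G.edgeFinset, f ∉ S → eDist G f v = eDist G f u + 1) := by
  have e1 : tr G v - tr G u = ∑ f ∈ G.edgeFinset \ S, ((eDist G f v : ℤ) - eDist G f u) := by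
    unfold tr
    rw [← Finset.sum_sub_distrib, ← Finset.sum_sdiff hS, h0, add_zero]
  have e2 : (G.edgeFinset.card : ℤ) - S.card = ∑ f ∈ G.edgeFinset \ S, (1 : ℤ) := by
    rw [Finset.sum_const, Finset.card_sdiff_of_subset hS, nsmul_eq_mul, mul_one,
      Nat.cast_sub (Finset.card_le_card hS)]
  have e3 : ∀ f ∈ G.edgeFinset \ S, ((eDist G f v : ℤ) - eDist G f u) ≤ 1 := by
    intro f _
    have := eDist_adj_le hc h f
    omega
  rw [e1, e2]
  refine ⟨Finset.sum_le_sum e3, fun he f hf hfS => ?_⟩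
  have := (Finset.sum_eq_sum_iff_of_le e3).mp he f (Finset.mem_sdiff.mpr ⟨hf, hfS⟩)
  omega

theorem edge_bound {G : SimpleGraph V} [Fintype V] (hc : G.Connected) {u v : V} (h : G.Adj u v) :
    dsq G s(u, v) ≤ ((G.edgeFinset.card : ℤ) - 1) ^ 2 ∧
    (dsq G s(u, v) = ((G.edgeFinset.card : ℤ) - 1) ^ 2 →
      (∀ y, G.Adj u y → y = v) ∨ (∀ y, G.Adj v y → y = u)) := by
  have key : ∀ {u v : V}, G.Adj u v → tr G v - tr G u ≤ (G.edgeFinset.card : ℤ) - 1 ∧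
      (tr G v - tr G u = (G.edgeFinset.card : ℤ) - 1 → ∀ y, G.Adj v y → y = u) := by
    intro u v h
    have := bal_le hc h (S := {s(u, v)}) (by simpa using h)
      (by simp [eDist_eq_zero])
    rw [Finset.card_singleton] at this
    refine ⟨by exact_mod_cast this.1, fun he y hy => ?_⟩
    by_contra hne
    have h3 := this.2 (by exact_mod_cast he) s(v, y) (by simpa using hy) (by
      simp only [Finset.mem_singleton, Sym2.eq_iff]
      rintro (⟨h1, h2⟩ | ⟨h1, h2⟩)
      · exact h.ne h1.symm
      · exact hne h2)
    rw [eDist_eq_zero (by simp)] at h3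
    omega
  have k1 := key h
  have k2 := key h.symm
  rw [dsq_mk]
  refine ⟨by nlinarith, fun he => ?_⟩
  rcases sq_eq_sq_iff_eq_or_eq_neg.mp he with h1 | h1
  · exact Or.inl (k2.2 h1)
  · exact Or.inr (k1.2 (by linarith))

theorem sq_aux {p q M : ℤ} (h1 : |p| ≤ M) (h2 : |q| ≤ M) (h3 : |p + q| ≤ M) :
    p ^ 2 + q ^ 2 + (p + q) ^ 2 ≤ 2 * M ^ 2 ∧
    (p ^ 2 + q ^ 2 + (p + q) ^ 2 = 2 * M ^ 2 →
      (p = 0 ∧ |q| = M) ∨ (q = 0 ∧ |p| = M) ∨ (p + q = 0 ∧ |p| = M)) := by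
  have s1 := sq_le_sq' (neg_le_of_abs_le h1) (le_of_abs_le h1)
  have s2 := sq_le_sq' (neg_le_of_abs_le h2) (le_of_abs_le h2)
  have s3 := sq_le_sq' (neg_le_of_abs_le h3) (le_of_abs_le h3)
  have hM : 0 ≤ M := (abs_nonneg p).trans h1
  have fin : ∀ x : ℤ, x ^ 2 = M ^ 2 → |x| = M := fun x hx => by
    rw [← abs_of_nonneg hM]; exact (sq_eq_sq_iff_abs_eq_abs _ _).mp hx
  rcases le_or_gt 0 (p * q) with hpq | hpq
  · refine ⟨by nlinarith, fun he => ?_⟩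
    have h0 : p * q = 0 := by nlinarith
    rcases mul_eq_zero.mp h0 with h | h
    · exact Or.inl ⟨h, fin _ (by subst h; nlinarith)⟩
    · exact Or.inr (Or.inl ⟨h, fin _ (by subst h; nlinarith)⟩)
  · -- opposite signs
    rcases le_or_gt 0 (p * (p + q)) with hp | hp
    · have hq : q * (p + q) ≤ 0 := by
        by_contra hcon
        push Not at hcon
        have : p * q * (p + q) ^ 2 < 0 := by
          have : 0 < (p + q) ^ 2 := by
            have : p + q ≠ 0 := by rintro h; simp [h] at hcon
            positivity
          nlinarith
        nlinarith [mul_nonneg hp hcon.le]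
      refine ⟨by nlinarith, fun he => ?_⟩
      have h0 : q * (p + q) = 0 := by nlinarith
      rcases mul_eq_zero.mp h0 with h | h
      · simp [h] at hpq
      · exact Or.inr (Or.inr ⟨h, fin _ (by
          have : q = -p := by linarith
          subst this; nlinarith)⟩)
    · refine ⟨by nlinarith, fun he => ?_⟩
      have h0 : p * (p + q) = 0 := by nlinarith
      exact absurd h0 hp.ne

theorem triangle_bound {G : SimpleGraph V} [Fintype V] (hc : G.Connected) {a b c : V}
    (hab : G.Adj a b) (hbc : G.Adj b c) (hca : G.Adj c a) :
    dsq G s(a, b) + dsq G s(b, c) + dsq G s(c, a) ≤ 2 * ((G.edgeFinset.card : ℤ) - 3) ^ 2 ∧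
    (dsq G s(a, b) + dsq G s(b, c) + dsq G s(c, a) = 2 * ((G.edgeFinset.card : ℤ) - 3) ^ 2 →
      ((∀ y, G.Adj a y → y = b ∨ y = c) ∧ (∀ y, G.Adj b y → y = c ∨ y = a)) ∨
      ((∀ y, G.Adj b y → y = c ∨ y = a) ∧ (∀ y, G.Adj c y → y = a ∨ y = b)) ∨
      ((∀ y, G.Adj c y → y = a ∨ y = b) ∧ (∀ y, G.Adj a y → y = b ∨ y = c))) := by
  have key : ∀ {a b c : V}, G.Adj a b → G.Adj b c → G.Adj c a →
      tr G b - tr G a ≤ (G.edgeFinset.card : ℤ) - 3 ∧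
      (tr G b - tr G a = (G.edgeFinset.card : ℤ) - 3 →
        ∀ f ∈ G.edgeFinset, f ∉ ({s(a, b), s(b, c), s(c, a)} : Finset (Sym2 V)) →
          eDist G f b = eDist G f a + 1) := by
    intro a b c hab hbc hca
    have n1 : s(a, b) ≠ s(b, c) := by
      simp [Sym2.eq_iff, hab.ne, hca.ne.symm]
    have n2 : s(a, b) ≠ s(c, a) := by
      simp [Sym2.eq_iff, hca.ne.symm, hbc.ne]
    have n3 : s(b, c) ≠ s(c, a) := by
      simp [Sym2.eq_iff, hbc.ne, hab.ne.symm]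
    have hcard : ({s(a, b), s(b, c), s(c, a)} : Finset (Sym2 V)).card = 3 :=
      Finset.card_eq_three.mpr ⟨_, _, _, n1, n2, n3, rfl⟩
    have := bal_le hc hab (S := {s(a, b), s(b, c), s(c, a)}) (by
      intro f hf
      simp only [Finset.mem_insert, Finset.mem_singleton] at hf
      rcases hf with rfl | rfl | rfl <;> simpa) (by
      rw [Finset.sum_insert (by simp [n1, n2]), Finset.sum_insert (by simp [n3]),
        Finset.sum_singleton]
      have d1 := dist_eq_one_iff_adj.mpr hab
      have d2 := dist_eq_one_iff_adj.mpr hbc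
      have d3 := dist_eq_one_iff_adj.mpr hca
      have d1' := dist_eq_one_iff_adj.mpr hab.symm
      have d2' := dist_eq_one_iff_adj.mpr hbc.symm
      have d3' := dist_eq_one_iff_adj.mpr hca.symm
      simp [eDist_mk, *])
    rw [hcard] at this
    exact_mod_cast this
  have T1 : ({s(b, c), s(c, a), s(a, b)} : Finset (Sym2 V)) = {s(a, b), s(b, c), s(c, a)} := by
    ext f; simp only [Finset.mem_insert, Finset.mem_singleton]; tauto
  have T2 : ({s(c, a), s(a, b), s(b, c)} : Finset (Sym2 V)) = {s(a, b), s(b, c), s(c, a)} := by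
    ext f; simp only [Finset.mem_insert, Finset.mem_singleton]; tauto
  have T3 : ({s(b, a), s(a, c), s(c, b)} : Finset (Sym2 V)) = {s(a, b), s(b, c), s(c, a)} := by
    ext f; simp only [Finset.mem_insert, Finset.mem_singleton, Sym2.eq_swap (a := b) (b := a),
      Sym2.eq_swap (a := a) (b := c), Sym2.eq_swap (a := c) (b := b)]; tauto
  have T4 : ({s(c, b), s(b, a), s(a, c)} : Finset (Sym2 V)) = {s(a, b), s(b, c), s(c, a)} := by
    ext f; simp only [Finset.mem_insert, Finset.mem_singleton, Sym2.eq_swap (a := b) (b := a),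
      Sym2.eq_swap (a := a) (b := c), Sym2.eq_swap (a := c) (b := b)]; tauto
  have T5 : ({s(a, c), s(c, b), s(b, a)} : Finset (Sym2 V)) = {s(a, b), s(b, c), s(c, a)} := by
    ext f; simp only [Finset.mem_insert, Finset.mem_singleton, Sym2.eq_swap (a := b) (b := a),
      Sym2.eq_swap (a := a) (b := c), Sym2.eq_swap (a := c) (b := b)]; tauto
  set S : Finset (Sym2 V) := {s(a, b), s(b, c), s(c, a)} with hSdef
  have k1 := key hab hbc hca
  have k2 := key hbc hca hab
  have k3 := key hca hab hbc
  have k4 := key hab.symm hca.symm hbc.symm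
  have k5 := key hbc.symm hab.symm hca.symm
  have k6 := key hca.symm hbc.symm hab.symm
  rw [T1] at k2
  rw [T2] at k3
  rw [T3] at k4
  rw [T4] at k5
  rw [T5] at k6
  rw [← hSdef] at k1
  rw [dsq_mk, dsq_mk, dsq_mk]
  have A := sq_aux (p := tr G b - tr G a) (q := tr G c - tr G b)
    (M := (G.edgeFinset.card : ℤ) - 3) (abs_le.mpr ⟨by linarith [k4.1], k1.1⟩)
    (abs_le.mpr ⟨by linarith [k5.1], k2.1⟩) (abs_le.mpr ⟨by linarith [k3.1], by linarith [k6.1]⟩)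
  have E : (tr G a - tr G b) ^ 2 + (tr G b - tr G c) ^ 2 + (tr G c - tr G a) ^ 2 =
    (tr G b - tr G a) ^ 2 + (tr G c - tr G b) ^ 2 +
      (tr G b - tr G a + (tr G c - tr G b)) ^ 2 := by ring
  rw [E]
  refine ⟨A.1, fun he => ?_⟩
  -- neighbours of the vertices of the triangle
  have mS : ∀ f, f ∈ S ↔ f = s(a, b) ∨ f = s(b, c) ∨ f = s(c, a) := by
    intro f; simp [hSdef]
  have nb : ∀ x : V, (∀ f ∈ G.edgeFinset, f ∉ S → x ∉ f) → ∀ y, G.Adj x y → s(x, y) ∈ S := by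
    intro x hx y hy
    by_contra hcon
    exact hx _ (by simpa using hy) hcon (by simp)
  have na : (∀ f ∈ G.edgeFinset, f ∉ S → a ∉ f) → ∀ y, G.Adj a y → y = b ∨ y = c := by
    intro hx y hy
    have := (mS _).mp (nb a hx y hy)
    simp only [Sym2.eq_iff] at this
    have := hab.ne; have := hca.ne; have := hbc.ne
    grind
  have nbb : (∀ f ∈ G.edgeFinset, f ∉ S → b ∉ f) → ∀ y, G.Adj b y → y = c ∨ y = a := by
    intro hx y hy
    have := (mS _).mp (nb b hx y hy)
    simp only [Sym2.eq_iff] at this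
    have := hab.ne; have := hca.ne; have := hbc.ne
    grind
  have nc : (∀ f ∈ G.edgeFinset, f ∉ S → c ∉ f) → ∀ y, G.Adj c y → y = a ∨ y = b := by
    intro hx y hy
    have := (mS _).mp (nb c hx y hy)
    simp only [Sym2.eq_iff] at this
    have := hab.ne; have := hca.ne; have := hbc.ne
    grind
  -- far vertices are not in outside edges
  have far : ∀ x y : V, (∀ f ∈ G.edgeFinset, f ∉ S → eDist G f x = eDist G f y + 1) →
      ∀ f ∈ G.edgeFinset, f ∉ S → x ∉ f := by
    intro x y h f hf hfS hx
    have := h f hf hfS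
    rw [eDist_eq_zero hx] at this
    omega
  have near : ∀ x y z w : V, (∀ f ∈ G.edgeFinset, f ∉ S → eDist G f x = eDist G f y + 1) →
      (∀ f ∈ G.edgeFinset, f ∉ S → eDist G f x = eDist G f z + 1) →
      (∀ f, y ∈ f → z ∈ f → f ∈ G.edgeFinset → f ∈ S) →
      ∀ f ∈ G.edgeFinset, f ∉ S → y ∉ f := by
    intro x y z w h1 h2 h3 f hf hfS hy
    by_cases hz : z ∈ f
    · exact hfS (h3 f hy hz hf)
    · have := eDist_pos hc hz
      have h4 := h1 f hf hfS
      have := h2 f hf hfS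
      rw [eDist_eq_zero hy] at h4
      omega
  have pin : ∀ x y : V, x ≠ y → s(x, y) ∈ S → ∀ f, x ∈ f → y ∈ f → f ∈ G.edgeFinset → f ∈ S := by
    intro x y hxy h f hx hy _
    rwa [(Sym2.mem_and_mem_iff hxy).mp ⟨hx, hy⟩]
  have mab : s(a, b) ∈ S := by simp [hSdef]
  have mbc : s(b, c) ∈ S := by simp [hSdef]
  have mca : s(c, a) ∈ S := by simp [hSdef]
  have hM0 : 0 ≤ (G.edgeFinset.card : ℤ) - 3 := by
    by_contra hcon
    push Not at hcon
    linarith [k1.1, k4.1]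
  rcases A.2 he with ⟨h1, h2⟩ | ⟨h1, h2⟩ | ⟨h1, h2⟩
  · -- tr a = tr b, c differs
    rcases (abs_eq hM0).mp h2 with h2 | h2
    · have r1 := k2.2 h2
      have r2 := k6.2 (by linarith)
      exact Or.inr (Or.inl ⟨nbb (near c b a a r1 r2 (pin b a hab.ne.symm (by rwa [Sym2.eq_swap]))),
        nc (far c b r1)⟩)
    · have r1 := k5.2 (by linarith)
      have r2 := k3.2 (by linarith)
      exact Or.inl ⟨na (far a c r2), nbb (far b c r1)⟩
  · -- tr b = tr c, a differs
    rcases (abs_eq hM0).mp h2 with h2 | h2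
    · have r1 := k1.2 h2
      have r2 := k6.2 (by linarith)
      exact Or.inr (Or.inl ⟨nbb (far b a r1), nc (far c a r2)⟩)
    · have r1 := k4.2 (by linarith)
      have r2 := k3.2 (by linarith)
      exact Or.inl ⟨na (far a c r2), nbb (near a b c c r1 r2 (pin b c hbc.ne mbc))⟩
  · -- tr a = tr c, b differs
    rcases (abs_eq hM0).mp h2 with h2 | h2
    · have r1 := k1.2 h2
      have r2 := k5.2 (by linarith)
      exact Or.inl ⟨na (near b a c c r1 r2
        (pin a c hca.ne.symm (by rwa [Sym2.eq_swap]))), nbb (far b a r1)⟩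
    · have r1 := k4.2 (by linarith)
      have r2 := k2.2 (by linarith)
      exact Or.inr (Or.inr ⟨nc (far c b r2), na (far a b r1)⟩)

end CactusAux
namespace CactusAux
open SimpleGraph

variable {V : Type*}

/-- `S` is the edge set of a cycle of `G`. -/
def IsCyc (G : SimpleGraph V) (S : Finset (Sym2 V)) : Prop :=
  ∃ (a : V) (p : G.Walk a a), p.IsCycle ∧ p.edges.toFinset = S

noncomputable def cycSets (G : SimpleGraph V) [Fintype V] : Finset (Finset (Sym2 V)) :=
  Finset.univ.filter fun S => IsCyc G S

theorem mem_cycSets {G : SimpleGraph V} [Fintype V] {S : Finset (Sym2 V)} :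
    S ∈ cycSets G ↔ IsCyc G S := by
  simp [cycSets]

theorem cyc_unique {G : SimpleGraph V} (hG : IsCactus G) {S T : Finset (Sym2 V)}
    (hS : IsCyc G S) (hT : IsCyc G T) {e : Sym2 V} (h1 : e ∈ S) (h2 : e ∈ T) : S = T := by
  obtain ⟨a, p, hp, rfl⟩ := hS
  obtain ⟨b, q, hq, rfl⟩ := hT
  by_contra hne
  have h := hG.2 p q hp hq hne
  induction e using Sym2.ind with
  | _ x y =>
    rw [List.mem_toFinset] at h1 h2
    have hxy : x ≠ y := (p.adj_of_mem_edges h1).ne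
    rw [Finset.card_le_one] at h
    refine hxy (h x ?_ y ?_)
    · simp [p.fst_mem_support_of_mem_edges h1, q.fst_mem_support_of_mem_edges h2]
    · simp [p.snd_mem_support_of_mem_edges h1, q.snd_mem_support_of_mem_edges h2]

theorem cyc_subset {G : SimpleGraph V} [Fintype V] {S : Finset (Sym2 V)} (hS : IsCyc G S) :
    S ⊆ G.edgeFinset := by
  obtain ⟨a, p, hp, rfl⟩ := hS
  intro e he
  rw [List.mem_toFinset] at he
  exact mem_edgeFinset.mpr (p.edges_subset_edgeSet he)

theorem cyc_mono {G H : SimpleGraph V} (h : G ≤ H) {S : Finset (Sym2 V)} (hS : IsCyc G S) :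
    IsCyc H S := by
  obtain ⟨a, p, hp, rfl⟩ := hS
  exact ⟨a, p.mapLe h, hp.mapLe h, by rw [Walk.edges_mapLe_eq_edges]⟩

theorem cactus_delete {G : SimpleGraph V} (hG : IsCactus G) {x y : V}
    (h : ¬ G.IsBridge s(x, y)) : IsCactus (G.deleteEdges {s(x, y)}) := by
  refine ⟨hG.1.connected_delete_edge_of_not_isBridge h, fun a b p q hp hq hne => ?_⟩
  have hle := G.deleteEdges_le {s(x, y)}
  have := hG.2 (p.mapLe hle) (q.mapLe hle) (hp.mapLe hle) (hq.mapLe hle)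
  simp only [Walk.edges_mapLe_eq_edges, Walk.support_mapLe_eq_support] at this
  exact this hne

theorem cyc_delete {G : SimpleGraph V} {e : Sym2 V} {S : Finset (Sym2 V)} :
    IsCyc (G.deleteEdges {e}) S ↔ IsCyc G S ∧ e ∉ S := by
  constructor
  · intro h
    refine ⟨cyc_mono (G.deleteEdges_le {e}) h, ?_⟩
    obtain ⟨a, p, hp, rfl⟩ := h
    intro he
    have := p.edges_subset_edgeSet (List.mem_toFinset.mp he)
    simp [edgeSet_deleteEdges] at this
  · rintro ⟨⟨a, p, hp, rfl⟩, he⟩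
    have hq : ∀ f ∈ p.edges, f ∈ (G.deleteEdges {e}).edgeSet := by
      intro f hf
      rw [edgeSet_deleteEdges]
      refine ⟨p.edges_subset_edgeSet hf, ?_⟩
      rintro rfl
      exact he (List.mem_toFinset.mpr hf)
    exact ⟨a, p.transfer _ hq, hp.transfer hq, by rw [Walk.edges_transfer]⟩

theorem card_cycSets [Fintype V] : ∀ (N : ℕ) (G : SimpleGraph V), IsCactus G →
    G.edgeFinset.card = N → (cycSets G).card + Fintype.card V = N + 1 := by
  intro N
  induction N with
  | zero =>
    intro G hG h0
    have hac : G.IsAcyclic := by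
      intro v p hp
      have := hp.three_le_length
      rw [← p.length_edges] at this
      obtain ⟨e, he⟩ := List.exists_mem_of_length_pos (l := p.edges) (by omega)
      have := mem_edgeFinset.mpr (p.edges_subset_edgeSet he)
      rw [Finset.card_eq_zero.mp h0] at this
      simp at this
    have h1 : cycSets G = ∅ := by
      ext S
      simp only [mem_cycSets, Finset.notMem_empty, iff_false]
      rintro ⟨a, p, hp, -⟩
      exact hac p hp
    have := IsTree.card_edgeFinset (G := G) ⟨hG.1, hac⟩
    rw [h1]
    simp only [Finset.card_empty]
    omega
  | succ N ih =>
    intro G hG hN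
    by_cases hac : G.IsAcyclic
    · have h1 : cycSets G = ∅ := by
        ext S
        simp only [mem_cycSets, Finset.notMem_empty, iff_false]
        rintro ⟨a, p, hp, -⟩
        exact hac p hp
      have := IsTree.card_edgeFinset (G := G) ⟨hG.1, hac⟩
      rw [h1]
      simp only [Finset.card_empty]
      omega
    · unfold SimpleGraph.IsAcyclic at hac
      push Not at hac
      obtain ⟨a, p, hp⟩ := hac
      have h3 := hp.three_le_length
      rw [← p.length_edges] at h3
      obtain ⟨e, he⟩ := List.exists_mem_of_length_pos (l := p.edges) (by omega)
      induction e using Sym2.ind with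
      | _ x y =>
        have hmem : s(x, y) ∈ G.edgeSet := p.edges_subset_edgeSet he
        have hbr : ¬ G.IsBridge s(x, y) := by
          rw [isBridge_iff_forall_cycle_notMem hmem]
          push Not
          exact ⟨a, p, hp, he⟩
        have hE : (G.deleteEdges {s(x, y)}).edgeFinset = G.edgeFinset.erase s(x, y) := by
          ext f
          simp [edgeSet_deleteEdges, and_comm]
        have hcard := ih (G.deleteEdges {s(x, y)}) (cactus_delete hG hbr) (by
          have hE' := congrArg Finset.card hE
          rw [Finset.card_erase_of_mem (mem_edgeFinset.mpr hmem), hN, Nat.add_sub_cancel] at hE'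
          convert hE')
        have hC : cycSets (G.deleteEdges {s(x, y)}) = (cycSets G).erase p.edges.toFinset := by
          ext S
          rw [Finset.mem_erase, mem_cycSets, mem_cycSets, cyc_delete]
          constructor
          · rintro ⟨h1, h2⟩
            refine ⟨?_, h1⟩
            rintro rfl
            exact h2 (List.mem_toFinset.mpr he)
          · rintro ⟨h1, h2⟩
            exact ⟨h2, fun h => h1 (cyc_unique hG h2 ⟨a, p, hp, rfl⟩ h (List.mem_toFinset.mpr he))⟩
        have hmC : p.edges.toFinset ∈ cycSets G := mem_cycSets.mpr ⟨a, p, hp, rfl⟩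
        rw [hC, Finset.card_erase_of_mem hmC] at hcard
        have := Finset.card_pos.mpr ⟨_, hmC⟩
        omega

theorem lip_le_dist {G : SimpleGraph V} (hc : G.Connected) (f : V → ℕ) (y : V) (h0 : f y = 0)
    (hl : ∀ a b, G.Adj a b → f a ≤ f b + 1) (x : V) : f x ≤ G.dist x y := by
  obtain ⟨p, hp⟩ := hc.exists_walk_length_eq_dist x y
  rw [← hp]
  clear hp
  induction p with
  | nil => simp [h0]
  | cons h q ih =>
    have := hl _ _ h
    have := ih h0
    rw [Walk.length_cons]
    omega

theorem dist_through {G : SimpleGraph V} (hc : G.Connected) {u v : V} (h : G.Adj u v)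
    (hc' : (G.deleteEdges {s(u, v)}).Connected) (x : V) :
    G.dist x v = min ((G.deleteEdges {s(u, v)}).dist x v)
      ((G.deleteEdges {s(u, v)}).dist x u + 1) := by
  have mono : ∀ w, G.dist x w ≤ (G.deleteEdges {s(u, v)}).dist x w := by
    intro w
    obtain ⟨p, hp⟩ := hc'.exists_walk_length_eq_dist x w
    rw [← hp]
    have := dist_le (p.mapLe (G.deleteEdges_le {s(u, v)}))
    simpa using this
  apply le_antisymm
  · have := dist_adj_le hc h x
    have := mono u
    have := mono v
    omega
  · refine lip_le_dist hc (fun z => min ((G.deleteEdges {s(u, v)}).dist z v)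
      ((G.deleteEdges {s(u, v)}).dist z u + 1)) v (by simp) ?_ x
    intro a b hab
    by_cases he : s(a, b) = s(u, v)
    · rcases Sym2.eq_iff.mp he with ⟨rfl, rfl⟩ | ⟨rfl, rfl⟩ <;> simp
    · have hab' : (G.deleteEdges {s(u, v)}).Adj a b := by
        rw [deleteEdges_adj]; exact ⟨hab, he⟩
      have h1 := dist_adj_le hc' hab' v
      have h2 := dist_adj_le hc' hab'.symm v
      have h3 := dist_adj_le hc' hab'.symm u
      rw [dist_comm (u := v), dist_comm (u := v)] at h2
      rw [dist_comm (u := u), dist_comm (u := u)] at h3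
      omega

theorem walk_edges_sum {G : SimpleGraph V} {a b : V} (p : G.Walk a b) (F : Sym2 V → ℤ) :
    (p.edges.map F).sum = ∑ i ∈ Finset.range p.length, F s(p.getVert i, p.getVert (i + 1)) := by
  induction p with
  | nil => simp
  | cons h q ih =>
    rw [Walk.edges_cons, List.map_cons, List.sum_cons, ih, Walk.length_cons,
      Finset.sum_range_succ']
    rw [add_comm]
    simp [Walk.getVert_cons_succ]

theorem cycle_edge_bound {G : SimpleGraph V} [Fintype V] (hG : IsCactus G) {S : Finset (Sym2 V)}
    (hS : IsCyc G S) {e : Sym2 V} (he : e ∈ S) :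
    dsq G e ≤ ((G.edgeFinset.card : ℤ) - S.card) ^ 2 := by
  have hc := hG.1
  have key : ∀ u v, s(u, v) ∈ S → tr G v - tr G u ≤ (G.edgeFinset.card : ℤ) - S.card := by
    intro u v huv
    have hadj : G.Adj u v := by
      have := cyc_subset hS huv
      simpa using this
    have hbr : ¬ G.IsBridge s(u, v) := by
      rw [isBridge_iff_forall_cycle_notMem (by simpa using hadj)]
      push Not
      obtain ⟨a, p, hp, rfl⟩ := hS
      exact ⟨a, p, hp, List.mem_toFinset.mp huv⟩
    have hc' := hc.connected_delete_edge_of_not_isBridge hbr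
    have hc'' : (G.deleteEdges {s(v, u)}).Connected := by rwa [Sym2.eq_swap]
    obtain ⟨P, hP, hlen⟩ := hc'.exists_path_of_dist v u
    have hle := G.deleteEdges_le {s(u, v)}
    have hnot : s(u, v) ∉ P.edges := by
      intro h
      have := P.edges_subset_edgeSet h
      simp [edgeSet_deleteEdges] at this
    have hcyc : (Walk.cons hadj (P.mapLe hle)).IsCycle := by
      rw [Walk.cons_isCycle_iff, Walk.edges_mapLe_eq_edges]
      exact ⟨hP.mapLe hle, hnot⟩
    have hSeq : S = (Walk.cons hadj (P.mapLe hle)).edges.toFinset :=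
      cyc_unique hG hS ⟨_, _, hcyc, rfl⟩ huv (by simp)
    rw [Walk.edges_cons, Walk.edges_mapLe_eq_edges, List.toFinset_cons] at hSeq
    refine (bal_le hc hadj (cyc_subset hS) ?_).1
    rw [hSeq, Finset.sum_insert (by simpa using hnot), eDist_eq_zero (by simp),
      eDist_eq_zero (by simp), List.sum_toFinset _ hP.isTrail.edges_nodup, walk_edges_sum]
    set N := P.length with hN
    -- distances in the deleted graph
    have d1 : ∀ i, i ≤ N → (G.deleteEdges {s(u, v)}).dist (P.getVert i) v = i ∧
        (G.deleteEdges {s(u, v)}).dist (P.getVert i) u = N - i := by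
      intro i hi
      have a1 := dist_le (P.take i)
      have a2 := dist_le (P.drop i)
      have a3 := hc'.dist_triangle (u := v) (v := P.getVert i) (w := u)
      rw [Walk.take_length] at a1
      rw [Walk.drop_length] at a2
      rw [dist_comm] at a1
      rw [dist_comm (u := v) (v := P.getVert i)] at a3
      omega
    have d2 : ∀ i, i ≤ N → G.dist (P.getVert i) v = min i (N - i + 1) ∧
        G.dist (P.getVert i) u = min (N - i) (i + 1) := by
      intro i hi
      rw [dist_through hc hadj hc', dist_through hc hadj.symm hc'', Sym2.eq_swap (a := v) (b := u),
        (d1 i hi).1, (d1 i hi).2]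
      exact ⟨rfl, rfl⟩
    have d3 : ∀ i ∈ Finset.range N, ((eDist G s(P.getVert i, P.getVert (i + 1)) v : ℤ) -
        eDist G s(P.getVert i, P.getVert (i + 1)) u) =
        ((min i (N - i) : ℕ) : ℤ) - ((min (i + 1) (N - 1 - i) : ℕ) : ℤ) := by
      intro i hi
      rw [Finset.mem_range] at hi
      rw [eDist_mk, eDist_mk, (d2 i hi.le).1, (d2 i hi.le).2, (d2 (i + 1) hi).1, (d2 (i + 1) hi).2]
      congr 2 <;> omega
    rw [Finset.sum_congr rfl d3]
    have r := Finset.sum_range_reflect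
      (fun i => ((min i (N - i) : ℕ) : ℤ) - ((min (i + 1) (N - 1 - i) : ℕ) : ℤ)) N
    have r2 : ∑ j ∈ Finset.range N, (((min (N - 1 - j) (N - (N - 1 - j)) : ℕ) : ℤ) -
        ((min (N - 1 - j + 1) (N - 1 - (N - 1 - j)) : ℕ) : ℤ)) =
        - ∑ i ∈ Finset.range N, (((min i (N - i) : ℕ) : ℤ) - ((min (i + 1) (N - 1 - i) : ℕ) : ℤ)) := by
      rw [← Finset.sum_neg_distrib]
      refine Finset.sum_congr rfl fun i hi => ?_
      rw [Finset.mem_range] at hi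
      omega
    rw [r2] at r
    push_cast at r ⊢
    linarith
  induction e using Sym2.ind with
  | _ u v =>
    rw [dsq_mk]
    have h1 := key u v he
    have h2 := key v u (by rwa [Sym2.eq_swap])
    exact sq_le_sq' (by linarith) (by linarith)

theorem cyc_card_ge {G : SimpleGraph V} {S : Finset (Sym2 V)} (hS : IsCyc G S) : 3 ≤ S.card := by
  obtain ⟨a, p, hp, rfl⟩ := hS
  rw [List.toFinset_card_of_nodup hp.isTrail.edges_nodup, p.length_edges]
  exact hp.three_le_length

theorem cyc_three {G : SimpleGraph V} {S : Finset (Sym2 V)} (hS : IsCyc G S) (h3 : S.card = 3) :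
    ∃ a b c, G.Adj a b ∧ G.Adj b c ∧ G.Adj c a ∧ S = {s(a, b), s(b, c), s(c, a)} := by
  obtain ⟨a, p, hp, rfl⟩ := hS
  rw [List.toFinset_card_of_nodup hp.isTrail.edges_nodup, p.length_edges] at h3
  match p, h3 with
  | .cons (v := b) h1 (.cons (v := c) h2 (.cons h3 .nil)), _ =>
    exact ⟨a, b, c, h1, h2, h3, by simp⟩

theorem tri_isCyc {G : SimpleGraph V} {a b c : V} (hab : G.Adj a b) (hbc : G.Adj b c)
    (hca : G.Adj c a) : IsCyc G {s(a, b), s(b, c), s(c, a)} := by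
  refine ⟨a, .cons hab (.cons hbc (.cons hca .nil)), ?_, by simp⟩
  rw [Walk.cons_isCycle_iff]
  have := hab.ne; have := hbc.ne; have := hca.ne
  simp [Walk.cons_isPath_iff]
  grind

end CactusAux
namespace CactusAux
open SimpleGraph

variable {V : Type*}

theorem arith_strict (m r : ℤ) (hr : 4 ≤ r) (hrm : r ≤ m) (hm : m < 15) :
    m ^ 2 + 6 * m - 15 < r * (m ^ 2 - (m - r) ^ 2 - (2 * m - 1)) := by
  have : m ≤ 14 := by omega
  have : r ≤ 14 := by omega
  have : 4 ≤ m := by omega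
  interval_cases m <;> interval_cases r <;> first | norm_num | omega

theorem cycle_total {G : SimpleGraph V} [Fintype V] (hG : IsCactus G)
    (h15 : G.edgeFinset.card < 15) {S : Finset (Sym2 V)} (hS : IsCyc G S) :
    (G.edgeFinset.card : ℤ) ^ 2 + 6 * G.edgeFinset.card - 15 ≤
      ∑ e ∈ S, ((G.edgeFinset.card : ℤ) ^ 2 - dsq G e - (2 * (G.edgeFinset.card : ℤ) - 1)) ∧
    (∑ e ∈ S, ((G.edgeFinset.card : ℤ) ^ 2 - dsq G e - (2 * (G.edgeFinset.card : ℤ) - 1)) =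
      (G.edgeFinset.card : ℤ) ^ 2 + 6 * G.edgeFinset.card - 15 →
      ∃ a b c, G.Adj a b ∧ G.Adj b c ∧ G.Adj c a ∧ S = {s(a, b), s(b, c), s(c, a)} ∧
        dsq G s(a, b) + dsq G s(b, c) + dsq G s(c, a) = 2 * ((G.edgeFinset.card : ℤ) - 3) ^ 2) := by
  rcases (cyc_card_ge hS).eq_or_lt with h3 | h4
  · obtain ⟨a, b, c, hab, hbc, hca, rfl⟩ := cyc_three hS h3.symm
    have n1 : s(a, b) ≠ s(b, c) := by
      simp [hab.ne, hca.ne.symm]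
    have n2 : s(a, b) ≠ s(c, a) := by
      simp [hca.ne.symm, hbc.ne]
    have n3 : s(b, c) ≠ s(c, a) := by
      simp [hbc.ne, hab.ne.symm]
    rw [Finset.sum_insert (by simp [n1, n2]), Finset.sum_insert (by simp [n3]),
        Finset.sum_singleton]
    have := (triangle_bound hG.1 hab hbc hca).1
    refine ⟨by linarith, fun he => ⟨a, b, c, hab, hbc, hca, rfl, by linarith⟩⟩
  · have hlt : (G.edgeFinset.card : ℤ) ^ 2 + 6 * G.edgeFinset.card - 15 <
      ∑ e ∈ S, ((G.edgeFinset.card : ℤ) ^ 2 - dsq G e - (2 * (G.edgeFinset.card : ℤ) - 1)) := by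
      calc _ < (S.card : ℤ) * ((G.edgeFinset.card : ℤ) ^ 2 -
            ((G.edgeFinset.card : ℤ) - S.card) ^ 2 - (2 * (G.edgeFinset.card : ℤ) - 1)) :=
            arith_strict _ _ (by exact_mod_cast h4)
              (by exact_mod_cast Finset.card_le_card (cyc_subset hS)) (by exact_mod_cast h15)
        _ = ∑ e ∈ S, ((G.edgeFinset.card : ℤ) ^ 2 -
            ((G.edgeFinset.card : ℤ) - S.card) ^ 2 - (2 * (G.edgeFinset.card : ℤ) - 1)) := by
            rw [Finset.sum_const, nsmul_eq_mul]
        _ ≤ _ := Finset.sum_le_sum fun e he => by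
            have := cycle_edge_bound hG hS he
            linarith
    exact ⟨hlt.le, fun he => absurd he hlt.ne'⟩

theorem main_bound {G : SimpleGraph V} [Fintype V] (hG : IsCactus G)
    (h15 : G.edgeFinset.card < 15) :
    (G.edgeFinset.card : ℤ) * (2 * G.edgeFinset.card - 1) + ((cycSets G).card : ℤ) *
      ((G.edgeFinset.card : ℤ) ^ 2 + 6 * G.edgeFinset.card - 15) ≤
      ∑ e ∈ G.edgeFinset, ((G.edgeFinset.card : ℤ) ^ 2 - dsq G e) ∧
    (∑ e ∈ G.edgeFinset, ((G.edgeFinset.card : ℤ) ^ 2 - dsq G e) =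
      (G.edgeFinset.card : ℤ) * (2 * G.edgeFinset.card - 1) + ((cycSets G).card : ℤ) *
      ((G.edgeFinset.card : ℤ) ^ 2 + 6 * G.edgeFinset.card - 15) →
      ∀ u v, G.Adj u v → ((∀ y, G.Adj u y → y = v) ∨ (∀ y, G.Adj v y → y = u)) ∨
        ∃ a b c, G.Adj a b ∧ G.Adj b c ∧ G.Adj c a ∧
          s(u, v) ∈ ({s(a, b), s(b, c), s(c, a)} : Finset (Sym2 V)) ∧
        dsq G s(a, b) + dsq G s(b, c) + dsq G s(c, a) =
          2 * ((G.edgeFinset.card : ℤ) - 3) ^ 2) := by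
  set M : ℤ := (G.edgeFinset.card : ℤ) with hM
  set g : Sym2 V → ℤ := fun e => M ^ 2 - dsq G e - (2 * M - 1) with hg
  set U : Finset (Sym2 V) := (cycSets G).biUnion id with hU
  have hUE : U ⊆ G.edgeFinset := by
    intro e he
    rw [hU, Finset.mem_biUnion] at he
    obtain ⟨S, hS, he⟩ := he
    exact cyc_subset (mem_cycSets.mp hS) he
  have h1 : ∑ e ∈ G.edgeFinset, (M ^ 2 - dsq G e) =
      M * (2 * M - 1) + (∑ e ∈ G.edgeFinset \ U, g e + ∑ S ∈ cycSets G, ∑ e ∈ S, g e) := by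
    have : ∑ S ∈ cycSets G, ∑ e ∈ S, g e = ∑ e ∈ U, g e := by
      rw [hU, Finset.sum_biUnion]
      · rfl
      · intro S hS T hT hne
        rw [Function.onFun, Finset.disjoint_left]
        intro e h1 h2
        exact hne (cyc_unique hG (mem_cycSets.mp hS) (mem_cycSets.mp hT) h1 h2)
    rw [this, Finset.sum_sdiff hUE]
    simp only [hg, Finset.sum_sub_distrib, Finset.sum_const, nsmul_eq_mul]
    rw [← hM]
    ring
  have hnn : ∀ e ∈ G.edgeFinset \ U, 0 ≤ g e := by
    intro e he
    have he' := (Finset.mem_sdiff.mp he).1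
    induction e using Sym2.ind with
    | _ u v =>
      have hadj : G.Adj u v := by simpa using he'
      have := (edge_bound hG.1 hadj).1
      simp only [hg]
      linarith
  have h2 : 0 ≤ ∑ e ∈ G.edgeFinset \ U, g e := Finset.sum_nonneg hnn
  have hcy : ∀ S ∈ cycSets G, M ^ 2 + 6 * M - 15 ≤ ∑ e ∈ S, g e := fun S hS =>
    (cycle_total hG h15 (mem_cycSets.mp hS)).1
  have h3 : ((cycSets G).card : ℤ) * (M ^ 2 + 6 * M - 15) ≤ ∑ S ∈ cycSets G, ∑ e ∈ S, g e := by
    rw [← nsmul_eq_mul, ← Finset.sum_const]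
    exact Finset.sum_le_sum hcy
  rw [h1]
  refine ⟨by linarith, fun he u v huv => ?_⟩
  have e1 : ∑ e ∈ G.edgeFinset \ U, g e = 0 := by linarith
  have e2 : ∑ S ∈ cycSets G, (M ^ 2 + 6 * M - 15) = ∑ S ∈ cycSets G, ∑ e ∈ S, g e := by
    rw [Finset.sum_const, nsmul_eq_mul]; linarith
  by_cases hm : s(u, v) ∈ U
  · right
    rw [hU, Finset.mem_biUnion] at hm
    obtain ⟨S, hS, hm⟩ := hm
    have := (Finset.sum_eq_sum_iff_of_le hcy).mp e2 S hS
    obtain ⟨a, b, c, hab, hbc, hca, rfl, hd⟩ :=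
      (cycle_total hG h15 (mem_cycSets.mp hS)).2 this.symm
    exact ⟨a, b, c, hab, hbc, hca, hm, hd⟩
  · left
    have := (Finset.sum_eq_zero_iff_of_nonneg hnn).mp e1 s(u, v)
      (Finset.mem_sdiff.mpr ⟨by simpa using huv, hm⟩)
    simp only [hg] at this
    exact (edge_bound hG.1 huv).2 (by linarith)

theorem exists_dom {G : SimpleGraph V} [Fintype V] (hc : G.Connected)
    (H : ∀ u v, G.Adj u v → ((∀ y, G.Adj u y → y = v) ∨ (∀ y, G.Adj v y → y = u)) ∨
        ∃ a b c, G.Adj a b ∧ G.Adj b c ∧ G.Adj c a ∧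
          s(u, v) ∈ ({s(a, b), s(b, c), s(c, a)} : Finset (Sym2 V)) ∧
        dsq G s(a, b) + dsq G s(b, c) + dsq G s(c, a) =
          2 * ((G.edgeFinset.card : ℤ) - 3) ^ 2) :
    ∃ h, ∀ y, y ≠ h → G.Adj h y := by
  obtain ⟨v0⟩ := hc.nonempty
  obtain ⟨h, -, hmax⟩ := Finset.exists_max_image Finset.univ (fun v => G.degree v) ⟨v0, by simp⟩
  refine ⟨h, ?_⟩
  have step : ∀ x y, G.Adj h x → G.Adj x y → y = h ∨ G.Adj h y := by
    intro x y hx hy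
    by_contra hcon
    push Not at hcon
    obtain ⟨hyh, hny⟩ := hcon
    have hle := hmax x (by simp)
    have tri : ∀ z, G.Adj h z → G.Adj x z → ((∀ w, G.Adj h w → w = x ∨ w = z) ∨
        (∀ w, G.Adj x w → w = h ∨ w = z)) → False := by
      intro z hz hxz hor
      have hyz : y ≠ z := by rintro rfl; exact hny hz
      rcases hor with h1 | h1
      · have c1 : G.degree h ≤ 2 := by
          rw [← card_neighborFinset_eq_degree]
          calc _ ≤ ({x, z} : Finset V).card := Finset.card_le_card (by
                intro w hw
                simpa using h1 w (by simpa using hw))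
            _ ≤ 2 := Finset.card_le_two
        have c2 : 3 ≤ G.degree x := by
          rw [← card_neighborFinset_eq_degree]
          have : ({h, z, y} : Finset V).card = 3 :=
            Finset.card_eq_three.mpr ⟨h, z, y, hz.ne, hyh.symm, hyz.symm, rfl⟩
          rw [← this]
          apply Finset.card_le_card
          intro w hw
          simp only [Finset.mem_insert, Finset.mem_singleton] at hw
          rcases hw with rfl | rfl | rfl
          · simpa using hx.symm
          · simpa using hxz
          · simpa using hy
        omega
      · rcases h1 y hy with h2 | h2
        · exact hyh h2
        · exact hyz h2
    rcases H h x hx with (h1 | h1) | ⟨a, b, c, hab, hbc, hca, hmem, hd⟩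
    · have c1 : G.degree h ≤ 1 := by
        rw [← card_neighborFinset_eq_degree]
        calc _ ≤ ({x} : Finset V).card := Finset.card_le_card (by
              intro w hw
              simpa using h1 w (by simpa using hw))
          _ ≤ 1 := by simp
      have c2 : 2 ≤ G.degree x := by
        rw [← card_neighborFinset_eq_degree, ← Finset.card_pair hyh]
        apply Finset.card_le_card
        intro w hw
        simp only [Finset.mem_insert, Finset.mem_singleton] at hw
        rcases hw with rfl | rfl
        · simpa using hy
        · simpa using hx.symm
      omega
    · exact hyh (h1 y hy)
    · have hT := (triangle_bound hc hab hbc hca).2 hd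
      simp only [Finset.mem_insert, Finset.mem_singleton, Sym2.eq_iff] at hmem
      rcases hmem with (⟨rfl, rfl⟩ | ⟨rfl, rfl⟩) | (⟨rfl, rfl⟩ | ⟨rfl, rfl⟩) |
        (⟨rfl, rfl⟩ | ⟨rfl, rfl⟩)
      · exact tri c hca.symm hbc (by grind)
      · exact tri c hbc hca.symm (by grind)
      · exact tri a hab.symm hca (by grind)
      · exact tri a hca hab.symm (by grind)
      · exact tri b hbc.symm hab (by grind)
      · exact tri b hab hbc.symm (by grind)
  have walk : ∀ {a b : V} (p : G.Walk a b), (a = h ∨ G.Adj h a) → (b = h ∨ G.Adj h b) := by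
    intro a b p
    induction p with
    | nil => exact id
    | cons hadj q ih =>
      rintro (rfl | h1)
      · exact ih (Or.inr hadj)
      · exact ih (step _ _ h1 hadj)
  intro y hy
  obtain ⟨p⟩ := hc.preconnected h y
  exact (walk p (Or.inl rfl)).resolve_left hy

theorem dom_match {G : SimpleGraph V} (hG : IsCactus G) {h : V} (hd : ∀ y, y ≠ h → G.Adj h y)
    {x y z : V} (hx : x ≠ h) (hy : y ≠ h) (hz : z ≠ h) (hxy : G.Adj x y) (hxz : G.Adj x z) :
    y = z := by
  have := cyc_unique hG (tri_isCyc (hd x hx) hxy (hd y hy).symm)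
    (tri_isCyc (hd x hx) hxz (hd z hz).symm) (e := s(h, x)) (by simp) (by simp)
  have h2 : s(x, y) ∈ ({s(h, x), s(x, z), s(z, h)} : Finset (Sym2 V)) := by
    rw [← this]; simp
  simp only [Finset.mem_insert, Finset.mem_singleton, Sym2.eq_iff] at h2
  have := hxy.ne; have := hxz.ne
  grind

theorem dom_edge {G : SimpleGraph V} [Fintype V] (hG : IsCactus G) {h : V}
    (hd : ∀ y, y ≠ h → G.Adj h y) {x : V} (hx : x ≠ h) :
    tr G x - tr G h = G.edgeFinset.card + 1 - 2 * G.degree x := by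
  have hc := hG.1
  have hadj := hd x hx
  have e1 : ∀ f ∈ G.edgeFinset, ((eDist G f x : ℤ) - eDist G f h) =
      1 - 2 * (if x ∈ f then 1 else 0) + (if f = s(h, x) then 1 else 0) := by
    intro f hf
    have l1 := eDist_adj_le hc hadj f
    have l2 := eDist_adj_le hc hadj.symm f
    by_cases h1 : x ∈ f <;> by_cases h2 : h ∈ f
    · have : f = s(h, x) := (Sym2.mem_and_mem_iff hx.symm).mp ⟨h2, h1⟩
      rw [eDist_eq_zero h1, eDist_eq_zero h2]
      simp [this]
    · have : f ≠ s(h, x) := by rintro rfl; simp at h2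
      have := eDist_pos hc h2
      rw [eDist_eq_zero h1] at l2 ⊢
      simp [*]
      omega
    · have : f ≠ s(h, x) := by rintro rfl; simp at h1
      have := eDist_pos hc h1
      rw [eDist_eq_zero h2] at l1 ⊢
      simp [*]
      omega
    · have hne : f ≠ s(h, x) := by rintro rfl; simp at h1
      induction f using Sym2.ind with
      | _ a b =>
        have hab : G.Adj a b := by simpa using hf
        simp only [Sym2.mem_iff, not_or] at h1 h2
        have da := dist_eq_one_iff_adj.mpr (hd a (Ne.symm h2.1)).symm
        have db := dist_eq_one_iff_adj.mpr (hd b (Ne.symm h2.2)).symm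
        have pa := hc.pos_dist_of_ne (Ne.symm h1.1)
        have pb := hc.pos_dist_of_ne (Ne.symm h1.2)
        have na : G.dist a x ≠ 1 := fun h' => h1.2 (dom_match hG hd (Ne.symm h2.1) hx
          (Ne.symm h2.2) (dist_eq_one_iff_adj.mp h') hab)
        have nb : G.dist b x ≠ 1 := fun h' => h1.1 (dom_match hG hd (Ne.symm h2.2) hx
          (Ne.symm h2.1) (dist_eq_one_iff_adj.mp h') hab.symm)
        rw [if_neg (by simp [h1]), if_neg hne]
        rw [eDist_mk] at l1 l2 ⊢
        rw [eDist_mk] at l1 l2 ⊢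
        omega
  have e2 : G.degree x = (G.edgeFinset.filter fun f => x ∈ f).card := by
    rw [← card_incidenceFinset_eq_degree, incidenceFinset_eq_filter]
  unfold tr
  rw [← Finset.sum_sub_distrib, Finset.sum_congr rfl e1, Finset.sum_add_distrib,
    Finset.sum_sub_distrib, ← Finset.mul_sum, e2, Finset.sum_ite_eq', if_pos (by simpa using hadj),
    Finset.card_filter, Finset.sum_const, nsmul_eq_mul]
  push_cast
  ring

theorem dom_degree {G : SimpleGraph V} [Fintype V] (hG : IsCactus G) {h : V}
    (hd : ∀ y, y ≠ h → G.Adj h y) {x : V} (hx : x ≠ h) :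
    G.degree x = 1 ∨ G.degree x = 2 := by
  have h1 : G.degree x = ((G.neighborFinset x).erase h).card + 1 := by
    rw [← card_neighborFinset_eq_degree, Finset.card_erase_add_one]
    simpa using (hd x hx).symm
  have h2 : ((G.neighborFinset x).erase h).card ≤ 1 := by
    rw [Finset.card_le_one]
    intro a ha b hb
    simp only [Finset.mem_erase, mem_neighborFinset] at ha hb
    exact dom_match hG hd hx ha.1 hb.1 ha.2 hb.2
  omega

theorem dom_hub_degree {G : SimpleGraph V} [Fintype V] {h : V}
    (hd : ∀ y, y ≠ h → G.Adj h y) : G.degree h + 1 = Fintype.card V := by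
  have : G.neighborFinset h = Finset.univ.erase h := by
    ext y
    simp only [mem_neighborFinset, Finset.mem_erase, Finset.mem_univ, and_true]
    exact ⟨fun h' => h'.ne', hd y⟩
  rw [← card_neighborFinset_eq_degree, this, Finset.card_erase_add_one (Finset.mem_univ _),
    Finset.card_univ]

theorem dom_degree_sum {G : SimpleGraph V} [Fintype V] {h : V}
    (hd : ∀ y, y ≠ h → G.Adj h y) {k : ℕ} (hk : G.edgeFinset.card + 1 = Fintype.card V + k) :
    ∑ x ∈ Finset.univ.erase h, ((G.degree x : ℤ) - 1) = 2 * k := by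
  have h1 := G.sum_degrees_eq_twice_card_edges
  rw [← Finset.add_sum_erase _ _ (Finset.mem_univ h)] at h1
  have h2 := dom_hub_degree hd
  have h3 : (Finset.univ.erase h).card + 1 = Fintype.card V := by
    rw [Finset.card_erase_add_one (Finset.mem_univ _), Finset.card_univ]
  rw [Finset.sum_sub_distrib, Finset.sum_const, nsmul_eq_mul, mul_one]
  rw [← Nat.cast_sum]
  omega

theorem dom_value {G : SimpleGraph V} [Fintype V] (hG : IsCactus G) {h : V}
    (hd : ∀ y, y ≠ h → G.Adj h y) {k : ℕ} (hk : G.edgeFinset.card + 1 = Fintype.card V + k) :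
    ∑ e ∈ G.edgeFinset, ((G.edgeFinset.card : ℤ) ^ 2 - dsq G e) ≤
      (G.edgeFinset.card : ℤ) * (2 * G.edgeFinset.card - 1) + (k : ℤ) *
      ((G.edgeFinset.card : ℤ) ^ 2 + 6 * G.edgeFinset.card - 15) := by
  set M : ℤ := (G.edgeFinset.card : ℤ) with hM
  have h1 : ∑ x ∈ Finset.univ.erase h, dsq G s(h, x) ≤ ∑ e ∈ G.edgeFinset, dsq G e := by
    rw [← Finset.sum_image (s := Finset.univ.erase h) (g := fun x => s(h, x)) (f := dsq G)]
    · apply Finset.sum_le_sum_of_subset_of_nonneg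
      · intro e he
        obtain ⟨x, hx, rfl⟩ := Finset.mem_image.mp he
        simpa using hd x (Finset.ne_of_mem_erase hx)
      · intro e _ _
        induction e using Sym2.ind with
        | _ a b => rw [dsq_mk]; positivity
    · intro a _ b _ hab
      exact Sym2.congr_right.mp hab
  have h2 : ∀ x ∈ Finset.univ.erase h, dsq G s(h, x) =
      (M - 1) ^ 2 - ((G.degree x : ℤ) - 1) * (4 * M - 8) := by
    intro x hx
    have hx' := Finset.ne_of_mem_erase hx
    have := dom_edge hG hd hx'
    have e : dsq G s(h, x) = (tr G x - tr G h) ^ 2 := by rw [dsq_mk]; ring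
    rw [e, this]
    rcases dom_degree hG hd hx' with h3 | h3 <;> rw [h3] <;> push_cast <;> ring
  have h3 : ((Finset.univ.erase h).card : ℤ) + k = M := by
    have : (Finset.univ.erase h).card + 1 = Fintype.card V := by
      rw [Finset.card_erase_add_one (Finset.mem_univ _), Finset.card_univ]
    omega
  rw [Finset.sum_congr rfl h2, Finset.sum_sub_distrib, ← Finset.sum_mul, dom_degree_sum hd hk,
    Finset.sum_const, nsmul_eq_mul] at h1
  have h4 : ((Finset.univ.erase h).card : ℤ) = M - k := by linarith
  rw [h4] at h1
  rw [Finset.sum_sub_distrib, Finset.sum_const, nsmul_eq_mul, ← hM]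
  nlinarith

theorem dom_of_iso {G : SimpleGraph V} {k p : ℕ}
    (φ : G ≃g bundleGraph k (fun _ => 3) p) : ∃ h, ∀ y, y ≠ h → G.Adj h y := by
  refine ⟨φ.symm (Sum.inl ()), fun y hy => ?_⟩
  rw [← φ.map_adj_iff, RelIso.apply_symm_apply]
  have hne : φ y ≠ Sum.inl () := by
    intro h
    apply hy
    rw [← h, RelIso.symm_apply_apply]
  generalize φ y = w at hne
  unfold bundleGraph
  rw [fromRel_adj]
  refine ⟨hne.symm, Or.inl ?_⟩
  rcases w with u | ⟨i, a⟩ | j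
  · exact absurd rfl hne
  · have := a.isLt
    simp only at this ⊢
    omega
  · trivial

theorem dom_iso {G : SimpleGraph V} [Fintype V] (hG : IsCactus G) {h : V}
    (hd : ∀ y, y ≠ h → G.Adj h y) {k : ℕ} (hk : G.edgeFinset.card + 1 = Fintype.card V + k) :
    Nonempty (G ≃g bundleGraph k (fun _ => 3) (Fintype.card V - 2 * k - 1)) := by
  set T : Finset (Sym2 V) := G.edgeFinset.filter fun f => h ∉ f with hT
  have hTc : T.card = k := by
    have h1 := Finset.card_filter_add_card_filter_not (s := G.edgeFinset) (fun f => h ∈ f)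
    have h2 : (G.edgeFinset.filter fun f => h ∈ f).card = G.degree h := by
      rw [← card_incidenceFinset_eq_degree, incidenceFinset_eq_filter]
    have h3 := dom_hub_degree hd
    have h4 : T.card = (G.edgeFinset.filter fun f => ¬ h ∈ f).card := by
      rw [hT]
    have h5 : (G.edgeFinset.filter fun f => h ∈ f).card + T.card = G.edgeFinset.card := by
      rw [h4]
      convert h1
    omega
  set L : Finset V := (Finset.univ.erase h).filter fun x => G.degree x = 1 with hL
  have hLc : L.card + 2 * k + 1 = Fintype.card V := by
    have h1 := dom_degree_sum hd hk
    have h2 : ∀ x ∈ Finset.univ.erase h, ((G.degree x : ℤ) - 1) =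
        1 - (if G.degree x = 1 then 1 else 0) := by
      intro x hx
      rcases dom_degree hG hd (Finset.ne_of_mem_erase hx) with h3 | h3 <;> rw [h3] <;> simp
    have h3 : (Finset.univ.erase h).card + 1 = Fintype.card V := by
      rw [Finset.card_erase_add_one (Finset.mem_univ _), Finset.card_univ]
    rw [Finset.sum_congr rfl h2, Finset.sum_sub_distrib, Finset.sum_const, nsmul_eq_mul] at h1
    have h4 : (L.card : ℤ) = ∑ x ∈ Finset.univ.erase h, (if G.degree x = 1 then 1 else 0) := by
      rw [hL, Finset.card_filter]; push_cast; rfl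
    rw [← h4] at h1
    omega
  have eT : Fin k ≃ T := (Fintype.equivFinOfCardEq (by simpa using hTc)).symm
  have eL : Fin (Fintype.card V - 2 * k - 1) ≃ L :=
    (Fintype.equivFinOfCardEq (by rw [Fintype.card_coe]; omega)).symm
  have hex : ∀ i : Fin k, ∃ ab : V × V, (eT i : Sym2 V) = s(ab.1, ab.2) := by
    intro i
    induction (eT i : Sym2 V) using Sym2.ind with
    | _ a b => exact ⟨(a, b), rfl⟩
  choose ab hab using hex
  have hTmem : ∀ i, (eT i : Sym2 V) ∈ G.edgeFinset ∧ h ∉ (eT i : Sym2 V) := fun i =>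
    Finset.mem_filter.mp (eT i).2
  have hAdj : ∀ i, G.Adj (ab i).1 (ab i).2 := by
    intro i
    have := (hTmem i).1
    rw [hab i] at this
    simpa using this
  have hAdj' : ∀ i, G.Adj (ab i).2 (ab i).1 := fun i => (hAdj i).symm
  let sel : (Σ _ : Fin k, Fin 2) → V := fun s => if s.2.val = 0 then (ab s.1).1 else (ab s.1).2
  have hsel : ∀ s, sel s ∈ (eT s.1 : Sym2 V) := by
    intro s
    rw [hab]
    simp only [sel]
    split_ifs <;> simp
  have hselne : ∀ s, sel s ≠ h := by
    intro s hs
    exact (hTmem s.1).2 (hs ▸ hsel s)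
  -- an edge of T is determined by any of its vertices
  have huniq : ∀ f ∈ T, ∀ f' ∈ T, ∀ x, x ∈ f → x ∈ f' → f = f' := by
    intro f hf f' hf' x hx hx'
    rw [hT, Finset.mem_filter] at hf hf'
    obtain ⟨y, rfl⟩ := Sym2.mem_iff_exists.mp hx
    obtain ⟨z, rfl⟩ := Sym2.mem_iff_exists.mp hx'
    have h1 : G.Adj x y := by simpa using hf.1
    have h2 : G.Adj x z := by simpa using hf'.1
    have n1 := hf.2
    have n2 := hf'.2
    simp only [Sym2.mem_iff, not_or] at n1 n2
    rw [dom_match hG hd (Ne.symm n1.1) (Ne.symm n1.2) (Ne.symm n2.2) h1 h2]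
  have hidx : ∀ s t : (Σ _ : Fin k, Fin 2), ∀ f ∈ T, sel s ∈ f → sel t ∈ f → s.1 = t.1 := by
    intro s t f hf h1 h2
    apply eT.injective
    apply Subtype.ext
    rw [huniq _ (eT s.1).2 f hf _ (hsel s) h1, huniq _ (eT t.1).2 f hf _ (hsel t) h2]
  have hleaf : ∀ x ∈ L, x ≠ h ∧ ∀ y, G.Adj x y → y = h := by
    intro x hx
    rw [hL, Finset.mem_filter] at hx
    have hxh := Finset.ne_of_mem_erase hx.1
    refine ⟨hxh, fun y hy => ?_⟩
    have h1 := hx.2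
    rw [← card_neighborFinset_eq_degree] at h1
    exact Finset.card_le_one.mp h1.le y (by simpa using hy) h (by simpa using (hd x hxh).symm)
  have hselL : ∀ s, sel s ∉ L := by
    intro s hs
    have h1 := (hleaf _ hs).2
    by_cases h0 : s.2.val = 0
    · have : sel s = (ab s.1).1 := if_pos h0
      rw [this] at h1
      have h2 := h1 _ (hAdj s.1)
      exact (hTmem s.1).2 (by rw [hab, ← h2]; simp)
    · have : sel s = (ab s.1).2 := if_neg h0
      rw [this] at h1
      have h2 := h1 _ (hAdj' s.1)
      exact (hTmem s.1).2 (by rw [hab, ← h2]; simp)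
  have hselinj : ∀ s t, sel s = sel t → s = t := by
    intro s t hst
    have hi : s.1 = t.1 := hidx s t _ (eT s.1).2 (hsel s) (hst ▸ hsel s)
    obtain ⟨i, c⟩ := s
    obtain ⟨j, d⟩ := t
    simp only at hi
    subst hi
    have hne := (hAdj i).ne
    have : c = d := by
      simp only [sel] at hst
      have := c.isLt
      have := d.isLt
      apply Fin.ext
      split_ifs at hst
      · omega
      · exact absurd hst hne
      · exact absurd hst.symm hne
      · omega
    rw [this]
  have hseladj : ∀ s t, G.Adj (sel s) (sel t) ↔ s.1 = t.1 ∧ s.2 ≠ t.2 := by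
    intro s t
    constructor
    · intro hadj
      have hf : s(sel s, sel t) ∈ T := by
        rw [hT, Finset.mem_filter]
        refine ⟨by simpa using hadj, ?_⟩
        simp [(hselne s).symm, (hselne t).symm]
      have hi := hidx s t _ hf (by simp) (by simp)
      refine ⟨hi, fun h2 => hadj.ne ?_⟩
      have : s = t := Sigma.ext hi (heq_of_eq h2)
      rw [this]
    · rintro ⟨h1, h2⟩
      obtain ⟨i, c⟩ := s
      obtain ⟨j, d⟩ := t
      simp only at h1 h2
      subst h1
      have := c.isLt
      have := d.isLt
      have h3 : c.val ≠ d.val := fun h' => h2 (Fin.ext h')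
      simp only [sel]
      split_ifs
      · omega
      · exact hAdj i
      · exact hAdj' i
      · omega
  let φ : Unit ⊕ ((Σ _ : Fin k, Fin (3 - 1)) ⊕ Fin (Fintype.card V - 2 * k - 1)) → V :=
    Sum.elim (fun _ => h) (Sum.elim sel (fun j => (eL j : V)))
  have hφinj : Function.Injective φ := by
    rintro (u | s | j) (u' | t | j') hst
    · rfl
    · exact absurd hst.symm (hselne t)
    · exact absurd hst.symm (hleaf _ (eL j').2).1
    · exact absurd hst (hselne s)
    · rw [hselinj s t hst]
    · exact absurd (by rw [show sel s = (eL j' : V) from hst]; exact (eL j').2) (hselL s)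
    · exact absurd hst (hleaf _ (eL j).2).1
    · exact absurd (by rw [show sel t = (eL j : V) from hst.symm]; exact (eL j).2) (hselL t)
    · have : j = j' := eL.injective (Subtype.ext hst)
      rw [this]
  have hφbij : Function.Bijective φ := by
    rw [Fintype.bijective_iff_injective_and_card]
    refine ⟨hφinj, ?_⟩
    simp
    omega
  have hφadj : ∀ x y, G.Adj (φ x) (φ y) ↔
      (bundleGraph k (fun _ => 3) (Fintype.card V - 2 * k - 1)).Adj x y := by
    intro x y
    unfold bundleGraph
    rw [fromRel_adj]
    rcases x with u | s | j <;> rcases y with u' | t | j'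
    · simp [φ]
    · have h1 : G.Adj h (sel t) := hd _ (hselne t)
      have h2 : t.2.val < 2 := t.2.isLt
      simp only [φ, Sum.elim_inl, Sum.elim_inr, h1, true_iff]
      refine ⟨by simp, Or.inl ?_⟩
      show t.2.val = 0 ∨ t.2.val = 1
      omega
    · have h1 : G.Adj h (eL j' : V) := hd _ (hleaf _ (eL j').2).1
      simp [φ, h1]
    · have h1 : G.Adj (sel s) h := (hd _ (hselne s)).symm
      have h2 : s.2.val < 2 := s.2.isLt
      simp only [φ, Sum.elim_inl, Sum.elim_inr, h1, true_iff]
      refine ⟨by simp, Or.inr ?_⟩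
      show s.2.val = 0 ∨ s.2.val = 1
      omega
    · simp only [φ, Sum.elim_inr, Sum.elim_inl, hseladj]
      obtain ⟨i, c⟩ := s
      obtain ⟨j, d⟩ := t
      have hc1 : c.val < 2 := c.isLt
      have hd1 : d.val < 2 := d.isLt
      simp only
      constructor
      · rintro ⟨rfl, h2⟩
        have h3 : c.val ≠ d.val := fun h' => h2 (Fin.ext h')
        refine ⟨?_, ?_⟩
        · intro h'
          simp only [Sum.inr.injEq, Sum.inl.injEq, Sigma.mk.injEq, heq_eq_eq, true_and] at h'
          exact h2 h'
        · have : c.val + 1 = d.val ∨ d.val + 1 = c.val := by omega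
          rcases this with h' | h'
          · exact Or.inl ⟨rfl, h'⟩
          · exact Or.inr ⟨rfl, h'⟩
      · rintro ⟨-, ⟨rfl, h2⟩ | ⟨rfl, h2⟩⟩
        · exact ⟨rfl, fun h' => by rw [h'] at h2; omega⟩
        · exact ⟨rfl, fun h' => by rw [h'] at h2; omega⟩
    · have h1 : ¬ G.Adj (sel s) (eL j' : V) := fun h' =>
        hselne s ((hleaf _ (eL j').2).2 _ h'.symm)
      simp [φ, h1]
    · have h1 : G.Adj (eL j : V) h := (hd _ (hleaf _ (eL j).2).1).symm
      simp [φ, h1]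
    · have h1 : ¬ G.Adj (eL j : V) (sel t) := fun h' =>
        hselne t ((hleaf _ (eL j).2).2 _ h')
      simp [φ, h1]
    · have h1 : ¬ G.Adj (eL j : V) (eL j' : V) := fun h' =>
        (hleaf _ (eL j').2).1 ((hleaf _ (eL j).2).2 _ h')
      simp [φ, h1]
  exact ⟨(RelIso.symm ⟨Equiv.ofBijective φ hφbij, by intro x y; exact hφadj x y⟩)⟩

end CactusAux

/-- for a cactus with `k` cycles and `m < 15` edges,
`Sz*ₑ(G) ≥ (2m² − m + k((m−9)² − 36))/4 + k(6m − 15)`, with equality iff `G ≅ C₀(n,k)`,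
the bundle of `k` triangles with `n − 2k − 1` pendant edges at the common vertex. -/
theorem stmt15 {V : Type*} [Fintype V] (G : SimpleGraph V) (hG : IsCactus G)
    (n k m : ℕ) (hn : Fintype.card V = n) (hm : G.edgeFinset.card = m)
    (hkm : m = n - 1 + k) (h15 : m < 15) :
    (2 * (m : ℚ) ^ 2 - m + k * (((m : ℚ) - 9) ^ 2 - 36)) / 4 + k * (6 * (m : ℚ) - 15) ≤
      szRevE G ∧
    (szRevE G = (2 * (m : ℚ) ^ 2 - m + k * (((m : ℚ) - 9) ^ 2 - 36)) / 4 +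
        k * (6 * (m : ℚ) - 15) ↔
      Nonempty (G ≃g bundleGraph k (fun _ => 3) (n - 2 * k - 1))) := by
  subst hn hm
  have hc := hG.1
  have hpos : 0 < Fintype.card V := by
    obtain ⟨v⟩ := hc.nonempty
    exact Fintype.card_pos_iff.mpr ⟨v⟩
  have hcyc := CactusAux.card_cycSets _ G hG rfl
  have hk : (CactusAux.cycSets G).card = k := by omega
  have hk' : G.edgeFinset.card + 1 = Fintype.card V + k := by omega
  have hmain := CactusAux.main_bound hG h15
  rw [hk] at hmain
  have hsz := CactusAux.sz_eq hc
  set X : ℤ := ∑ e ∈ G.edgeFinset, ((G.edgeFinset.card : ℤ) ^ 2 - CactusAux.dsq G e) with hX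
  have hval : ((((G.edgeFinset.card : ℤ) * (2 * G.edgeFinset.card - 1) + (k : ℤ) *
      ((G.edgeFinset.card : ℤ) ^ 2 + 6 * G.edgeFinset.card - 15) : ℤ)) : ℚ) =
      4 * ((2 * (G.edgeFinset.card : ℚ) ^ 2 - G.edgeFinset.card +
        k * (((G.edgeFinset.card : ℚ) - 9) ^ 2 - 36)) / 4 +
        k * (6 * (G.edgeFinset.card : ℚ) - 15)) := by
    push_cast
    ring
  have hle : ((((G.edgeFinset.card : ℤ) * (2 * G.edgeFinset.card - 1) + (k : ℤ) *
      ((G.edgeFinset.card : ℤ) ^ 2 + 6 * G.edgeFinset.card - 15) : ℤ)) : ℚ) ≤ (X : ℚ) := by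
    exact_mod_cast hmain.1
  refine ⟨by linarith, fun he => ?_, ?_⟩
  · have hXe : (X : ℚ) = ((((G.edgeFinset.card : ℤ) * (2 * G.edgeFinset.card - 1) + (k : ℤ) *
      ((G.edgeFinset.card : ℤ) ^ 2 + 6 * G.edgeFinset.card - 15) : ℤ)) : ℚ) := by
      rw [hval, ← he, hsz]
    obtain ⟨h, hd⟩ := CactusAux.exists_dom hc (hmain.2 (by exact_mod_cast hXe))
    exact CactusAux.dom_iso hG hd hk'
  · rintro ⟨φ⟩
    obtain ⟨h, hd⟩ := CactusAux.dom_of_iso φ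
    have hub := CactusAux.dom_value hG hd hk'
    have hub' : (X : ℚ) ≤ ((((G.edgeFinset.card : ℤ) * (2 * G.edgeFinset.card - 1) + (k : ℤ) *
      ((G.edgeFinset.card : ℤ) ^ 2 + 6 * G.edgeFinset.card - 15) : ℤ)) : ℚ) := by
      exact_mod_cast hub
    linarith
end
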